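/- Let P = A ∪ B be an ℓ-divided set with no ℓ-divided 5-hole in P, with A not in convex position, |A| ≥ 5 and |B| ≥ 6, with ℓ vertical, A to the left of ℓ, and all points of P having distinct x-coordinates. For 1 ≤ i ≤ j ≤ t, let W_i, …, W_j be consecutive a*-wedges with w_k ≤ 2 for every k with i ≤ k ≤ j. Then the sum w_i + w_{i+1} + … + w_j is at most j − i + 2. -/

import Mathlib

noncomputable section

/-- Points of the plane. -/
abbrev Pt : Type := ℝ × ℝ

/-- The cross product (signed area) of two planar vectors. -/
def cross2 (u v : Pt) : ℝ := u.1 * v.2 - u.2 * v.1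

/-- The dot product of two planar vectors. -/
def dotp (v p : Pt) : ℝ := v.1 * p.1 + v.2 * p.2

/-- A set of points in the plane is in general position if no three of its points
are collinear. -/
def GenPos (P : Set Pt) : Prop :=
  ∀ p ∈ P, ∀ q ∈ P, ∀ r ∈ P, p ≠ q → p ≠ r → q ≠ r →
    ¬ Collinear ℝ ({p, q, r} : Set Pt)

/-- A set of points is in convex position if no point of the set lies in the convex
hull of the other points. -/
def ConvexPos (S : Set Pt) : Prop :=
  ∀ p ∈ S, p ∉ convexHull ℝ (S \ {p})

/-- `H` is a `k`-hole in `P`: a subset of `P` of size `k` in convex position whose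
convex hull contains no point of `P \ H`. -/
def IsKHole (k : ℕ) (P H : Finset Pt) : Prop :=
  H ⊆ P ∧ H.card = k ∧ ConvexPos (↑H : Set Pt) ∧
    ∀ p ∈ P, p ∉ H → p ∉ convexHull ℝ (↑H : Set Pt)

/-- The number of `k`-holes in `P`. -/
def numKHoles (k : ℕ) (P : Finset Pt) : ℕ :=
  Set.ncard {H : Finset Pt | IsKHole k P H}

/-- For an `ℓ`-divided set `P = A ∪ B`, an `ℓ`-divided 5-hole is a 5-hole in `A ∪ B`
containing points of both `A` and `B`. -/
def DividedFiveHole (A B H : Finset Pt) : Prop :=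
  IsKHole 5 (A ∪ B) H ∧ (↑H ∩ ↑A : Set Pt).Nonempty ∧ (↑H ∩ ↑B : Set Pt).Nonempty

/-- `x` is an extremal point of `P`: it lies on the boundary of the convex hull of `P`. -/
def OnHullBoundary (P : Finset Pt) (x : Pt) : Prop :=
  x ∈ frontier (convexHull ℝ (↑P : Set Pt))

/-- An `ℓ`-divided set `C = A ∪ B` is `ℓ`-critical if neither part is in convex position
and, for every extremal point `x` of `C`, one of the sets `(C \ {x}) ∩ A` and
`(C \ {x}) ∩ B` is in convex position. -/
def LCritical (A B : Finset Pt) : Prop :=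
  ¬ ConvexPos (↑A : Set Pt) ∧ ¬ ConvexPos (↑B : Set Pt) ∧
    ∀ x ∈ A ∪ B, OnHullBoundary (A ∪ B) x →
      (ConvexPos (↑(A.erase x) : Set Pt) ∨ ConvexPos (↑(B.erase x) : Set Pt))

/-- The closed wedge with apex `a` swept clockwise from the ray `a→p` to the ray `a→q`.
If the clockwise angle from `a→p` to `a→q` is at most `π` the wedge is convex, otherwise
it is the corresponding reflex region. -/
def Wedge (a p q : Pt) : Set Pt :=
  if cross2 (p - a) (q - a) ≤ 0 then
    {x | cross2 (p - a) (x - a) ≤ 0 ∧ 0 ≤ cross2 (q - a) (x - a)}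
  else
    {x | cross2 (p - a) (x - a) ≤ 0 ∨ 0 ≤ cross2 (q - a) (x - a)}

/-- `W` is an `a`-wedge of `A`: one of the closed regions into which the rays from `a`
through the other points of `A` partition the plane, i.e. a wedge spanned by two
points of `A \ {a}` that are angularly consecutive around `a` (no other point of `A`
lies in the wedge). -/
def IsAWedge (A : Finset Pt) (a : Pt) (W : Set Pt) : Prop :=
  ∃ p ∈ A.erase a, ∃ q ∈ A.erase a, p ≠ q ∧ W = Wedge a p q ∧
    (↑A : Set Pt) ∩ Wedge a p q ⊆ {a, p, q}

/-- The combinatorial data of the `a*`-wedges of an `ℓ`-divided set `P = A ∪ B`, where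
`ℓ` is the vertical line `x = x0` and `A` lies to its left: `aStar` is the rightmost
interior point `a*` of `A`; `lbl` is the clockwise cyclic labeling `a_0, a_1, …` of
`A \ {a*}` (period `|A| - 1`), so that the `k`-th wedge `W_k` is swept clockwise from
the ray through `lbl (k-1)` to the ray through `lbl k` and contains no other point
of `A`; the wedges `W_1, …, W_t` are exactly those meeting `ℓ`, in top-to-bottom
order along `ℓ`. -/
structure StarSetup (x0 : ℝ) (A : Finset Pt) where
  aStar : Pt
  lbl : ℕ → Pt
  t : ℕ
  aStar_mem : aStar ∈ A
  aStar_interior : aStar ∈ interior (convexHull ℝ (↑A : Set Pt))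
  aStar_rightmost : ∀ p ∈ A, p ∈ interior (convexHull ℝ (↑A : Set Pt)) → p.1 ≤ aStar.1
  lbl_mem : ∀ k, lbl k ∈ A.erase aStar
  lbl_periodic : ∀ k, lbl (k + (A.card - 1)) = lbl k
  lbl_bij : ∀ p ∈ A.erase aStar, ∃! k, k ∈ Finset.Icc 1 (A.card - 1) ∧ lbl k = p
  consec : ∀ k ∈ Finset.Icc 1 (A.card - 1),
    (↑A : Set Pt) ∩ Wedge aStar (lbl (k - 1)) (lbl k) ⊆ {aStar, lbl (k - 1), lbl k}
  t_pos : 1 ≤ t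
  t_le : t ≤ A.card - 1
  inter_iff : ∀ k ∈ Finset.Icc 1 (A.card - 1),
    ((Wedge aStar (lbl (k - 1)) (lbl k)) ∩ {p : Pt | p.1 = x0}).Nonempty ↔ k ≤ t
  ordered : ∀ k ∈ Finset.Icc 1 t, ∀ k' ∈ Finset.Icc 1 t, k < k' →
    ∀ p ∈ (Wedge aStar (lbl (k - 1)) (lbl k)) ∩ {q : Pt | q.1 = x0},
    ∀ p' ∈ (Wedge aStar (lbl (k' - 1)) (lbl k')) ∩ {q : Pt | q.1 = x0},
      p'.2 ≤ p.2

/-- The `k`-th `a*`-wedge `W_k`. -/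
def StarSetup.W {x0 : ℝ} {A : Finset Pt} (S : StarSetup x0 A) (k : ℕ) : Set Pt :=
  Wedge S.aStar (S.lbl (k - 1)) (S.lbl k)

/-- `w_k`, the number of points of `B` in the `k`-th `a*`-wedge. -/
def StarSetup.w {x0 : ℝ} {A : Finset Pt} (S : StarSetup x0 A) (B : Finset Pt) (k : ℕ) : ℕ :=
  Set.ncard ((↑B : Set Pt) ∩ S.W k)


/-- Signed orientation; `s = 1` is the usual one and `s = -1` the mirrored one. -/
def o (s : ℝ) (p q r : Pt) : ℝ :=
  s * ((q.1 - p.1) * (r.2 - p.2) - (q.2 - p.2) * (r.1 - p.1))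

theorem oc {s : ℝ} {p q r : Pt} (h : 0 < o s p q r) : 0 < o s q r p := by
  simp only [o] at *; linarith

theorem oc' {s : ℝ} {p q r : Pt} (h : 0 < o s p q r) : 0 < o s r p q := by
  simp only [o] at *; linarith

theorem oneg {s : ℝ} {p q r : Pt} (h : 0 < o s p r q) : ¬ 0 < o s p q r := by
  simp only [o] at *; linarith

theorem A4 {s : ℝ} {p q r t : Pt} (h0 : 0 < o s t q r) (h1 : 0 < o s p t r)
    (h2 : 0 < o s p q t) : 0 < o s p q r := by
  simp only [o] at *; linarith

theorem N0a {s : ℝ} {t u p q r : Pt} (h0 : 0 < o s t u q) (h1 : 0 < o s t u r) (h2 : 0 < o s t p q) (h3 : 0 < o s t q r) (h4 : 0 < o s t r p) :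
    0 < o s t p u := by
  by_contra hc
  have e := not_lt.1 hc
  have z := mul_nonneg (le_of_lt h3) (sub_nonneg.2 e)
  have z1 := mul_pos h0 h4
  have z2 := mul_pos h1 h2
  simp only [o] at z z1 z2
  linarith

theorem N0b {s : ℝ} {t u p q r : Pt} (h0 : 0 < o s t u p) (h1 : 0 < o s t u q) (h2 : 0 < o s t u r) (h3 : 0 < o s t p q) (h4 : 0 < o s t q r) :
    0 < o s t p r := by
  by_contra hc
  have e := not_lt.1 hc
  have z := mul_nonneg (le_of_lt h1) (sub_nonneg.2 e)
  have z1 := mul_pos h0 h4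
  have z2 := mul_pos h2 h3
  simp only [o] at z z1 z2
  linarith

theorem S0a {s : ℝ} {t p q r : Pt} (h0 : q.1 < t.1) (h1 : r.1 < t.1) (h2 : 0 < o s t p q) (h3 : 0 < o s t q r) (h4 : 0 < o s t r p) :
    t.1 < p.1 := by
  by_contra hc
  have e := not_lt.1 hc
  have z := mul_nonneg (le_of_lt h3) (sub_nonneg.2 e)
  have z1 := mul_pos (sub_pos.2 h0) h4
  have z2 := mul_pos (sub_pos.2 h1) h2
  simp only [o] at z z1 z2
  linarith

theorem S0b {s : ℝ} {t p q r : Pt} (h0 : p.1 < t.1) (h1 : q.1 < t.1) (h2 : r.1 < t.1) (h3 : 0 < o s t p q) (h4 : 0 < o s t q r) :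
    0 < o s t p r := by
  by_contra hc
  have e := not_lt.1 hc
  have z := mul_nonneg (le_of_lt (sub_pos.2 h1)) (sub_nonneg.2 e)
  have z1 := mul_pos (sub_pos.2 h0) h4
  have z2 := mul_pos (sub_pos.2 h2) h3
  simp only [o] at z z1 z2
  linarith

theorem P00 {s : ℝ} {t u q r : Pt} (h0 : 0 < o s t u q) (h1 : 0 < o s t u r) (h2 : q.1 < t.1) (h3 : 0 < o s t q r) (h4 : t.1 < r.1) :
    u.1 < t.1 := by
  by_contra hc
  have e := not_lt.1 hc
  have z := mul_nonneg (le_of_lt h3) (sub_nonneg.2 e)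
  have z1 := mul_pos h0 (sub_pos.2 h4)
  have z2 := mul_pos h1 (sub_pos.2 h2)
  simp only [o] at z z1 z2
  linarith

theorem P01 {s : ℝ} {t u q r : Pt} (h0 : t.1 < u.1) (h1 : 0 < o s t u r) (h2 : q.1 < t.1) (h3 : 0 < o s t q r) (h4 : t.1 < r.1) :
    0 < o s t q u := by
  by_contra hc
  have e := not_lt.1 hc
  have z := mul_nonneg (le_of_lt (sub_pos.2 h4)) (sub_nonneg.2 e)
  have z1 := mul_pos (sub_pos.2 h0) h3
  have z2 := mul_pos h1 (sub_pos.2 h2)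
  simp only [o] at z z1 z2
  linarith

theorem P02 {s : ℝ} {t u q r : Pt} (h0 : t.1 < u.1) (h1 : 0 < o s t u q) (h2 : q.1 < t.1) (h3 : 0 < o s t q r) (h4 : t.1 < r.1) :
    0 < o s t r u := by
  by_contra hc
  have e := not_lt.1 hc
  have z := mul_nonneg (le_of_lt (sub_pos.2 h2)) (sub_nonneg.2 e)
  have z1 := mul_pos (sub_pos.2 h0) h3
  have z2 := mul_pos h1 (sub_pos.2 h4)
  simp only [o] at z z1 z2
  linarith

theorem P03 {s : ℝ} {t u q r : Pt} (h0 : t.1 < u.1) (h1 : 0 < o s t u q) (h2 : 0 < o s t u r) (h3 : 0 < o s t q r) (h4 : t.1 < r.1) :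
    t.1 < q.1 := by
  by_contra hc
  have e := not_lt.1 hc
  have z := mul_nonneg (le_of_lt h2) (sub_nonneg.2 e)
  have z1 := mul_pos (sub_pos.2 h0) h3
  have z2 := mul_pos h1 (sub_pos.2 h4)
  simp only [o] at z z1 z2
  linarith

theorem P04 {s : ℝ} {t u q r : Pt} (h0 : t.1 < u.1) (h1 : 0 < o s t u q) (h2 : 0 < o s t u r) (h3 : q.1 < t.1) (h4 : t.1 < r.1) :
    0 < o s t r q := by
  by_contra hc
  have e := not_lt.1 hc
  have z := mul_nonneg (le_of_lt (sub_pos.2 h0)) (sub_nonneg.2 e)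
  have z1 := mul_pos h1 (sub_pos.2 h4)
  have z2 := mul_pos h2 (sub_pos.2 h3)
  simp only [o] at z z1 z2
  linarith

theorem P05 {s : ℝ} {t u q r : Pt} (h0 : t.1 < u.1) (h1 : 0 < o s t u q) (h2 : 0 < o s t u r) (h3 : q.1 < t.1) (h4 : 0 < o s t q r) :
    r.1 < t.1 := by
  by_contra hc
  have e := not_lt.1 hc
  have z := mul_nonneg (le_of_lt h1) (sub_nonneg.2 e)
  have z1 := mul_pos (sub_pos.2 h0) h4
  have z2 := mul_pos h2 (sub_pos.2 h3)
  simp only [o] at z z1 z2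
  linarith

theorem N1a {s : ℝ} {t u p q r : Pt} (h0 : 0 < o s t q u) (h1 : 0 < o s t r u) (h2 : 0 < o s t p q) (h3 : 0 < o s t q r) (h4 : 0 < o s t r p) :
    0 < o s t u p := by
  by_contra hc
  have e := not_lt.1 hc
  have z := mul_nonneg (le_of_lt h3) (sub_nonneg.2 e)
  have z1 := mul_pos h0 h4
  have z2 := mul_pos h1 h2
  simp only [o] at z z1 z2
  linarith

theorem N1b {s : ℝ} {t u p q r : Pt} (h0 : 0 < o s t p u) (h1 : 0 < o s t q u) (h2 : 0 < o s t r u) (h3 : 0 < o s t p q) (h4 : 0 < o s t q r) :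
    0 < o s t p r := by
  by_contra hc
  have e := not_lt.1 hc
  have z := mul_nonneg (le_of_lt h1) (sub_nonneg.2 e)
  have z1 := mul_pos h0 h4
  have z2 := mul_pos h2 h3
  simp only [o] at z z1 z2
  linarith

theorem S1a {s : ℝ} {t p q r : Pt} (h0 : t.1 < q.1) (h1 : t.1 < r.1) (h2 : 0 < o s t p q) (h3 : 0 < o s t q r) (h4 : 0 < o s t r p) :
    p.1 < t.1 := by
  by_contra hc
  have e := not_lt.1 hc
  have z := mul_nonneg (le_of_lt h3) (sub_nonneg.2 e)
  have z1 := mul_pos (sub_pos.2 h0) h4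
  have z2 := mul_pos (sub_pos.2 h1) h2
  simp only [o] at z z1 z2
  linarith

theorem S1b {s : ℝ} {t p q r : Pt} (h0 : t.1 < p.1) (h1 : t.1 < q.1) (h2 : t.1 < r.1) (h3 : 0 < o s t p q) (h4 : 0 < o s t q r) :
    0 < o s t p r := by
  by_contra hc
  have e := not_lt.1 hc
  have z := mul_nonneg (le_of_lt (sub_pos.2 h1)) (sub_nonneg.2 e)
  have z1 := mul_pos (sub_pos.2 h0) h4
  have z2 := mul_pos (sub_pos.2 h2) h3
  simp only [o] at z z1 z2
  linarith

theorem P10 {s : ℝ} {t u q r : Pt} (h0 : 0 < o s t q u) (h1 : 0 < o s t r u) (h2 : q.1 < t.1) (h3 : 0 < o s t q r) (h4 : t.1 < r.1) :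
    t.1 < u.1 := by
  by_contra hc
  have e := not_lt.1 hc
  have z := mul_nonneg (le_of_lt h3) (sub_nonneg.2 e)
  have z1 := mul_pos h0 (sub_pos.2 h4)
  have z2 := mul_pos h1 (sub_pos.2 h2)
  simp only [o] at z z1 z2
  linarith

theorem P11 {s : ℝ} {t u q r : Pt} (h0 : u.1 < t.1) (h1 : 0 < o s t r u) (h2 : q.1 < t.1) (h3 : 0 < o s t q r) (h4 : t.1 < r.1) :
    0 < o s t u q := by
  by_contra hc
  have e := not_lt.1 hc
  have z := mul_nonneg (le_of_lt (sub_pos.2 h4)) (sub_nonneg.2 e)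
  have z1 := mul_pos (sub_pos.2 h0) h3
  have z2 := mul_pos h1 (sub_pos.2 h2)
  simp only [o] at z z1 z2
  linarith

theorem P12 {s : ℝ} {t u q r : Pt} (h0 : u.1 < t.1) (h1 : 0 < o s t q u) (h2 : q.1 < t.1) (h3 : 0 < o s t q r) (h4 : t.1 < r.1) :
    0 < o s t u r := by
  by_contra hc
  have e := not_lt.1 hc
  have z := mul_nonneg (le_of_lt (sub_pos.2 h2)) (sub_nonneg.2 e)
  have z1 := mul_pos (sub_pos.2 h0) h3
  have z2 := mul_pos h1 (sub_pos.2 h4)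
  simp only [o] at z z1 z2
  linarith

theorem P13 {s : ℝ} {t u q r : Pt} (h0 : u.1 < t.1) (h1 : 0 < o s t q u) (h2 : 0 < o s t r u) (h3 : 0 < o s t q r) (h4 : t.1 < r.1) :
    t.1 < q.1 := by
  by_contra hc
  have e := not_lt.1 hc
  have z := mul_nonneg (le_of_lt h2) (sub_nonneg.2 e)
  have z1 := mul_pos (sub_pos.2 h0) h3
  have z2 := mul_pos h1 (sub_pos.2 h4)
  simp only [o] at z z1 z2
  linarith

theorem P14 {s : ℝ} {t u q r : Pt} (h0 : u.1 < t.1) (h1 : 0 < o s t q u) (h2 : 0 < o s t r u) (h3 : q.1 < t.1) (h4 : t.1 < r.1) :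
    0 < o s t r q := by
  by_contra hc
  have e := not_lt.1 hc
  have z := mul_nonneg (le_of_lt (sub_pos.2 h0)) (sub_nonneg.2 e)
  have z1 := mul_pos h1 (sub_pos.2 h4)
  have z2 := mul_pos h2 (sub_pos.2 h3)
  simp only [o] at z z1 z2
  linarith

theorem P15 {s : ℝ} {t u q r : Pt} (h0 : u.1 < t.1) (h1 : 0 < o s t q u) (h2 : 0 < o s t r u) (h3 : q.1 < t.1) (h4 : 0 < o s t q r) :
    r.1 < t.1 := by
  by_contra hc
  have e := not_lt.1 hc
  have z := mul_nonneg (le_of_lt h1) (sub_nonneg.2 e)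
  have z1 := mul_pos (sub_pos.2 h0) h4
  have z2 := mul_pos h2 (sub_pos.2 h3)
  simp only [o] at z z1 z2
  linarith

attribute [irreducible] o

section Part1

theorem pent_rest {s : ℝ} (v1 v2 v3 v4 d : Pt)
    (h1 : 0 < o s v1 v2 v3) (h2 : 0 < o s v2 v3 v4) (h3 : 0 < o s v3 v4 v1)
    (h4 : 0 < o s v4 v1 v2) (h5 : 0 < o s v3 v4 d) (h6 : 0 < o s v4 d v1) (h7 : 0 < o s d v1 v2) :
    0 < o s v1 v3 d ∧ 0 < o s v2 v4 d ∧ 0 < o s v2 v3 d := by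
  refine ⟨?_, ?_, ?_⟩
  · have k1 : 0 < o s v1 v3 d := N0b h1 (oc h4) (oc h7) (oc' h3) (oc' h6)
    exact k1
  · have k2 : 0 < o s v4 d v2 := N1b (oc h5) (oc h3) (oc' h2) h6 h4
    exact (oc' k2)
  · have k3 : 0 < o s v4 d v2 := N1b (oc h5) (oc h3) (oc' h2) h6 h4
    have k4 : 0 < o s v2 v3 d := N1b (oc h1) (oc' h4) (oc' h7) h2 (oc' k3)
    exact k4

theorem qa_quad {s : ℝ} (x y1 y2 y3 z : Pt)
    (h1 : 0 < o s x y1 y2) (h2 : 0 < o s y1 y2 y3) (h3 : 0 < o s y2 y3 x) (h4 : 0 < o s y3 x z)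
    (h5 : 0 < o s x y1 z) (h6 : 0 < o s y3 z y1) :
    0 < o s z y1 y2 ∧ 0 < o s y2 y3 z := by
  refine ⟨?_, ?_⟩
  · have k1 : 0 < o s x y1 y3 := A4 (oc h6) (oc h4) h5
    have k2 : 0 < o s y1 y2 z := N1b (oc h1) (oc k1) (oc h5) h2 (oc' h6)
    exact (oc' k2)
  · have k3 : 0 < o s x y1 y3 := A4 (oc h6) (oc h4) h5
    have k4 : 0 < o s y3 z y2 := N0b h4 (oc' k3) (oc h3) h6 (oc' h2)
    exact (oc' k4)

theorem qa_in {s : ℝ} (x y1 y3 z q : Pt)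
    (h1 : 0 < o s y3 x z) (h2 : 0 < o s x y1 z) (h3 : 0 < o s z y1 q) (h4 : 0 < o s y3 z q)
    (h5 : 0 < o s y3 q y1) :
    0 < o s y3 x q ∧ 0 < o s x y1 q := by
  refine ⟨?_, ?_⟩
  · have k1 : 0 < o s y1 y3 z := A4 (oc' h4) (oc h3) (oc' h5)
    have k2 : 0 < o s x y1 y3 := A4 (oc' k1) (oc h1) h2
    have k3 : 0 < o s y3 x q := N1b (oc' k2) (oc k1) h5 h1 h4
    exact k3
  · have k4 : 0 < o s y1 y3 z := A4 (oc' h4) (oc h3) (oc' h5)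
    have k5 : 0 < o s x y1 y3 := A4 (oc' k4) (oc h1) h2
    have k6 : 0 < o s y1 q x := N0b (oc' h5) k4 (oc k5) (oc h3) (oc h2)
    exact (oc' k6)

theorem qa_sub {s : ℝ} (x y1 y2 y3 z q : Pt)
    (h1 : 0 < o s x y1 y2) (h2 : 0 < o s y1 y2 y3) (h3 : 0 < o s y2 y3 x) (h4 : 0 < o s y3 x z)
    (h5 : 0 < o s x y1 z) (h6 : 0 < o s y3 z y1) (h7 : 0 < o s z y1 q) (h8 : 0 < o s y1 y2 q)
    (h9 : 0 < o s y2 y3 q) (h10 : 0 < o s y3 z q) :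
    0 < o s y3 x q ∧ 0 < o s x y1 q := by
  refine ⟨?_, ?_⟩
  · have k1 : 0 < o s x y1 y3 := A4 (oc h6) (oc h4) h5
    have k2 : 0 < o s y3 z y2 := N0b h4 (oc' k1) (oc h3) h6 (oc' h2)
    have k3 : 0 < o s y3 x q := N1b (oc h3) k2 (oc h9) h4 h10
    exact k3
  · have k4 : 0 < o s x y1 y3 := A4 (oc h6) (oc h4) h5
    have k5 : 0 < o s y1 y2 z := N1b (oc h1) (oc k4) (oc h5) h2 (oc' h6)
    have k6 : 0 < o s y1 q x := N0b h8 k5 (oc h1) (oc h7) (oc h5)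
    exact (oc' k6)

theorem qa_d1 {s : ℝ} (x y1 y2 y3 z d : Pt)
    (h1 : 0 < o s x y1 y2) (h2 : 0 < o s y1 y2 y3) (h3 : 0 < o s y3 x z) (h4 : 0 < o s x y1 z)
    (h5 : 0 < o s y3 z y1) (h6 : 0 < o s x y1 d) (h7 : 0 < o s y1 d y2) :
    0 < o s z y1 d := by
  have k1 : 0 < o s x y1 y3 := A4 (oc h5) (oc h3) h4
  have k2 : 0 < o s y1 y2 z := N1b (oc h1) (oc k1) (oc h4) h2 (oc' h5)
  have k3 : 0 < o s y1 d z := N1b (oc h6) (oc h1) (oc h4) h7 k2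
  exact (oc' k3)

theorem qa_d2 {s : ℝ} (x y1 y2 y3 z d : Pt)
    (h1 : 0 < o s y1 y2 y3) (h2 : 0 < o s y2 y3 x) (h3 : 0 < o s y3 x z) (h4 : 0 < o s x y1 z)
    (h5 : 0 < o s y3 z y1) (h6 : 0 < o s y2 y3 d) (h7 : 0 < o s y3 d x) :
    0 < o s y3 d z := by
  have k1 : 0 < o s x y1 y3 := A4 (oc h5) (oc h3) h4
  have k2 : 0 < o s y3 z y2 := N0b h3 (oc' k1) (oc h2) h5 (oc' h1)
  have k3 : 0 < o s y3 d z := N1b (oc h6) (oc h2) k2 h7 h3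
  exact k3

theorem qa_d3 {s : ℝ} (x y1 y3 z d : Pt)
    (h1 : 0 < o s y3 x z) (h2 : 0 < o s x y1 z) (h3 : 0 < o s y3 z y1) (h4 : 0 < o s y3 d x)
    (h5 : 0 < o s d x y1) (h6 : 0 < o s d y1 z) :
    0 < o s y1 y3 z ∧ 0 < o s y3 d z ∧ 0 < o s d y1 z := by
  refine ⟨?_, ?_, ?_⟩
  · exact (oc' h3)
  · have k1 : 0 < o s x y1 y3 := A4 (oc h3) (oc h1) h2
    have k2 : 0 < o s x z d := N0b h2 k1 (oc h5) (oc h1) (oc' h4)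
    have k3 : 0 < o s z y3 d := N0a (oc k2) (oc' h6) (oc' h1) (oc' h2) (oc h3)
    exact (oc k3)
  · exact h6


theorem asm {p : Prop}
    (h : p := by first | assumption | exact oc (by assumption) | exact oc' (by assumption)) : p := h

theorem om {s : ℝ} {p q r : Pt} : o (-s) p q r = o s p r q := by
  unfold o; ring

theorem o12 {s : ℝ} {p q r : Pt} (h : 0 < o s p q r) : p ≠ q := by
  rintro rfl; unfold o at h; simp at h

theorem o23 {s : ℝ} {p q r : Pt} (h : 0 < o s p q r) : q ≠ r := o12 (oc h)

theorem o13 {s : ℝ} {p q r : Pt} (h : 0 < o s p q r) : p ≠ r := (o12 (oc' h)).symm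

theorem o_split {s : ℝ} (p q r z : Pt) : o s p q r = o s p q z + o s q r z + o s r p z := by
  unfold o; ring

theorem o_rot {s : ℝ} (p q r : Pt) : o s p q r = o s q r p := by
  unfold o; ring

theorem o_swap {s : ℝ} (p q r : Pt) : o s p q r = - o s p r q := by
  unfold o; ring

theorem tri_x {s x0 : ℝ} {p q r z : Pt} (h1 : 0 < o s p q z) (h2 : 0 < o s q r z)
    (h3 : 0 < o s r p z) (hp : x0 < p.1) (hq : x0 < q.1) (hr : x0 < r.1) : x0 < z.1 := by
  by_contra hc
  have z1 := mul_pos h1 (show 0 < r.1 - z.1 by linarith)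
  have z2 := mul_pos h2 (show 0 < p.1 - z.1 by linarith)
  have z3 := mul_pos h3 (show 0 < q.1 - z.1 by linarith)
  unfold o at z1 z2 z3
  linarith

/-- Two-coloured point sets without a divided 5-hole, in orientation form. -/
structure Cfg (s x0 : ℝ) (A B : Finset Pt) : Prop where
  hA : ∀ p ∈ A, p.1 < x0
  hB : ∀ p ∈ B, x0 < p.1
  tot : ∀ p ∈ A ∪ B, ∀ q ∈ A ∪ B, ∀ r ∈ A ∪ B, p ≠ q → p ≠ r → q ≠ r →
    0 < o s p q r ∨ 0 < o s p r q
  xinj : ∀ p ∈ A ∪ B, ∀ q ∈ A ∪ B, p ≠ q → p.1 < q.1 ∨ q.1 < p.1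
  hole : ∀ v1 ∈ A ∪ B, ∀ v2 ∈ A ∪ B, ∀ v3 ∈ A ∪ B, ∀ v4 ∈ A ∪ B, ∀ v5 ∈ A ∪ B,
    (v1 ∈ A ∨ v2 ∈ A ∨ v3 ∈ A ∨ v4 ∈ A ∨ v5 ∈ A) →
    (v1 ∈ B ∨ v2 ∈ B ∨ v3 ∈ B ∨ v4 ∈ B ∨ v5 ∈ B) →
    0 < o s v1 v2 v3 → 0 < o s v1 v2 v4 → 0 < o s v1 v2 v5 → 0 < o s v1 v3 v4 →
    0 < o s v1 v3 v5 → 0 < o s v1 v4 v5 → 0 < o s v2 v3 v4 → 0 < o s v2 v3 v5 →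
    0 < o s v2 v4 v5 → 0 < o s v3 v4 v5 →
    ∃ q ∈ A ∪ B, 0 < o s v1 v2 q ∧ 0 < o s v2 v3 q ∧ 0 < o s v3 v4 q ∧ 0 < o s v4 v5 q ∧
      0 < o s v5 v1 q

theorem Cfg.mirror {s x0 : ℝ} {A B : Finset Pt} (C : Cfg s x0 A B) : Cfg (-s) x0 A B where
  hA := C.hA
  hB := C.hB
  tot := by
    intro p hp q hq r hr h1 h2 h3
    rw [om, om]; exact (C.tot p hp q hq r hr h1 h2 h3).symm
  xinj := C.xinj
  hole := by
    intro v1 m1 v2 m2 v3 m3 v4 m4 v5 m5 hA hB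
    simp only [om]
    intro h1 h2 h3 h4 h5 h6 h7 h8 h9 h10
    obtain ⟨q, hq, g1, g2, g3, g4, g5⟩ := C.hole v5 m5 v4 m4 v3 m3 v2 m2 v1 m1 (by tauto) (by tauto)
      asm asm asm asm asm asm asm asm asm asm
    exact ⟨q, hq, asm, asm, asm, asm, asm⟩

theorem H1 {s x0 : ℝ} {A B : Finset Pt} (C : Cfg s x0 A B) (v1 v2 v3 v4 d : Pt)
    (m1 : v1 ∈ A ∪ B) (m2 : v2 ∈ A ∪ B) (m3 : v3 ∈ A ∪ B) (m4 : v4 ∈ A ∪ B) (md : d ∈ A ∪ B)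
    (hA : v1 ∈ A ∨ v2 ∈ A ∨ v3 ∈ A ∨ v4 ∈ A) (hB : v1 ∈ B ∨ v2 ∈ B ∨ v3 ∈ B ∨ v4 ∈ B)
    (h1 : 0 < o s v1 v2 v3) (h2 : 0 < o s v2 v3 v4) (h3 : 0 < o s v3 v4 v1)
    (h4 : 0 < o s v4 v1 v2)
    (h5 : 0 < o s v3 v4 d) (h6 : 0 < o s v4 d v1) (h7 : 0 < o s d v1 v2)
    (emp : ∀ z ∈ A ∪ B, 0 < o s v1 v2 z → 0 < o s v2 v3 z → 0 < o s v3 v4 z →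
      0 < o s v4 v1 z → False) : False := by
  classical
  obtain ⟨d', hd', hmin⟩ := Finset.exists_min_image
    ((A ∪ B).filter (fun q => 0 < o s v3 v4 q ∧ 0 < o s v4 q v1 ∧ 0 < o s q v1 v2))
    (fun q => o s v4 q v1) ⟨d, by simp only [Finset.mem_filter]; exact ⟨md, h5, h6, h7⟩⟩
  simp only [Finset.mem_filter] at hd'
  obtain ⟨md', e5, e6, e7⟩ := hd'
  obtain ⟨r1, r2, r3⟩ := pent_rest v1 v2 v3 v4 d' h1 h2 h3 h4 e5 e6 e7
  obtain ⟨q, hq, g1, g2, g3, g4, g5⟩ := C.hole v1 m1 v2 m2 v3 m3 v4 m4 d' md' (by tauto) (by tauto)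
      asm asm asm asm asm asm asm asm asm asm
  rcases C.tot v4 m4 q hq v1 m1 (o23 g3) (o12 h4) (o13 g1).symm with k | k
  · have := hmin q (by simp only [Finset.mem_filter]; exact ⟨hq, g3, k, oc' g1⟩)
    have e := o_split (s := s) v4 d' v1 q
    have e2 := o_rot (s := s) v1 v4 q
    have e3 := o_rot (s := s) v4 q v1
    linarith
  · exact emp q hq g1 g2 g3 k

theorem H1A_core {s x0 : ℝ} {A B : Finset Pt} (C : Cfg s x0 A B) (x y1 y2 y3 : Pt)
    (mx : x ∈ A) (m1 : y1 ∈ B) (m2 : y2 ∈ B) (m3 : y3 ∈ B)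
    (h1 : 0 < o s x y1 y2) (h2 : 0 < o s y1 y2 y3) (h3 : 0 < o s y2 y3 x) (h4 : 0 < o s y3 x y1)
    (emp : ∀ z ∈ B, 0 < o s x y1 z → 0 < o s y1 y2 z → 0 < o s y2 y3 z →
      0 < o s y3 x z → False) :
    ∃ z ∈ A, (z = x ∨ (0 < o s y3 x z ∧ 0 < o s x y1 z ∧ 0 < o s y3 z y1)) ∧
      0 < o s z y1 y2 ∧ 0 < o s y2 y3 z ∧ 0 < o s y3 z y1 ∧
      ∀ q ∈ A ∪ B, 0 < o s z y1 q → 0 < o s y1 y2 q → 0 < o s y2 y3 q →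
        0 < o s y3 z q → False := by
  classical
  obtain ⟨z, hz, hmin⟩ := Finset.exists_min_image
    (A.filter (fun z => z = x ∨ (0 < o s y3 x z ∧ 0 < o s x y1 z ∧ 0 < o s y3 z y1)))
    (fun q => o s y3 q y1) ⟨x, by simp only [Finset.mem_filter]; exact ⟨mx, by simp⟩⟩
  simp only [Finset.mem_filter] at hz hmin
  obtain ⟨mz, hz⟩ := hz
  have hq : 0 < o s z y1 y2 ∧ 0 < o s y2 y3 z ∧ 0 < o s y3 z y1 := by
    rcases hz with rfl | ⟨k1, k2, k3⟩
    · exact ⟨h1, h3, h4⟩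
    · have := qa_quad x y1 y2 y3 z h1 h2 h3 k1 k2 k3
      exact ⟨this.1, this.2, k3⟩
  refine ⟨z, mz, hz, hq.1, hq.2.1, hq.2.2, ?_⟩
  intro q mq g1 g2 g3 g4
  rcases Finset.mem_union.1 mq with mA | mB
  · rcases C.tot y3 (Finset.mem_union_right _ m3) q mq y1 (Finset.mem_union_right _ m1)
      (o23 g3) (o13 h2).symm (o13 g2).symm with k | k
    · have hin : 0 < o s y3 x q ∧ 0 < o s x y1 q := by
        rcases hz with rfl | ⟨k1, k2, k3⟩
        · exact ⟨g4, g1⟩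
        · exact qa_in x y1 y3 z q asm asm asm asm asm
      have := hmin q ⟨mA, Or.inr ⟨hin.1, hin.2, k⟩⟩
      have e := o_split (s := s) y3 z y1 q
      have e2 := o_rot (s := s) y1 y3 q
      linarith
    · have := tri_x g2 g3 k (C.hB _ m1) (C.hB _ m2) (C.hB _ m3)
      have := C.hA _ mA
      linarith
  · rcases hz with rfl | ⟨k1, k2, k3⟩
    · exact emp q mB g1 g2 g3 g4
    · have := qa_sub x y1 y2 y3 z q asm asm asm asm asm asm asm asm asm asm
      exact emp q mB this.2 g2 g3 this.1

theorem H1A_12 {s x0 : ℝ} {A B : Finset Pt} (C : Cfg s x0 A B) (x y1 y2 y3 d : Pt)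
    (mx : x ∈ A) (m1 : y1 ∈ B) (m2 : y2 ∈ B) (m3 : y3 ∈ B) (md : d ∈ B)
    (h1 : 0 < o s x y1 y2) (h2 : 0 < o s y1 y2 y3) (h3 : 0 < o s y2 y3 x) (h4 : 0 < o s y3 x y1)
    (h5 : 0 < o s x y1 d) (h6 : 0 < o s y1 d y2) (h7 : 0 < o s d y2 y3)
    (emp : ∀ z ∈ B, 0 < o s x y1 z → 0 < o s y1 y2 z → 0 < o s y2 y3 z →
      0 < o s y3 x z → False) : False := by
  obtain ⟨z, mz, hz, q1, q2, q3, hemp⟩ := H1A_core C x y1 y2 y3 mx m1 m2 m3 h1 h2 h3 h4 emp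
  have k : 0 < o s z y1 d := by
    rcases hz with rfl | ⟨k1, k2, k3⟩
    · exact h5
    · exact qa_d1 x y1 y2 y3 z d asm asm asm asm asm asm asm
  exact H1 C y2 y3 z y1 d (Finset.mem_union_right _ m2) (Finset.mem_union_right _ m3)
    (Finset.mem_union_left _ mz) (Finset.mem_union_right _ m1) (Finset.mem_union_right _ md)
    (by tauto) (by tauto) q2 q3 q1 h2 k h6 h7 (fun q mq a b c d => hemp q mq c d a b)

theorem H1A_31 {s x0 : ℝ} {A B : Finset Pt} (C : Cfg s x0 A B) (x y1 y2 y3 d : Pt)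
    (mx : x ∈ A) (m1 : y1 ∈ B) (m2 : y2 ∈ B) (m3 : y3 ∈ B) (md : d ∈ B)
    (h1 : 0 < o s x y1 y2) (h2 : 0 < o s y1 y2 y3) (h3 : 0 < o s y2 y3 x) (h4 : 0 < o s y3 x y1)
    (h5 : 0 < o s y2 y3 d) (h6 : 0 < o s y3 d x) (h7 : 0 < o s d x y1)
    (emp : ∀ z ∈ B, 0 < o s x y1 z → 0 < o s y1 y2 z → 0 < o s y2 y3 z →
      0 < o s y3 x z → False) : False := by
  obtain ⟨z, mz, hz, q1, q2, q3, hemp⟩ := H1A_core C x y1 y2 y3 mx m1 m2 m3 h1 h2 h3 h4 emp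
  have k : 0 < o s y3 d z ∧ 0 < o s d z y1 := by
    rcases hz with rfl | ⟨k1, k2, k3⟩
    · exact ⟨h6, h7⟩
    · have k : 0 < o s y3 d z := qa_d2 x y1 y2 y3 z d asm asm asm asm asm asm asm
      refine ⟨k, ?_⟩
      rcases C.tot d (Finset.mem_union_right _ md) z (Finset.mem_union_left _ mz) y1
        (Finset.mem_union_right _ m1) (o23 k) (o13 h7) (o12 q1) with g | g
      · exact g
      · obtain ⟨g1, g2, g3⟩ := qa_d3 x y1 y3 z d asm asm asm asm asm asm
        have := tri_x g1 g2 g3 (C.hB _ m1) (C.hB _ m3) (C.hB _ md)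
        have := C.hA _ mz
        linarith
  exact H1 C z y1 y2 y3 d (Finset.mem_union_left _ mz) (Finset.mem_union_right _ m1)
    (Finset.mem_union_right _ m2) (Finset.mem_union_right _ m3) (Finset.mem_union_right _ md)
    (by tauto) (by tauto) q1 h2 q2 q3 h5 k.1 k.2 hemp

theorem H1A_23 {s x0 : ℝ} {A B : Finset Pt} (C : Cfg s x0 A B) (x y1 y2 y3 d : Pt)
    (mx : x ∈ A) (m1 : y1 ∈ B) (m2 : y2 ∈ B) (m3 : y3 ∈ B) (md : d ∈ B)
    (h1 : 0 < o s x y1 y2) (h2 : 0 < o s y1 y2 y3) (h3 : 0 < o s y2 y3 x) (h4 : 0 < o s y3 x y1)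
    (h5 : 0 < o s y1 y2 d) (h6 : 0 < o s y2 d y3) (h7 : 0 < o s d y3 x)
    (emp : ∀ z ∈ B, 0 < o s x y1 z → 0 < o s y1 y2 z → 0 < o s y2 y3 z →
      0 < o s y3 x z → False) : False := by
  refine H1A_12 C.mirror x y3 y2 y1 d mx m3 m2 m1 md ?_ ?_ ?_ ?_ ?_ ?_ ?_ ?_
  · rw [om]; exact asm
  · rw [om]; exact asm
  · rw [om]; exact asm
  · rw [om]; exact asm
  · rw [om]; exact asm
  · rw [om]; exact asm
  · rw [om]; exact asm
  · intro z mz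
    simp only [om]
    intro g1 g2 g3 g4
    exact emp z mz asm asm asm asm

theorem H1A_x1 {s x0 : ℝ} {A B : Finset Pt} (C : Cfg s x0 A B) (x y1 y2 y3 d : Pt)
    (mx : x ∈ A) (m1 : y1 ∈ B) (m2 : y2 ∈ B) (m3 : y3 ∈ B) (md : d ∈ B)
    (h1 : 0 < o s x y1 y2) (h2 : 0 < o s y1 y2 y3) (h3 : 0 < o s y2 y3 x) (h4 : 0 < o s y3 x y1)
    (h5 : 0 < o s y3 x d) (h6 : 0 < o s x d y1) (h7 : 0 < o s d y1 y2)
    (emp : ∀ z ∈ B, 0 < o s x y1 z → 0 < o s y1 y2 z → 0 < o s y2 y3 z →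
      0 < o s y3 x z → False) : False := by
  refine H1A_31 C.mirror x y3 y2 y1 d mx m3 m2 m1 md ?_ ?_ ?_ ?_ ?_ ?_ ?_ ?_
  · rw [om]; exact asm
  · rw [om]; exact asm
  · rw [om]; exact asm
  · rw [om]; exact asm
  · rw [om]; exact asm
  · rw [om]; exact asm
  · rw [om]; exact asm
  · intro z mz
    simp only [om]
    intro g1 g2 g3 g4
    exact emp z mz asm asm asm asm

end Part1

section Part2

theorem beyond {s : ℝ} (a p q b : Pt)
    (h1 : 0 < o s a b p) (h2 : 0 < o s a q b) (h3 : a.1 < b.1) (h4 : p.1 < b.1) (h5 : q.1 < b.1)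
    (h6 : 0 < o s p b q) :
    False := by
  have k1 : 0 < o s b p q := S0b h4 h3 h5 (oc h1) (oc' h2)
  exact absurd k1 (oneg (oc h6))

theorem f1_in {s : ℝ} (a p q b e : Pt)
    (h1 : a.1 < e.1) (h2 : p.1 < e.1) (h3 : q.1 < e.1) (h4 : 0 < o s a e p) (h5 : 0 < o s a q e)
    (h6 : 0 < o s p e b) (h7 : 0 < o s q b e) (h8 : b.1 < e.1) :
    False := by
  have k1 : 0 < o s e b a := S0b h8 h2 h1 (oc h6) (oc h4)
  have k2 : 0 < o s e a b := S0b h1 h3 h8 (oc' h5) (oc' h7)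
  exact absurd k1 (oneg k2)

theorem g_quad {s : ℝ} (a a1 a2 a3 b : Pt)
    (h1 : 0 < o s a a1 b) (h2 : 0 < o s a a2 a1) (h3 : 0 < o s a a3 a2) (h4 : a.1 < a1.1)
    (h5 : a.1 < a2.1) (h6 : a.1 < a3.1) (h7 : a3.1 < b.1) :
    0 < o s a a2 b ∧ 0 < o s a a3 b ∧ 0 < o s a a3 a1 := by
  refine ⟨?_, ?_, ?_⟩
  · have k1 : a.1 < b.1 := lt_trans h6 h7
    have k2 : 0 < o s a a2 b := S1b h5 h4 k1 h2 h1
    exact k2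
  · have k3 : a.1 < b.1 := lt_trans h6 h7
    have k4 : 0 < o s a a3 a1 := S1b h6 h5 h4 h3 h2
    have k5 : 0 < o s a a3 b := S1b h6 h4 k3 k4 h1
    exact k5
  · have k6 : 0 < o s a a3 a1 := S1b h6 h5 h4 h3 h2
    exact k6

theorem g_em_x {s : ℝ} (a a1 a2 b z : Pt)
    (h1 : a.1 < b.1) (h2 : a1.1 < b.1) (h3 : a2.1 < b.1) (h4 : 0 < o s a a2 z)
    (h5 : 0 < o s a2 a1 z) (h6 : 0 < o s a1 b z) (h7 : 0 < o s b a z) (h8 : b.1 < z.1) :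
    False := by
  have k1 : a.1 < z.1 := lt_trans h1 h8
  have k2 : a2.1 < z.1 := lt_trans h3 h8
  have k3 : a1.1 < z.1 := lt_trans h2 h8
  have k4 : 0 < o s z a a1 := S0b k1 k2 k3 (oc' h4) (oc' h5)
  have k5 : 0 < o s z a1 a := S0b k3 h8 k1 (oc' h6) (oc' h7)
  exact absurd k4 (oneg k5)

theorem g_em_a {s : ℝ} (a a2 b z : Pt)
    (h1 : a.1 < a2.1) (h2 : 0 < o s a a2 b) (h3 : a2.1 < b.1) (h4 : 0 < o s a a2 z)
    (h5 : 0 < o s b a z) :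
    a.1 < z.1 := by
  have k1 : a.1 < b.1 := lt_trans h1 h3
  have k2 : a.1 < z.1 := P03 h1 h4 h2 (oc h5) k1
  exact k2

theorem cone_up {s : ℝ} (a v1 v2 v3 v4 z : Pt)
    (h1 : 0 < o s v1 v2 z) (h2 : 0 < o s v2 v3 z) (h3 : 0 < o s v3 v4 z) (h4 : 0 < o s v4 v1 z)
    (h5 : 0 < o s a v1 z) (h6 : 0 < o s a v2 z) (h7 : 0 < o s a v3 z) (h8 : 0 < o s a v4 z) :
    False := by
  have k1 : 0 < o s z v3 v1 := N0b (oc' h7) (oc' h8) (oc' h5) (oc' h3) (oc' h4)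
  have k2 : 0 < o s z v1 v3 := N0b (oc' h5) (oc' h6) (oc' h7) (oc' h1) (oc' h2)
  exact absurd k1 (oneg k2)

theorem cone_dn {s : ℝ} (a v1 v2 v3 v4 z : Pt)
    (h1 : 0 < o s v1 v2 z) (h2 : 0 < o s v2 v3 z) (h3 : 0 < o s v3 v4 z) (h4 : 0 < o s v4 v1 z)
    (h5 : 0 < o s a z v1) (h6 : 0 < o s a z v2) (h7 : 0 < o s a z v3) (h8 : 0 < o s a z v4) :
    False := by
  have k1 : 0 < o s z v3 v1 := N1b (oc h7) (oc h8) (oc h5) (oc' h3) (oc' h4)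
  have k2 : 0 < o s z v1 v3 := N1b (oc h5) (oc h6) (oc h7) (oc' h1) (oc' h2)
  exact absurd k1 (oneg k2)
theorem Cfg.ab {s x0 : ℝ} {A B : Finset Pt} (C : Cfg s x0 A B) {p q : Pt} (hp : p ∈ A)
    (hq : q ∈ B) : p.1 < q.1 := (C.hA p hp).trans (C.hB q hq)

/-- Close a routine goal from the context. -/
theorem asx {p : Prop}
    (h : p := by first | assumption | exact oc (by assumption) | exact oc' (by assumption) |
      exact Cfg.ab (by assumption) (by assumption) (by assumption) |
      exact Finset.mem_union_left _ (by assumption) |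
      exact Finset.mem_union_right _ (by assumption)) : p := h

theorem asor {p q r w : Prop}
    (h : p ∨ q ∨ r ∨ w := by first | exact Or.inl (by assumption) |
      exact Or.inr (Or.inl (by assumption)) | exact Or.inr (Or.inr (Or.inl (by assumption))) |
      exact Or.inr (Or.inr (Or.inr (by assumption)))) : p ∨ q ∨ r ∨ w := h

/-- `q` lies in the `k`-th wedge at `a`. -/
def Inw (s : ℝ) (a : Pt) (c : ℕ → Pt) (k : ℕ) (q : Pt) : Prop :=
  0 < o s a q (c k) ∧ 0 < o s a (c (k + 1)) q

structure WStar (s x0 : ℝ) (A B : Finset Pt) (a : Pt) (c : ℕ → Pt) (t : ℕ) : Prop extends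
    Cfg s x0 A B where
  ha : a ∈ A
  hc : ∀ k ≤ t, c k ∈ A
  c0 : (c 0).1 < a.1
  ct : (c t).1 < a.1
  cr : ∀ k, 1 ≤ k → k < t → a.1 < (c k).1
  cons : ∀ k < t, 0 < o s a (c (k + 1)) (c k)
  cov : ∀ q ∈ B, ∃ k < t, Inw s a c k q
  Ar : ∀ q ∈ A, a.1 < q.1 → ∃ k, 1 ≤ k ∧ k < t ∧ q = c k
  emp : ∀ k < t, ∀ q ∈ A, ¬ Inw s a c k q
  ext : ∀ k, 1 ≤ k → k < t → ∀ p ∈ A, ∀ q ∈ A, ∀ r ∈ A,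
    0 < o s p q (c k) → 0 < o s q r (c k) → 0 < o s r p (c k) → False
  t2 : 2 ≤ t
  t3 : t = 3 → 0 < o s a (c 0) (c 3)
  hcard : 6 ≤ B.card

variable {s x0 : ℝ} {A B : Finset Pt} {a : Pt} {c : ℕ → Pt} {t : ℕ}

theorem mirror_In {k : ℕ} (hk : k < t) {q : Pt} :
    Inw (-s) a (fun k => c (t - k)) k q ↔ Inw s a c (t - 1 - k) q := by
  unfold Inw
  simp only [om]
  have e1 : t - 1 - k + 1 = t - k := by omega
  have e2 : t - (k + 1) = t - 1 - k := by omega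
  rw [e1, e2]
  exact and_comm

theorem WStar.mirror (S : WStar s x0 A B a c t) : WStar (-s) x0 A B a (fun k => c (t - k)) t where
  toCfg := S.toCfg.mirror
  ha := S.ha
  hc := fun k _ => S.hc _ (by omega)
  c0 := S.ct
  ct := by simpa using S.c0
  cr := by
    intro k h1 h2
    have := S.t2
    exact S.cr _ (by omega) (by omega)
  cons := by
    intro k hk
    rw [om]
    have := S.cons (t - (k + 1)) (by omega)
    have e : t - (k + 1) + 1 = t - k := by omega
    rwa [e] at this
  cov := by
    intro q hq
    obtain ⟨k, hk, h⟩ := S.cov q hq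
    refine ⟨t - 1 - k, by omega, ?_⟩
    rw [mirror_In (by omega)]
    have e : t - 1 - (t - 1 - k) = k := by omega
    rwa [e]
  Ar := by
    intro q hq h
    obtain ⟨k, h1, h2, h3⟩ := S.Ar q hq h
    refine ⟨t - k, by omega, by omega, ?_⟩
    have e : t - (t - k) = k := by omega
    simp only [e]; exact h3
  emp := by
    intro k hk q hq h
    rw [mirror_In hk] at h
    exact S.emp _ (by omega) q hq h
  ext := by
    intro k h1 h2 p hp q hq r hr
    simp only [om]
    intro g1 g2 g3
    exact S.ext (t - k) (by omega) (by omega) q hq p hp r hr asm asm asm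
  t2 := S.t2
  t3 := by
    intro h
    rw [om]
    have := S.t3 h
    subst h
    exact this
  hcard := S.hcard

theorem WStar.Br (S : WStar s x0 A B a c t) {q : Pt} (hq : q ∈ B) : a.1 < q.1 :=
  S.toCfg.ab S.ha hq

theorem WStar.cc (S : WStar s x0 A B a c t) {i j : ℕ} (hi : 1 ≤ i) (hij : i < j) (hj : j < t) :
    0 < o s a (c j) (c i) := by
  induction j with
  | zero => omega
  | succ j ih =>
    have h1 := S.cons j (by omega)
    rcases Nat.lt_or_ge i j with h | h
    · exact S1b (S.cr _ (by omega) hj) (S.cr j (by omega) (by omega)) (S.cr i hi (by omega))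
        h1 (ih h (by omega))
    · have : i = j := by omega
      subst this; exact h1

/-- Angular position of a point to the right of `a`. -/
def Pos (s : ℝ) (B : Finset Pt) (a : Pt) (c : ℕ → Pt) (t : ℕ) (z : Pt) (n : ℕ) : Prop :=
  (∃ k, n = 2 * k ∧ 1 ≤ k ∧ k < t ∧ z = c k) ∨ (∃ k, n = 2 * k + 1 ∧ k < t ∧ z ∈ B ∧ Inw s a c k
      z)

theorem WStar.posc (S : WStar s x0 A B a c t) {k : ℕ} (h1 : 1 ≤ k) (h2 : k < t) :
    Pos s B a c t (c k) (2 * k) := Or.inl ⟨k, rfl, h1, h2, rfl⟩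

theorem WStar.posb (S : WStar s x0 A B a c t) {k : ℕ} {z : Pt} (h2 : k < t) (hz : z ∈ B)
    (h : Inw s a c k z) : Pos s B a c t z (2 * k + 1) := Or.inr ⟨k, rfl, h2, hz, h⟩

theorem Pos.isc {k : ℕ} {z : Pt} (h : Pos s B a c t z (2 * k)) : z = c k := by
  rcases h with ⟨l, h1, h2, h3, h4⟩ | ⟨l, h1, h2, h3, h4⟩
  · have : k = l := by omega
    subst this; exact h4
  · omega

theorem Pos.isb {k : ℕ} {z : Pt} (h : Pos s B a c t z (2 * k + 1)) : z ∈ B ∧ Inw s a c k z := by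
  rcases h with ⟨l, h1, h2, h3, h4⟩ | ⟨l, h1, h2, h3, h4⟩
  · omega
  · have : k = l := by omega
    subst this; exact ⟨h3, h4⟩

theorem WStar.pos (S : WStar s x0 A B a c t) {z : Pt} (hz : z ∈ A ∪ B) (h : a.1 < z.1) :
    ∃ n, Pos s B a c t z n := by
  rcases Finset.mem_union.1 hz with m | m
  · obtain ⟨k, h1, h2, rfl⟩ := S.Ar z m h
    exact ⟨_, S.posc h1 h2⟩
  · obtain ⟨k, h1, h2⟩ := S.cov z m
    exact ⟨_, S.posb h1 m h2⟩

theorem WStar.ord (S : WStar s x0 A B a c t) {z w : Pt} {m n : ℕ} (hz : Pos s B a c t z m)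
    (hw : Pos s B a c t w n) (h : m < n) : 0 < o s a w z := by
  rcases hz with ⟨k, h1, h2, h3, rfl⟩ | ⟨k, h1, h2, h3, h4⟩
  · rcases hw with ⟨l, g1, g2, g3, rfl⟩ | ⟨l, g1, g2, g3, g4⟩
    · exact S.cc h2 (by omega) g3
    · rcases Nat.lt_or_ge k l with hh | hh
      · exact S1b (S.Br g3) (S.cr l (by omega) g2) (S.cr k h2 h3) g4.1 (S.cc h2 hh g2)
      · have : k = l := by omega
        subst this; exact g4.1
  · have key : ∀ l, k < l → l < t → 0 < o s a (c l) z := by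
      intro l g1 g2
      rcases Nat.lt_or_ge (k + 1) l with hh | hh
      · exact S1b (S.cr l (by omega) g2) (S.cr (k + 1) (by omega) (by omega)) (S.Br h3)
          (S.cc (by omega) hh g2) h4.2
      · have : l = k + 1 := by omega
        subst this; exact h4.2
    rcases hw with ⟨l, g1, g2, g3, rfl⟩ | ⟨l, g1, g2, g3, g4⟩
    · exact key l (by omega) g3
    · exact S1b (S.Br g3) (S.cr l (by omega) g2) (S.Br h3) g4.1 (key l (by omega) g2)

/-- a point inside a quadrilateral has angular position between those of the vertices -/
theorem WStar.emp4 (S : WStar s x0 A B a c t) (lo hi : ℕ) (v1 v2 v3 v4 z : Pt) {n1 n2 n3 n4 : ℕ}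
    (p1 : Pos s B a c t v1 n1) (p2 : Pos s B a c t v2 n2) (p3 : Pos s B a c t v3 n3)
    (p4 : Pos s B a c t v4 n4)
    (l : lo ≤ n1 ∧ lo ≤ n2 ∧ lo ≤ n3 ∧ lo ≤ n4 ∧ n1 ≤ hi ∧ n2 ≤ hi ∧ n3 ≤ hi ∧ n4 ≤ hi)
    (hz : z ∈ A ∪ B) (h : a.1 < z.1) (e1 : 0 < o s v1 v2 z) (e2 : 0 < o s v2 v3 z)
    (e3 : 0 < o s v3 v4 z) (e4 : 0 < o s v4 v1 z) :
    ∃ n, Pos s B a c t z n ∧ lo ≤ n ∧ n ≤ hi := by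
  obtain ⟨n, hn⟩ := S.pos hz h
  refine ⟨n, hn, ?_, ?_⟩
  · by_contra hc
    exact cone_up a v1 v2 v3 v4 z e1 e2 e3 e4 (S.ord hn p1 (by omega)) (S.ord hn p2 (by omega))
      (S.ord hn p3 (by omega)) (S.ord hn p4 (by omega))
  · by_contra hc
    exact cone_dn a v1 v2 v3 v4 z e1 e2 e3 e4 (S.ord p1 hn (by omega)) (S.ord p2 hn (by omega))
      (S.ord p3 hn (by omega)) (S.ord p4 hn (by omega))

/-- leftmost point of a wedge -/
def Lm (s : ℝ) (B : Finset Pt) (a : Pt) (c : ℕ → Pt) (k : ℕ) (b : Pt) : Prop :=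
  b ∈ B ∧ Inw s a c k b ∧ ∀ z ∈ B, Inw s a c k z → z ≠ b → b.1 < z.1

theorem WStar.beyond (S : WStar s x0 A B a c t) {k : ℕ} (hk : k < t) {b : Pt} (hb : b ∈ B)
    (h : Inw s a c k b) : 0 < o s (c k) (c (k + 1)) b := by
  have C := S.toCfg
  have ha := S.ha
  have hp := S.hc k (by omega)
  have hq := S.hc (k + 1) (by omega)
  have h0 := S.cons k hk
  obtain ⟨h1, h2⟩ := h
  generalize c k = p at *
  generalize c (k + 1) = q at *
  rcases C.tot p asx q asx b asx (o23 h0).symm (o23 h1).symm (o23 h2) with g | g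
  · exact g
  · exact (_root_.beyond a p q b asx asx asx asx asx asx).elim

theorem WStar.quad_emp (S : WStar s x0 A B a c t) {k : ℕ} (hk : k < t) {b : Pt}
    (hb : Lm s B a c k b) : ∀ z ∈ A ∪ B, 0 < o s a (c (k + 1)) z → 0 < o s (c (k + 1)) b z →
      0 < o s b (c k) z → 0 < o s (c k) a z → False := by
  intro z mz g1 g2 g3 g4
  have C := S.toCfg
  have ha := S.ha
  have hp := S.hc k (by omega)
  have hq := S.hc (k + 1) (by omega)
  have hz : Inw s a c k z := ⟨oc g4, g1⟩
  rcases Finset.mem_union.1 mz with m | m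
  · exact S.emp k hk z m hz
  · obtain ⟨mb, ⟨k1, k2⟩, k3⟩ := hb
    have := k3 z m hz (o23 g2).symm
    exact f1_in a (c k) (c (k + 1)) b z asx asx asx asx asx asx asx asx

theorem WStar.F1 (S : WStar s x0 A B a c t) {k : ℕ} (hk : k < t) {b e : Pt}
    (hb : Lm s B a c k b) (he : e ∈ B) (h : Inw s a c k e) (hne : e ≠ b) :
    0 < o s (c k) b e ∧ 0 < o s (c (k + 1)) e b := by
  have em := S.quad_emp hk hb
  have C := S.toCfg
  have ha := S.ha
  have hp := S.hc k (by omega)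
  have hq := S.hc (k + 1) (by omega)
  obtain ⟨mb, hin, k3⟩ := hb
  have by1 := S.beyond hk mb hin
  have by2 := S.beyond hk he h
  have lt := k3 e he h hne
  have h0 := S.cons k hk
  obtain ⟨i1, i2⟩ := hin
  obtain ⟨j1, j2⟩ := h
  generalize c k = p at *
  generalize c (k + 1) = q at *
  rcases C.tot p asx b asx e asx (o23 i1).symm (o23 j1).symm hne.symm with g1 | g1 <;>
  rcases C.tot q asx e asx b asx (o23 j2) (o23 i2) hne with g2 | g2
  · exact ⟨g1, g2⟩
  · exact (H1 C p a q b e asx asx asx asx asx asor asor asx asx asx asx asx asx asx (fun z mz e1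
      e2 e3 e4 => em z mz e2 e3 e4 e1)).elim
  · exact (H1 C b p a q e asx asx asx asx asx asor asor asx asx asx asx asx asx asx (fun z mz e1
      e2 e3 e4 => em z mz e3 e4 e1 e2)).elim
  · exact (f1_in a p q b e asx asx asx asx asx asx asx asx).elim

theorem WStar.F2 (S : WStar s x0 A B a c t) {k : ℕ} (hk : k < t) {b z : Pt}
    (hb : Lm s B a c k b) (hz : z ∈ A ∪ B) (z1 : 0 < o s a z (c k))
    (z2 : 0 < o s a z (c (k + 1))) : 0 < o s (c (k + 1)) z b := by
  have em := S.quad_emp hk hb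
  have C := S.toCfg
  have ha := S.ha
  have hp := S.hc k (by omega)
  have hq := S.hc (k + 1) (by omega)
  obtain ⟨mb, hin, k3⟩ := hb
  have by1 := S.beyond hk mb hin
  have h0 := S.cons k hk
  obtain ⟨i1, i2⟩ := hin
  generalize c k = p at *
  generalize c (k + 1) = q at *
  have zb : z ≠ b := by rintro rfl; exact absurd i2 (oneg z2)
  rcases C.tot q asx z asx b asx (o23 z2).symm (o23 i2) zb with g1 | g1
  · exact g1
  · exact (H1 C q b p a z asx asx asx asx asx asor asor asx asx asx asx asx asx asx (fun z mz e1
      e2 e3 e4 => em z mz e4 e1 e2 e3)).elim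

theorem WStar.F2' (S : WStar s x0 A B a c t) {k : ℕ} (hk : k < t) {b z : Pt}
    (hb : Lm s B a c k b) (hz : z ∈ A ∪ B) (z1 : 0 < o s a (c k) z)
    (z2 : 0 < o s a (c (k + 1)) z) : 0 < o s (c k) b z := by
  have em := S.quad_emp hk hb
  have C := S.toCfg
  have ha := S.ha
  have hp := S.hc k (by omega)
  have hq := S.hc (k + 1) (by omega)
  obtain ⟨mb, hin, k3⟩ := hb
  have by1 := S.beyond hk mb hin
  have h0 := S.cons k hk
  obtain ⟨i1, i2⟩ := hin
  generalize c k = p at *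
  generalize c (k + 1) = q at *
  have zb : b ≠ z := by rintro rfl; exact absurd i1 (oneg z1)
  rcases C.tot p asx b asx z asx (o23 i1).symm (o23 z1) zb with g1 | g1
  · exact g1
  · exact (H1 C a q b p z asx asx asx asx asx asor asor asx asx asx asx asx asx asx em).elim

theorem WStar.G (S : WStar s x0 A B a c t) {i : ℕ} (hi : i + 2 < t) (ht : 1 ≤ i ∨ 4 ≤ t) {b : Pt}
    (hb : Lm s B a c i b) : 0 < o s (c (i + 1)) (c (i + 2)) b := by
  have C := S.toCfg
  have ha := S.ha
  rcases Nat.eq_zero_or_pos i with h0 | h0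
  · subst h0
    have ht : 3 < t := by omega
    have m1 := S.hc 1 (by omega)
    have m2 := S.hc 2 (by omega)
    have m3 := S.hc 3 (by omega)
    have r1 := S.cr 1 (by omega) (by omega)
    have r2 := S.cr 2 (by omega) (by omega)
    have r3 := S.cr 3 (by omega) (by omega)
    have e2 := S.cons 1 (by omega)
    have e3 := S.cons 2 (by omega)
    have P1 := S.posc (k := 1) (by omega) (by omega)
    have P2 := S.posc (k := 2) (by omega) (by omega)
    have by' : ∀ z ∈ B, Inw s a c 1 z → 0 < o s (c 1) (c 2) z := fun z hz h =>
      S.beyond (k := 1) (by omega) hz h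
    have ext := S.ext 2 (by omega) (by omega) a ha (c 3) m3 (c 1) m1
    obtain ⟨mb, ⟨i1, i2⟩, lm⟩ := hb
    have rb := S.Br mb
    have Pb := S.posb (k := 0) (by omega) mb ⟨i1, i2⟩
    have hpos := fun (z : Pt) (hz : z ∈ A ∪ B) (h : a.1 < z.1) => S.pos hz h
    have hb1 := fun (z : Pt) (h : Pos s B a c t z 1) => Pos.isb (k := 0) h
    have hc1 := fun (z : Pt) (h : Pos s B a c t z 2) => Pos.isc (k := 1) h
    have hb2 := fun (z : Pt) (h : Pos s B a c t z 3) => Pos.isb (k := 1) h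
    have hc2 := fun (z : Pt) (h : Pos s B a c t z 4) => Pos.isc (k := 2) h
    simp only [Nat.zero_add, Nat.reduceAdd, Nat.mul_zero, Nat.mul_one, Nat.reduceMul] at *
    generalize c 1 = a1 at *
    generalize c 2 = a2 at *
    generalize c 3 = a3 at *
    obtain ⟨q1, q2, q3⟩ := g_quad a a1 a2 a3 b asx asx asx asx asx asx asx
    rcases C.tot a1 asx a2 asx b asx (o23 e2).symm (o23 i2) (o23 q1) with g | g
    · exact g
    · exfalso
      have g4 : 0 < o s a3 a2 a1 := by
        rcases C.tot a3 asx a2 asx a1 asx (o23 e3) (o23 q3) (o23 e2) with g | g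
        · exact g
        · exact (ext asm asm asm).elim
      refine H1 C a2 a1 b a a3 asx asx asx asx asx asor asor asx asx asx asx asx asx asx ?_
      intro z mz w1 w2 w3 w4
      have az : a.1 < z.1 := g_em_a a a2 b z asx asx asx asx asx
      obtain ⟨n, hn⟩ := hpos z mz az
      rcases Nat.lt_or_ge n 1 with hh | hh
      · exact absurd (S.ord hn Pb hh) (oneg (oc w3))
      rcases Nat.lt_or_ge 4 n with hh' | hh'
      · exact absurd (S.ord P2 hn hh') (oneg w4)
      have : n = 1 ∨ n = 2 ∨ n = 3 ∨ n = 4 := by omega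
      rcases this with rfl | rfl | rfl | rfl
      · obtain ⟨zB, zi⟩ := hb1 z hn
        have := lm z zB zi (o23 w2).symm
        exact g_em_x a a1 a2 b z asx asx asx asx asx asx asx asx
      · exact o23 w1 (hc1 z hn).symm
      · obtain ⟨zB, zi⟩ := hb2 z hn
        exact absurd (by' z zB zi) (oneg (oc w1))
      · exact o23 w4 (hc2 z hn).symm
  · have h1 := S.F2 (k := i) (by omega) hb (Finset.mem_union_left _ (S.hc (i + 2) (by omega)))
      (S.cc h0 (by omega) hi) (S.cons (i + 1) (by omega))
    exact h1

end Part2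

section Part3

theorem s12_c {s : ℝ} (a a1 a2 b0 B0 b1 B1 : Pt)
    (h1 : a2.1 < B1.1) (h2 : 0 < o s a a1 B0) (h3 : 0 < o s a1 B0 b0) (h4 : b0.1 < B0.1)
    (h5 : 0 < o s a1 a2 b1) (h6 : 0 < o s a B1 a1) (h7 : 0 < o s a a2 B1) (h8 : 0 < o s a1 b1 B1)
    (h9 : b1.1 < B1.1) (h10 : 0 < o s a1 a2 B1) (h11 : 0 < o s a B1 B0) (h12 : a.1 < a2.1)
    (h13 : 0 < o s a1 b1 B0) (h14 : 0 < o s a a2 B0) (h15 : 0 < o s b0 B0 b1)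
    (h16 : 0 < o s b0 B1 B0) :
    False := by
  have k1 : 0 < o s a1 b1 b0 := A4 (oc h15) h3 h13
  have k2 : 0 < o s a a2 a1 := N1b h14 h11 h2 h7 h6
  have k3 : 0 < o s a1 a b1 := N1b (oc' h6) h10 h8 (oc' k2) h5
  have k4 : 0 < o s a1 b0 a := N1a k1 h3 k3 h13 (oc h2)
  have k5 : 0 < o s a1 B1 b0 := N1a (oc' h6) h8 k4 k3 k1
  have k6 : 0 < o s b0 B1 b1 := N0b (oc' k5) (oc' h3) (oc' k1) h16 h15
  have k7 : a.1 < B1.1 := lt_trans h12 h1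
  have k8 : 0 < o s a B1 b0 := A4 k5 (oc' k4) h6
  have k9 : 0 < o s a1 B1 B0 := N1a (oc' h6) h8 (oc h2) k3 h13
  have k10 : 0 < o s B0 B1 b1 := N1a (oc' h16) (oc' k9) (oc h15) (oc h3) (oc' h13)
  have k11 : 0 < o s a b1 B0 := A4 h13 h2 (oc k3)
  have k12 : 0 < o s b1 B1 a := N0b (oc' k10) (oc h13) (oc k11) (oc h8) (oc' k3)
  have k13 : B1.1 < b0.1 := S0a k7 h9 (oc k8) (oc k12) (oc k6)
  have k14 : b0.1 < b1.1 := P10 k6 h15 k13 h16 h4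
  have k15 : b1.1 < b0.1 := lt_trans h9 k13
  exact absurd k14 (lt_asymm k15)

theorem s12_q {s : ℝ} (a a0 a1 a2 b0 B0 b1 B1 : Pt)
    (h1 : a0.1 < B1.1) (h2 : a2.1 < B1.1) (h3 : 0 < o s a a1 B0) (h4 : 0 < o s a0 b0 B0)
    (h5 : 0 < o s a1 B0 b0) (h6 : 0 < o s a0 a1 b0) (h7 : 0 < o s a b1 B0) (h8 : 0 < o s a a2 B1)
    (h9 : 0 < o s a1 b1 B1) (h10 : b1.1 < B1.1) (h11 : 0 < o s a1 a2 B1) (h12 : 0 < o s a B1 B0)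
    (h13 : a.1 < a2.1) (h14 : 0 < o s a1 b1 B0) (h15 : 0 < o s b0 B0 b1) (h16 : 0 < o s b0 B0 B1) :
    0 < o s a0 b0 B0 ∧ 0 < o s b0 B0 b1 ∧ 0 < o s B0 b1 a0 ∧ 0 < o s b1 a0 b0 ∧ 0 < o s B0 b1 B1 ∧ 0 < o s b1 B1 a0 ∧ 0 < o s B1 a0 b0 := by
  refine ⟨?_, ?_, ?_, ?_, ?_, ?_, ?_⟩
  · exact h4
  · exact h15
  · have k1 : 0 < o s a0 a1 B0 := A4 (oc' h5) h4 h6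
    have k2 : 0 < o s B0 b1 a0 := N0a (oc' h4) (oc' k1) (oc h15) (oc h5) (oc' h14)
    exact k2
  · have k3 : 0 < o s a1 b1 b0 := A4 (oc h15) h5 h14
    have k4 : 0 < o s b0 b1 a0 := N1a (oc' k3) h15 (oc' h6) (oc' h5) (oc h4)
    exact (oc k4)
  · have k5 : a.1 < B1.1 := lt_trans h13 h2
    have k6 : 0 < o s a0 a1 B0 := A4 (oc' h5) h4 h6
    have k7 : 0 < o s B0 b0 a := N0a (oc' h3) (oc' h7) (oc h5) (oc' h14) (oc h15)
    have k8 : 0 < o s B0 a0 a := N1b (oc' k6) (oc h5) (oc' h3) (oc' h4) k7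
    have k9 : 0 < o s B0 B1 a0 := N0a (oc' h4) k8 (oc h16) k7 (oc' h12)
    have k10 : 0 < o s a B1 a0 := A4 k9 (oc' k8) h12
    have k11 : B0.1 < B1.1 := P15 k5 (oc k10) (oc h12) h1 (oc k9)
    have k12 : 0 < o s B1 a0 a2 := S0b h1 k5 h2 (oc k10) (oc' h8)
    have k13 : 0 < o s B0 b1 a0 := N0a (oc' h4) (oc' k6) (oc h15) (oc h5) (oc' h14)
    have k14 : 0 < o s a0 a1 b1 := A4 (oc' h14) (oc' k13) k6
    have k15 : 0 < o s B0 a1 B1 := N1a (oc h5) (oc' h3) (oc h16) k7 (oc' h12)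
    have k16 : 0 < o s a1 B1 a0 := N0b h9 h14 (oc k14) (oc k15) (oc k6)
    have k17 : a1.1 < B1.1 := P15 h2 k12 (oc' h11) h1 (oc k16)
    have k18 : 0 < o s B1 B0 b1 := S0b k11 k17 h10 (oc' k15) (oc' h9)
    exact (oc k18)
  · have k19 : a.1 < B1.1 := lt_trans h13 h2
    have k20 : 0 < o s a0 a1 B0 := A4 (oc' h5) h4 h6
    have k21 : 0 < o s B0 b0 a := N0a (oc' h3) (oc' h7) (oc h5) (oc' h14) (oc h15)
    have k22 : 0 < o s B0 a0 a := N1b (oc' k20) (oc h5) (oc' h3) (oc' h4) k21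
    have k23 : 0 < o s B0 B1 a0 := N0a (oc' h4) k22 (oc h16) k21 (oc' h12)
    have k24 : 0 < o s a B1 a0 := A4 k23 (oc' k22) h12
    have k25 : 0 < o s B1 a0 a2 := S0b h1 k19 h2 (oc k24) (oc' h8)
    have k26 : 0 < o s B0 b1 a0 := N0a (oc' h4) (oc' k20) (oc h15) (oc h5) (oc' h14)
    have k27 : 0 < o s a0 a1 b1 := A4 (oc' h14) (oc' k26) k20
    have k28 : 0 < o s B0 a1 B1 := N1a (oc h5) (oc' h3) (oc h16) k21 (oc' h12)
    have k29 : 0 < o s a1 B1 a0 := N0b h9 h14 (oc k27) (oc k28) (oc k20)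
    have k30 : a1.1 < B1.1 := P15 h2 k25 (oc' h11) h1 (oc k29)
    have k31 : 0 < o s B1 a0 b1 := S0b h1 k30 h10 (oc k29) (oc' h9)
    exact (oc' k31)
  · have k32 : 0 < o s B0 b0 a := N0a (oc' h3) (oc' h7) (oc h5) (oc' h14) (oc h15)
    have k33 : 0 < o s B0 a1 B1 := N1a (oc h5) (oc' h3) (oc h16) k32 (oc' h12)
    have k34 : 0 < o s a1 B1 b0 := A4 (oc h16) h5 (oc k33)
    have k35 : 0 < o s b0 B1 a0 := N1a (oc' k34) h16 (oc' h6) (oc' h5) (oc h4)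
    exact (oc k35)

theorem s12_dn {s : ℝ} (a a0 a1 b0 B0 b1 z : Pt)
    (h1 : 0 < o s a a1 B0) (h2 : 0 < o s a0 a1 b0) (h3 : 0 < o s a0 a1 B0) (h4 : 0 < o s a b1 B0)
    (h5 : 0 < o s a1 b1 B0) (h6 : 0 < o s a0 b0 z) (h7 : 0 < o s b0 B0 z) (h8 : 0 < o s B0 b1 z)
    (h9 : 0 < o s b1 a0 z) (h10 : 0 < o s a z a1) (h11 : 0 < o s a z b0) (h12 : 0 < o s a z b1) :
    False := by
  have k1 : 0 < o s a z B0 := A4 (oc h8) h4 h12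
  have k2 : 0 < o s B0 a1 z := N0b (oc' h1) (oc' h4) (oc' k1) (oc' h5) h8
  have k3 : 0 < o s z b0 a1 := N1b (oc h11) (oc k1) (oc h10) (oc' h7) (oc' k2)
  have k4 : 0 < o s a0 a1 z := A4 (oc k3) h6 h2
  have k5 : 0 < o s a1 a0 a := N1a (oc k4) (oc h3) (oc' h10) (oc k2) (oc h1)
  have k6 : 0 < o s z b0 b1 := N1b (oc h11) (oc k1) (oc h12) (oc' h7) (oc' h8)
  have k7 : 0 < o s z a a0 := N1a (oc h11) (oc h12) (oc' h6) k6 (oc' h9)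
  have k8 : 0 < o s a a0 a1 := A4 (oc' k4) h10 (oc k7)
  exact absurd k5 (oneg (oc' k8))

theorem s34_c {s : ℝ} (a a1 a2 b0 B0 b1 B1 : Pt)
    (h1 : a2.1 < B1.1) (h2 : 0 < o s a a1 B0) (h3 : 0 < o s a1 B0 b0) (h4 : b0.1 < B0.1)
    (h5 : 0 < o s a b1 B0) (h6 : 0 < o s a1 b1 B1) (h7 : b1.1 < B1.1) (h8 : 0 < o s a B1 B0)
    (h9 : 0 < o s a1 b1 b0) (h10 : a.1 < a2.1) (h11 : 0 < o s a1 b1 B0) (h12 : 0 < o s b1 b0 B1)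
    (h13 : 0 < o s b1 B1 B0) :
    False := by
  have k1 : a.1 < B1.1 := lt_trans h10 h1
  have k2 : 0 < o s B0 a1 B1 := N0b (oc' h2) (oc' h5) (oc' h8) (oc' h11) (oc' h13)
  have k3 : 0 < o s b1 b0 B0 := N1b (oc h9) (oc h6) (oc h11) h12 h13
  have k4 : 0 < o s B0 B1 b0 := N1a k2 (oc' h13) (oc h3) (oc' h11) (oc' k3)
  have k5 : 0 < o s B0 b0 a := N0a (oc' h2) (oc' h5) (oc h3) (oc' h11) (oc' k3)
  have k6 : 0 < o s a B1 b0 := A4 k4 (oc' k5) h8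
  have k7 : 0 < o s a b1 b0 := A4 (oc' k3) (oc' k5) h5
  have k8 : 0 < o s b1 B1 a := N0b h12 k3 (oc k7) h13 (oc h5)
  have k9 : B1.1 < b0.1 := S0a k1 h7 (oc k6) (oc k8) (oc' h12)
  have k10 : b0.1 < a.1 := P13 k9 (oc' k6) (oc' k4) (oc k5) h4
  have k11 : a.1 < b0.1 := lt_trans k1 k9
  exact absurd k10 (lt_asymm k11)

theorem s34_q {s : ℝ} (a a1 a2 b0 B0 b1 B1 : Pt)
    (h1 : a2.1 < B1.1) (h2 : 0 < o s a a1 B0) (h3 : 0 < o s a1 B0 b0) (h4 : b0.1 < B0.1)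
    (h5 : 0 < o s a1 a2 b1) (h6 : 0 < o s a B1 a1) (h7 : 0 < o s a a2 B1) (h8 : 0 < o s a1 b1 B1)
    (h9 : 0 < o s a2 B1 b1) (h10 : 0 < o s a B1 B0) (h11 : a.1 < a2.1) (h12 : 0 < o s a1 b1 B0)
    (h13 : 0 < o s a a2 B0) (h14 : 0 < o s b1 b0 B1) (h15 : 0 < o s b1 B0 B1) :
    0 < o s a2 b0 B1 ∧ 0 < o s b0 B1 b1 ∧ 0 < o s B1 b1 a2 ∧ 0 < o s b1 a2 b0 ∧ 0 < o s b1 a2 B0 ∧ 0 < o s a2 B0 b0 ∧ 0 < o s B0 b0 B1 := by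
  refine ⟨?_, ?_, ?_, ?_, ?_, ?_, ?_⟩
  · have k1 : 0 < o s a1 a2 B1 := A4 (oc' h9) h8 h5
    have k2 : 0 < o s a a2 a1 := N1b h13 h10 h2 h7 h6
    have k3 : 0 < o s a1 a b1 := N1b (oc' h6) k1 h8 (oc' k2) h5
    have k4 : 0 < o s a b1 B0 := A4 h12 h2 (oc k3)
    have k5 : 0 < o s b1 a2 B0 := N0a h15 (oc h12) (oc' h9) (oc h8) (oc' h5)
    have k6 : 0 < o s B0 B1 a2 := N0b (oc' h10) (oc' k4) (oc' h13) (oc h15) (oc' k5)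
    have k7 : a2.1 < B0.1 := P13 h11 (oc h13) (oc h7) (oc' k6) h1
    have k8 : 0 < o s a1 a2 B0 := A4 k5 h12 h5
    have k9 : a.1 < B0.1 := lt_trans h11 k7
    have k10 : a1.1 < B0.1 := P15 k7 (oc' h13) (oc' k8) k9 (oc' h2)
    have k11 : a.1 < B1.1 := lt_trans h11 h1
    have k12 : B1.1 < B0.1 := S0a k11 h1 (oc h10) (oc' h7) (oc k6)
    have k13 : 0 < o s a1 B1 B0 := N1a (oc' h6) h8 (oc h2) k3 h12
    have k14 : 0 < o s B0 b0 B1 := S0b h4 k10 k12 (oc h3) (oc' k13)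
    have k15 : 0 < o s B1 a2 b0 := N0b (oc h9) (oc' h15) (oc' h14) (oc k6) (oc' k14)
    exact (oc k15)
  · exact (oc h14)
  · exact (oc h9)
  · have k16 : 0 < o s b1 a2 B0 := N0a h15 (oc h12) (oc' h9) (oc h8) (oc' h5)
    have k17 : 0 < o s a1 a2 B1 := A4 (oc' h9) h8 h5
    have k18 : 0 < o s a a2 a1 := N1b h13 h10 h2 h7 h6
    have k19 : 0 < o s a1 a b1 := N1b (oc' h6) k17 h8 (oc' k18) h5
    have k20 : 0 < o s a b1 B0 := A4 h12 h2 (oc k19)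
    have k21 : 0 < o s B0 B1 a2 := N0b (oc' h10) (oc' k20) (oc' h13) (oc h15) (oc' k16)
    have k22 : a2.1 < B0.1 := P13 h11 (oc h13) (oc h7) (oc' k21) h1
    have k23 : 0 < o s a1 a2 B0 := A4 k16 h12 h5
    have k24 : a.1 < B0.1 := lt_trans h11 k22
    have k25 : a1.1 < B0.1 := P15 k22 (oc' h13) (oc' k23) k24 (oc' h2)
    have k26 : a.1 < B1.1 := lt_trans h11 h1
    have k27 : B1.1 < B0.1 := S0a k26 h1 (oc h10) (oc' h7) (oc k21)
    have k28 : b1.1 < B0.1 := P15 k22 k21 (oc' k16) k27 (oc h15)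
    have k29 : 0 < o s B0 b0 b1 := S0b h4 k25 k28 (oc h3) (oc' h12)
    have k30 : 0 < o s b1 a2 b0 := N1b (oc' h9) h15 h14 k16 (oc' k29)
    exact k30
  · have k31 : 0 < o s b1 a2 B0 := N0a h15 (oc h12) (oc' h9) (oc h8) (oc' h5)
    exact k31
  · have k32 : 0 < o s a1 a2 B1 := A4 (oc' h9) h8 h5
    have k33 : 0 < o s a a2 a1 := N1b h13 h10 h2 h7 h6
    have k34 : 0 < o s a1 a b1 := N1b (oc' h6) k32 h8 (oc' k33) h5
    have k35 : 0 < o s a b1 B0 := A4 h12 h2 (oc k34)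
    have k36 : 0 < o s b1 a2 B0 := N0a h15 (oc h12) (oc' h9) (oc h8) (oc' h5)
    have k37 : 0 < o s B0 B1 a2 := N0b (oc' h10) (oc' k35) (oc' h13) (oc h15) (oc' k36)
    have k38 : a2.1 < B0.1 := P13 h11 (oc h13) (oc h7) (oc' k37) h1
    have k39 : 0 < o s a1 a2 B0 := A4 k36 h12 h5
    have k40 : a.1 < B0.1 := lt_trans h11 k38
    have k41 : a1.1 < B0.1 := P15 k38 (oc' h13) (oc' k39) k40 (oc' h2)
    have k42 : 0 < o s B0 b0 a2 := S0b h4 k41 k38 (oc h3) (oc' k39)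
    exact (oc' k42)
  · have k43 : 0 < o s a1 a2 B1 := A4 (oc' h9) h8 h5
    have k44 : 0 < o s a a2 a1 := N1b h13 h10 h2 h7 h6
    have k45 : 0 < o s a1 a b1 := N1b (oc' h6) k43 h8 (oc' k44) h5
    have k46 : 0 < o s a b1 B0 := A4 h12 h2 (oc k45)
    have k47 : 0 < o s b1 a2 B0 := N0a h15 (oc h12) (oc' h9) (oc h8) (oc' h5)
    have k48 : 0 < o s B0 B1 a2 := N0b (oc' h10) (oc' k46) (oc' h13) (oc h15) (oc' k47)
    have k49 : a2.1 < B0.1 := P13 h11 (oc h13) (oc h7) (oc' k48) h1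
    have k50 : 0 < o s a1 a2 B0 := A4 k47 h12 h5
    have k51 : a.1 < B0.1 := lt_trans h11 k49
    have k52 : a1.1 < B0.1 := P15 k49 (oc' h13) (oc' k50) k51 (oc' h2)
    have k53 : a.1 < B1.1 := lt_trans h11 h1
    have k54 : B1.1 < B0.1 := S0a k53 h1 (oc h10) (oc' h7) (oc k48)
    have k55 : 0 < o s a1 B1 B0 := N1a (oc' h6) h8 (oc h2) k45 h12
    have k56 : 0 < o s B0 b0 B1 := S0b h4 k52 k54 (oc h3) (oc' k55)
    exact k56

theorem t2_q {s : ℝ} (a1 b0 B0 b1 : Pt)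
    (h1 : 0 < o s a1 B0 b0) (h2 : 0 < o s a1 b1 b0) (h3 : 0 < o s a1 b1 B0)
    (h4 : 0 < o s b0 b1 B0) :
    0 < o s a1 b1 B0 ∧ 0 < o s b1 B0 b0 ∧ 0 < o s B0 b0 a1 ∧ 0 < o s b0 a1 b1 := by
  refine ⟨?_, ?_, ?_, ?_⟩
  · exact h3
  · exact (oc h4)
  · exact (oc h1)
  · exact (oc' h2)

theorem t2_x {s : ℝ} (a a1 b0 B0 b1 z : Pt)
    (h1 : a1.1 < b0.1) (h2 : a1.1 < b1.1) (h3 : 0 < o s a a1 B0) (h4 : 0 < o s a b1 a1)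
    (h5 : b0.1 < B0.1) (h6 : 0 < o s a1 b1 b0) (h7 : 0 < o s a1 b1 B0) (h8 : 0 < o s a1 b1 z)
    (h9 : 0 < o s b0 a1 z) :
    a.1 < z.1 := by
  have k1 : a1.1 < B0.1 := lt_trans h1 h5
  have k2 : a.1 < a1.1 := S1a h2 k1 (oc' h4) h7 (oc h3)
  have k3 : a1.1 < z.1 := P03 h2 h8 h6 (oc h9) h1
  have k4 : a.1 < z.1 := lt_trans k2 k3
  exact k4

theorem s2m {s : ℝ} (a1 b0 B0 b1 B1 : Pt)
    (h1 : 0 < o s a1 b1 B1) (h2 : 0 < o s b0 B1 B0) :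
    0 < o s a1 b1 B1 ∧ 0 < o s B1 B0 b0 := by
  refine ⟨?_, ?_⟩
  · exact h1
  · exact (oc h2)

theorem s2p {s : ℝ} (a a1 b0 B0 b1 B1 : Pt)
    (h1 : 0 < o s a b1 b0) (h2 : 0 < o s a b1 B0) (h3 : 0 < o s a B1 b0) (h4 : 0 < o s a B1 B0)
    (h5 : 0 < o s b0 b1 B0) (h6 : 0 < o s b1 B1 b0) (h7 : 0 < o s b0 B0 B1)
    (h8 : 0 < o s b1 B0 B1) :
    0 < o s B1 b0 a1 := by
  have k1 : 0 < o s B0 a b0 := N1b (oc' h2) (oc h8) (oc' h5) (oc' h4) (oc h7)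
  have k2 : 0 < o s b0 a B0 := N1b (oc' h3) (oc' h6) h7 (oc' h1) h5
  exact absurd k1 (oneg (oc' k2))

theorem al_0 {s : ℝ} (a1 b0 B0 b1 B1 : Pt)
    (h1 : 0 < o s a1 b1 B1) (h2 : 0 < o s a1 b1 b0) (h3 : 0 < o s b0 b1 B0)
    (h4 : 0 < o s b0 B0 B1) (h5 : 0 < o s b1 B1 B0) :
    0 < o s a1 b1 B0 := by
  have k1 : 0 < o s b0 b1 B1 := A4 (oc' h5) h4 h3
  have k2 : 0 < o s b1 B0 a1 := N0b h5 (oc k1) (oc h1) (oc h3) (oc h2)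
  exact (oc' k2)

theorem al_q {s : ℝ} (a a0 a1 b0 B0 b1 B1 : Pt)
    (h1 : 0 < o s a a1 B0) (h2 : 0 < o s a0 b0 B0) (h3 : 0 < o s a0 a1 b0) (h4 : 0 < o s a b1 B0)
    (h5 : 0 < o s a1 b1 B1) (h6 : 0 < o s a B1 B0) (h7 : 0 < o s a1 b1 b0) (h8 : 0 < o s b0 b1 B0)
    (h9 : 0 < o s b0 B0 B1) (h10 : 0 < o s b1 B1 B0) :
    0 < o s a0 b0 B0 ∧ 0 < o s b0 B0 B1 ∧ 0 < o s B0 B1 a0 ∧ 0 < o s B1 a0 b0 := by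
  refine ⟨?_, ?_, ?_, ?_⟩
  · exact h2
  · exact h9
  · have k1 : 0 < o s b0 b1 B1 := A4 (oc' h10) h9 h8
    have k2 : 0 < o s b1 B0 a1 := N0b h10 (oc k1) (oc h5) (oc h8) (oc h7)
    have k3 : 0 < o s B0 b0 a := N0a (oc' h4) (oc' h6) (oc' h8) (oc' h10) (oc h9)
    have k4 : 0 < o s B0 b0 a1 := N1b (oc' h8) (oc' h4) (oc k2) k3 (oc' h1)
    have k5 : 0 < o s a0 a1 B0 := A4 (oc k4) h2 h3
    have k6 : 0 < o s B0 a1 B1 := N0b (oc' h1) (oc' h4) (oc' h6) (oc k2) (oc' h10)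
    have k7 : 0 < o s B0 B1 a0 := N0a (oc' h2) (oc' k5) (oc h9) k4 k6
    exact k7
  · have k8 : 0 < o s b0 b1 B1 := A4 (oc' h10) h9 h8
    have k9 : 0 < o s b1 B0 a1 := N0b h10 (oc k8) (oc h5) (oc h8) (oc h7)
    have k10 : 0 < o s B0 a1 B1 := N0b (oc' h1) (oc' h4) (oc' h6) (oc k9) (oc' h10)
    have k11 : 0 < o s B1 b0 a1 := N1b (oc' k8) (oc h10) (oc' h5) (oc' h9) (oc' k10)
    have k12 : 0 < o s B0 b0 a := N0a (oc' h4) (oc' h6) (oc' h8) (oc' h10) (oc h9)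
    have k13 : 0 < o s B0 b0 a1 := N1b (oc' h8) (oc' h4) (oc k9) k12 (oc' h1)
    have k14 : 0 < o s b0 B1 a0 := N1a (oc k11) h9 (oc' h3) (oc k13) (oc h2)
    exact (oc k14)

theorem al_b1 {s : ℝ} (B0 b1 B1 : Pt)
    (h1 : 0 < o s b1 B1 B0) (h2 : 0 < o s B0 B1 b1) :
    False := by
  exact absurd h1 (oneg (oc' h2))

theorem al_dn {s : ℝ} (a a0 a1 b0 B0 b1 B1 z : Pt)
    (h1 : 0 < o s a a1 B0) (h2 : 0 < o s a0 a1 B0) (h3 : 0 < o s a b1 B0) (h4 : 0 < o s a B1 B0)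
    (h5 : 0 < o s b0 b1 B0) (h6 : 0 < o s b1 B1 B0) (h7 : 0 < o s a1 b1 B0) (h8 : 0 < o s a0 b0 z)
    (h9 : 0 < o s b0 B0 z) (h10 : 0 < o s B0 B1 z) (h11 : 0 < o s B1 a0 z) (h12 : 0 < o s a z B1) :
    False := by
  have k1 : 0 < o s a z B0 := A4 (oc h10) h4 h12
  have k2 : 0 < o s B0 a1 B1 := N0b (oc' h1) (oc' h3) (oc' h4) (oc' h7) (oc' h6)
  have k3 : 0 < o s B0 a1 z := N0b (oc' h1) (oc' h4) (oc' k1) k2 h10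
  have k4 : 0 < o s B0 b1 z := N0b (oc' h3) (oc' h4) (oc' k1) (oc' h6) h10
  have k5 : 0 < o s B0 b0 a1 := N0a (oc' h7) k3 (oc' h5) k4 (oc h9)
  have k6 : 0 < o s B0 b0 a := N0a (oc' h3) (oc' k1) (oc' h5) k4 (oc h9)
  have k7 : 0 < o s a z b0 := A4 (oc h9) (oc' k6) k1
  have k8 : 0 < o s z b0 B1 := N1b (oc k7) (oc k1) (oc h12) (oc' h9) (oc' h10)
  have k9 : 0 < o s z a a0 := N1a (oc k7) (oc h12) (oc' h8) k8 (oc' h11)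
  have k10 : 0 < o s a a0 b0 := A4 (oc' h8) k7 (oc k9)
  have k11 : 0 < o s a B1 b0 := N0b h12 k1 k7 h4 (oc' k6)
  have k12 : 0 < o s a0 b0 B1 := A4 k8 (oc h11) h8
  have k13 : 0 < o s B1 a a0 := N0a h11 (oc' k12) (oc' h12) (oc' k8) (oc k11)
  have k14 : 0 < o s a a0 B0 := N1b k10 k11 (oc' k6) (oc k13) h4
  have k15 : 0 < o s B0 b0 a0 := N1b k5 (oc' h1) (oc' h2) k6 (oc' k14)
  have k16 : 0 < o s b0 B0 a0 := N0b (oc k6) (oc' k7) (oc' k10) h9 (oc h8)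
  exact absurd k15 (oneg (oc k16))

theorem ald_up {s : ℝ} (a a0 b0 B0 b1 B1 d : Pt)
    (h1 : a0.1 < b0.1) (h2 : a0.1 < d.1) (h3 : 0 < o s a0 b0 B0) (h4 : b0.1 < B0.1)
    (h5 : 0 < o s a b1 B0) (h6 : 0 < o s a B1 B0) (h7 : 0 < o s b0 b1 B0) (h8 : 0 < o s b0 B0 B1)
    (h9 : 0 < o s b1 B1 B0) (h10 : a.1 < a0.1) (h11 : 0 < o s a a0 d) :
    0 < o s B0 B1 d ∧ 0 < o s B1 d a0 ∧ 0 < o s d a0 b0 := by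
  refine ⟨?_, ?_, ?_⟩
  · have k1 : a0.1 < B0.1 := lt_trans h1 h4
    have k2 : a.1 < B0.1 := lt_trans h10 k1
    have k3 : 0 < o s B0 b0 a := N0a (oc' h5) (oc' h6) (oc' h7) (oc' h9) (oc h8)
    have k4 : 0 < o s B0 a0 a := S0b k1 h4 k2 (oc' h3) k3
    have k5 : 0 < o s a0 B0 d := P02 h2 (oc h11) h10 (oc k4) k1
    have k6 : a.1 < d.1 := lt_trans h10 h2
    have k7 : 0 < o s a B0 d := S1b k2 h10 k6 (oc' k4) h11
    have k8 : 0 < o s B0 B1 a0 := N0a (oc' h3) k4 (oc h8) k3 (oc' h6)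
    have k9 : 0 < o s B0 B1 d := N0a (oc k5) (oc k7) k8 k4 (oc' h6)
    exact k9
  · have k10 : 0 < o s B0 b0 a := N0a (oc' h5) (oc' h6) (oc' h7) (oc' h9) (oc h8)
    have k11 : 0 < o s a B1 b0 := A4 (oc h8) (oc' k10) h6
    have k12 : a.1 < b0.1 := lt_trans h10 h1
    have k13 : 0 < o s b0 a0 a := P11 h1 (oc h3) k12 (oc k10) h4
    have k14 : 0 < o s b0 B1 a0 := N1a (oc' k11) h8 k13 (oc k10) (oc h3)
    have k15 : 0 < o s a B1 a0 := A4 k14 (oc' k13) k11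
    have k16 : 0 < o s a0 b0 d := P02 h2 (oc h11) h10 (oc k13) h1
    have k17 : 0 < o s a0 B1 d := N1a (oc' k15) (oc' k14) (oc h11) (oc k13) k16
    exact (oc k17)
  · have k18 : a.1 < b0.1 := lt_trans h10 h1
    have k19 : 0 < o s B0 b0 a := N0a (oc' h5) (oc' h6) (oc' h7) (oc' h9) (oc h8)
    have k20 : 0 < o s b0 a0 a := P11 h1 (oc h3) k18 (oc k19) h4
    have k21 : 0 < o s a0 b0 d := P02 h2 (oc h11) h10 (oc k20) h1
    exact (oc' k21)

theorem ald_dn {s : ℝ} (a a0 a1 b0 B0 b1 B1 d : Pt)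
    (h1 : 0 < o s a a1 B0) (h2 : 0 < o s a0 b0 B0) (h3 : 0 < o s a0 a1 b0) (h4 : 0 < o s a b1 B0)
    (h5 : 0 < o s a B1 B0) (h6 : 0 < o s b0 b1 B0) (h7 : 0 < o s b0 B0 B1) (h8 : 0 < o s b1 B1 B0)
    (h9 : 0 < o s a1 b1 B0) (h10 : 0 < o s a d B1) (h11 : 0 < o s B0 B1 d) :
    0 < o s B1 d a0 ∧ 0 < o s d a0 b0 := by
  refine ⟨?_, ?_⟩
  · have k1 : 0 < o s B0 b0 a := N0a (oc' h4) (oc' h5) (oc' h6) (oc' h8) (oc h7)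
    have k2 : 0 < o s B0 b0 a1 := N1b (oc' h6) (oc' h4) (oc' h9) k1 (oc' h1)
    have k3 : 0 < o s B0 a1 B1 := N0b (oc' h1) (oc' h4) (oc' h5) (oc' h9) (oc' h8)
    have k4 : 0 < o s a1 B1 b0 := A4 (oc h7) (oc' k2) (oc k3)
    have k5 : 0 < o s b0 B1 a0 := N1a (oc' k4) h7 (oc' h3) (oc k2) (oc h2)
    have k6 : 0 < o s a0 a1 B0 := A4 (oc k2) h2 h3
    have k7 : 0 < o s B0 B1 a0 := N0a (oc' h2) (oc' k6) (oc h7) k2 k3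
    have k8 : 0 < o s B0 a0 a := N1b (oc' k6) k2 (oc' h1) (oc' h2) k1
    have k9 : 0 < o s a B1 a0 := A4 k7 (oc' k8) h5
    have k10 : 0 < o s a B1 b0 := A4 (oc h7) (oc' k1) h5
    have k11 : 0 < o s B1 d b0 := N0a (oc' h7) (oc k10) (oc h11) (oc h5) (oc' h10)
    have k12 : 0 < o s B1 d a0 := N0a (oc k5) (oc k9) k11 (oc k10) (oc' h10)
    exact k12
  · have k13 : 0 < o s a d B0 := A4 (oc h11) h5 h10
    have k14 : 0 < o s B0 b0 a := N0a (oc' h4) (oc' h5) (oc' h6) (oc' h8) (oc h7)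
    have k15 : 0 < o s B0 d b0 := N1a (oc' k13) h11 k14 (oc' h5) (oc h7)
    have k16 : 0 < o s B0 b0 a1 := N1b (oc' h6) (oc' h4) (oc' h9) k14 (oc' h1)
    have k17 : 0 < o s B0 a1 B1 := N0b (oc' h1) (oc' h4) (oc' h5) (oc' h9) (oc' h8)
    have k18 : 0 < o s B0 a1 d := N0b (oc' h1) (oc' h5) (oc' k13) k17 h11
    have k19 : 0 < o s a1 d b0 := A4 k15 (oc' k16) (oc k18)
    have k20 : 0 < o s b0 d a0 := N1a (oc' k19) (oc' k15) (oc' h3) (oc k16) (oc h2)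
    exact (oc k20)

theorem II_q {s : ℝ} (a2 b0 B0 b1 B1 : Pt)
    (h1 : a2.1 < b1.1) (h2 : b0.1 < B0.1) (h3 : 0 < o s a2 B1 b1) (h4 : b1.1 < B1.1)
    (h5 : 0 < o s b0 b1 B0) (h6 : 0 < o s b0 B0 B1) (h7 : 0 < o s b1 B1 B0)
    (h8 : 0 < o s B0 b1 a2) :
    0 < o s a2 B1 B0 ∧ 0 < o s B1 B0 b1 ∧ 0 < o s B0 b1 a2 ∧ 0 < o s b1 a2 B1 := by
  refine ⟨?_, ?_, ?_, ?_⟩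
  · have k1 : b1.1 < B0.1 := P10 (oc h8) h7 h1 (oc' h3) h4
    have k2 : a2.1 < B0.1 := lt_trans h1 k1
    have k3 : B0.1 < B1.1 := S0a h2 k1 (oc h6) (oc' h5) (oc' h7)
    have k4 : 0 < o s B0 a2 B1 := P12 k2 h8 k1 (oc' h7) k3
    exact (oc k4)
  · exact (oc h7)
  · exact h8
  · exact (oc' h3)

theorem II_b0 {s : ℝ} (b0 B0 B1 : Pt)
    (h1 : 0 < o s b0 B0 B1) (h2 : 0 < o s B1 B0 b0) :
    False := by
  exact absurd h1 (oneg (oc' h2))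

theorem II_d {s : ℝ} (a a2 B0 b1 B1 d : Pt)
    (h1 : a2.1 < b1.1) (h2 : a2.1 < d.1) (h3 : 0 < o s a2 B1 b1) (h4 : b1.1 < B1.1)
    (h5 : 0 < o s b1 B1 B0) (h6 : a.1 < a2.1) (h7 : 0 < o s a a2 B0) (h8 : 0 < o s B0 b1 a2)
    (h9 : 0 < o s a d a2) (h10 : 0 < o s a d B1) (h11 : 0 < o s B0 d B1) :
    0 < o s a2 d B1 ∧ 0 < o s d B1 B0 ∧ 0 < o s b1 a2 d := by
  refine ⟨?_, ?_, ?_⟩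
  · have k1 : a.1 < d.1 := lt_trans h6 h2
    have k2 : a.1 < b1.1 := lt_trans h6 h1
    have k3 : b1.1 < B0.1 := P10 (oc h8) h5 h1 (oc' h3) h4
    have k4 : a.1 < B0.1 := lt_trans k2 k3
    have k5 : 0 < o s a d B0 := S1b k1 h6 k4 h9 h7
    have k6 : a2.1 < B0.1 := lt_trans h1 k3
    have k7 : 0 < o s a2 d B0 := P02 k6 (oc h7) h6 (oc' h9) h2
    have k8 : 0 < o s d B1 a2 := N1b (oc h10) (oc k5) (oc h9) (oc h11) (oc k7)
    exact (oc' k8)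
  · exact (oc h11)
  · have k9 : b1.1 < B0.1 := P10 (oc h8) h5 h1 (oc' h3) h4
    have k10 : a2.1 < B0.1 := lt_trans h1 k9
    have k11 : 0 < o s a2 b1 a := P04 k10 (oc h7) (oc' h8) h6 h1
    have k12 : 0 < o s a2 d b1 := P02 h1 k11 h6 (oc' h9) h2
    exact (oc' k12)
variable {s x0 : ℝ} {A B : Finset Pt} {a : Pt} {c : ℕ → Pt} {t : ℕ}

theorem Pos.pos {z : Pt} {n : ℕ} (h : Pos s B a c t z n) : 1 ≤ n ∧ n < 2 * t := by
  rcases h with ⟨k, h1, h2, h3, -⟩ | ⟨k, h1, h2, -, -⟩ <;> omega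

/-- wedge `k` contains exactly the two points `b`, `e`, with `b` to the left of `e` -/
def Two (s : ℝ) (B : Finset Pt) (a : Pt) (c : ℕ → Pt) (k : ℕ) (b e : Pt) : Prop :=
  b ∈ B ∧ e ∈ B ∧ Inw s a c k b ∧ Inw s a c k e ∧ b.1 < e.1 ∧
    ∀ z ∈ B, Inw s a c k z → z = b ∨ z = e

theorem Two.lm {k : ℕ} {b e : Pt} (T : Two s B a c k b e) : Lm s B a c k b := by
  obtain ⟨h1, h2, h3, h4, h5, h6⟩ := T
  refine ⟨h1, h3, fun z hz h hne => ?_⟩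
  rcases h6 z hz h with rfl | rfl
  · exact absurd rfl hne
  · exact h5

theorem WStar.two (S : WStar s x0 A B a c t) {k : ℕ} (hk : k < t) {p q b e : Pt}
    (ep : c k = p) (eq : c (k + 1) = q) (T : Two s B a c k b e) :
    b ∈ B ∧ e ∈ B ∧ b.1 < e.1 ∧ 0 < o s a b p ∧ 0 < o s a q b ∧ 0 < o s a e p ∧ 0 < o s a q e ∧
    0 < o s p b e ∧ 0 < o s q e b ∧ 0 < o s p q b ∧ 0 < o s p q e ∧ a.1 < b.1 ∧ a.1 < e.1 ∧
    Pos s B a c t b (2 * k + 1) ∧ Pos s B a c t e (2 * k + 1) := by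
  subst ep eq
  have l := T.lm
  obtain ⟨h1, h2, h3, h4, h5, h6⟩ := T
  have f := S.F1 hk l h2 h4 (by rintro rfl; exact lt_irrefl _ h5)
  exact ⟨h1, h2, h5, h3.1, h3.2, h4.1, h4.2, f.1, f.2, S.beyond hk h1 h3, S.beyond hk h2 h4,
    S.Br h1, S.Br h2, S.posb hk h1 h3, S.posb hk h2 h4⟩

theorem WStar.F2x (S : WStar s x0 A B a c t) {k : ℕ} (hk : k < t) {p q b z : Pt}
    (ep : c k = p) (eq : c (k + 1) = q)
    (hb : Lm s B a c k b) (hz : z ∈ A ∪ B) (z1 : 0 < o s a z p)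
    (z2 : 0 < o s a z q) : 0 < o s q z b := by
  subst ep eq; exact S.F2 hk hb hz z1 z2

theorem WStar.F2y (S : WStar s x0 A B a c t) {k : ℕ} (hk : k < t) {p q b z : Pt}
    (ep : c k = p) (eq : c (k + 1) = q)
    (hb : Lm s B a c k b) (hz : z ∈ A ∪ B) (z1 : 0 < o s a p z)
    (z2 : 0 < o s a q z) : 0 < o s p b z := by
  subst ep eq; exact S.F2' hk hb hz z1 z2

/-- points of `B` inside a quadrilateral with one vertex `c i` -/
theorem WStar.empU (S : WStar s x0 A B a c t) {i : ℕ} {v1 v2 v3 v4 z : Pt} {n2 n3 n4 : ℕ}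
    (e0 : c i = v1) (hit : i < t) (p2 : Pos s B a c t v2 n2) (p3 : Pos s B a c t v3 n3)
    (p4 : Pos s B a c t v4 n4) (l : 2 * i + 1 ≤ n2 ∧ 2 * i + 1 ≤ n3 ∧ 2 * i + 1 ≤ n4)
    (hz : z ∈ B) (e1 : 0 < o s v1 v2 z) (e2 : 0 < o s v2 v3 z)
    (e3 : 0 < o s v3 v4 z) (e4 : 0 < o s v4 v1 z) :
    ∃ n, Pos s B a c t z n ∧ 2 * i + 1 ≤ n := by
  subst e0
  obtain ⟨n, hn⟩ := S.pos (Finset.mem_union_right A hz) (S.Br hz)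
  refine ⟨n, hn, ?_⟩
  have h1 := hn.pos
  by_contra hc
  have hi : 1 ≤ i := by omega
  have p1 := S.posc hi hit
  rcases Nat.lt_or_ge n (2 * i) with h | h
  · exact cone_up a _ v2 v3 v4 z e1 e2 e3 e4 (S.ord hn p1 (by omega)) (S.ord hn p2 (by omega))
      (S.ord hn p3 (by omega)) (S.ord hn p4 (by omega))
  · have : n = 2 * i := by omega
    subst this
    exact o13 e1 hn.isc.symm

/-- points in the two middle wedges -/
theorem WStar.mid (S : WStar s x0 A B a c t) {i n : ℕ} {a1 b0 B0 b1 B1 z : Pt}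
    (e1 : c (i + 1) = a1) (T0 : Two s B a c i b0 B0) (T1 : Two s B a c (i + 1) b1 B1)
    (hn : Pos s B a c t z n) (h1 : 2 * i + 1 ≤ n) (h2 : n ≤ 2 * i + 3) :
    z = b0 ∨ z = B0 ∨ z = a1 ∨ z = b1 ∨ z = B1 := by
  have : n = 2 * i + 1 ∨ n = 2 * (i + 1) ∨ n = 2 * (i + 1) + 1 := by omega
  rcases this with rfl | rfl | rfl
  · have := T0.2.2.2.2.2 z hn.isb.1 hn.isb.2
    tauto
  · have := hn.isc
    rw [e1] at this; tauto
  · have := T1.2.2.2.2.2 z hn.isb.1 hn.isb.2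
    tauto

theorem WStar.alpha (S : WStar s x0 A B a c t) {i : ℕ} {b0 B0 b1 B1 : Pt} (hi : i + 1 < t)
    (hx : 1 ≤ i ∨ i + 2 < t)
    (T0 : Two s B a c i b0 B0) (T1 : Two s B a c (i + 1) b1 B1)
    (r1 : 0 < o s b0 b1 B0) (r2 : 0 < o s b1 B1 b0) (r3 : 0 < o s b0 B0 B1)
    (r4 : 0 < o s b1 B1 B0) : i = 0 ∧ t = 3 ∧ 0 < o s B0 (c 2) b1 ∧ 0 < o s (c 1) b0 (c 2) ∧
      ∀ d ∈ B, Inw s a c 2 d → 0 < o s B0 d B1 := by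
  classical
  have C := S.toCfg
  have ha := S.ha
  obtain ⟨a0, e0⟩ : ∃ x, c i = x := ⟨_, rfl⟩
  obtain ⟨a1, e1⟩ : ∃ x, c (i + 1) = x := ⟨_, rfl⟩
  obtain ⟨a2, e2⟩ : ∃ x, c (i + 2) = x := ⟨_, rfl⟩
  have m0 := S.hc i (by omega)
  have m1 := S.hc (i + 1) (by omega)
  have m2 := S.hc (i + 2) (by omega)
  have hr1 := S.cr (i + 1) (by omega) (by omega)
  have P1 := S.posc (k := i + 1) (by omega) (by omega)
  have d0 := S.cons i (by omega)
  have d1 := S.cons (i + 1) (by omega)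
  rw [e0] at m0 d0
  rw [e1] at m1 hr1 P1 d0 d1
  rw [e2] at m2 d1
  obtain ⟨M0, M0', _, _, _, _, _, _, _, _, _, _, _, P0, P0'⟩ := S.two (by omega) e0 e1 T0
  obtain ⟨M1, M1', _, _, _, _, _, _, _, _, _, _, _, Q1, Q1'⟩ := S.two (by omega) e1 e2 T1
  have := S.ord P0 Q1 (by omega)
  have := S.ord P0 Q1' (by omega)
  have := S.ord P0' Q1 (by omega)
  have := S.ord P0' Q1' (by omega)
  have k1 : 0 < o s a1 b1 b0 := by
    by_cases h : i + 2 < t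
    · have P2 := S.posc (k := i + 2) (by omega) h
      rw [e2] at P2
      exact S.F2y hi e1 e2 T1.lm asx asx (S.ord P0 P2 (by omega))
    · have P2 := S.posc (k := i) (by omega) (by omega)
      rw [e0] at P2
      exact S.F2x (by omega) e0 e1 T0.lm asx (S.ord P2 Q1 (by omega)) asx
  have k2 := al_0 a1 b0 B0 b1 B1 asx asx asx asx asx
  obtain ⟨q1, q2, q3, q4⟩ := al_q a a0 a1 b0 B0 b1 B1 asx asx asx asx asx asx asx asx asx asx
  have emq : ∀ z ∈ B, 0 < o s a0 b0 z → 0 < o s b0 B0 z → 0 < o s B0 B1 z → 0 < o s B1 a0 z →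
      False := by
    intro z mz g1 g2 g3 g4
    obtain ⟨n, hn, hl⟩ := S.empU e0 (by omega) P0 P0' Q1' (by omega) mz g1 g2 g3 g4
    rcases Nat.lt_or_ge (2 * i + 3) n with h | h
    · have := S.ord Q1' hn (by omega)
      exact al_dn a a0 a1 b0 B0 b1 B1 z asx asx asx asx asx asx asx asx asx asx asx asx
    · rcases S.mid e1 T0 T1 hn hl h with rfl | rfl | rfl | rfl | rfl
      · exact o23 g1 rfl
      · exact o23 g2 rfl
      · have := C.hA _ m1
        have := C.hB _ mz
        linarith
      · exact al_b1 B0 z B1 asx asx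
      · exact o23 g3 rfl
  have hn : ∀ d ∈ B, ∃ n, Pos s B a c t d n := fun d hd =>
    S.pos (Finset.mem_union_right _ hd) (S.Br hd)
  have hlow : ∀ d ∈ B, ∀ n, Pos s B a c t d n → 2 * i + 1 ≤ n := by
    intro d md n hn
    by_contra hc
    have h1 := hn.pos
    have R0 := S.posc (k := i) (by omega) (by omega)
    have hr0 := S.cr i (by omega) (by omega)
    rw [e0] at R0 hr0
    have : n ≠ 2 * i := by
      rintro rfl
      have := hn.isc
      rw [e0] at this
      subst this
      have := C.hA _ m0
      have := C.hB _ md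
      linarith
    have := S.ord hn R0 (by omega)
    obtain ⟨w1, w2, w3⟩ := ald_up a a0 b0 B0 b1 B1 d asx asx asx asx asx asx asx asx asx asx asx
    exact H1A_31 C a0 b0 B0 B1 d asx asx asx asx asx asx asx asx asx asx asx asx emq
  have hrest : ∃ d ∈ B, d ≠ b0 ∧ d ≠ B0 ∧ d ≠ b1 ∧ d ≠ B1 := by
    by_contra hc
    push Not at hc
    have : B ⊆ {b0, B0, b1, B1} := by
      intro d hd
      simp only [Finset.mem_insert, Finset.mem_singleton]
      have := hc d hd
      tauto
    have h1 := Finset.card_le_card this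
    have h2 := S.hcard
    have h3 := Finset.card_le_four (a := b0) (b := B0) (c := b1) (d := B1)
    omega
  have hbelow : ∀ d ∈ B, d ≠ b0 → d ≠ B0 → d ≠ b1 → d ≠ B1 → ∃ n, Pos s B a c t d n ∧
      2 * i + 5 ≤ n := by
    intro d md n1 n2 n3 n4
    obtain ⟨n, h⟩ := hn d md
    refine ⟨n, h, ?_⟩
    have hl := hlow d md n h
    by_contra hc
    have hda : d ∉ A := by
      intro hd
      have := C.hA _ hd
      have := C.hB _ md
      linarith
    have : n ≠ 2 * i + 4 := by
      rintro rfl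
      have := Pos.isc (k := i + 2) h
      rw [e2] at this
      subst this
      exact hda m2
    rcases S.mid e1 T0 T1 h hl (by omega) with h | h | h | h | h
    · exact n1 h
    · exact n2 h
    · exact hda (h ▸ m1)
    · exact n3 h
    · exact n4 h
  obtain ⟨d, md, n1, n2, n3, n4⟩ := hrest
  obtain ⟨n, hdn, hge⟩ := hbelow d md n1 n2 n3 n4
  have h2t : i + 2 < t := by have := hdn.pos; omega
  have P2 := S.posc (k := i + 2) (by omega) h2t
  have hr2 := S.cr (i + 2) (by omega) h2t
  rw [e2] at P2 hr2
  have := S.ord P0 P2 (by omega)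
  have := S.ord P0' P2 (by omega)
  have hD : ∀ d ∈ B, ∀ n, Pos s B a c t d n → 2 * i + 5 ≤ n → 0 < o s B0 d B1 := by
    intro d md n hn hge
    have := S.ord Q1' hn (by omega)
    rcases C.tot B0 asx d asx B1 asx
      (o23 (S.ord P0' hn (by omega))).symm (o23 q2) (o23 this) with g | g
    · exact g
    · obtain ⟨w2, w3⟩ := ald_dn a a0 a1 b0 B0 b1 B1 d asx asx asx asx asx asx asx asx asx asx asx
      exact (H1A_31 C a0 b0 B0 B1 d asx asx asx asx asx asx asx asx asx asx asx asx emq).elim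
  rcases C.tot B0 asx b1 asx a2 asx (o23 r1).symm
      (by rintro rfl; have := C.hB _ M0'; have := C.hA _ m2; linarith)
      (by rintro rfl; have := C.hB _ M1; have := C.hA _ m2; linarith) with g | g
  · exfalso
    have := hD d md n hdn hge
    have := S.ord P2 hdn (by omega)
    have := S.ord Q1' hdn (by omega)
    obtain ⟨v1, v2, v3, v4⟩ := II_q a2 b0 B0 b1 B1 asx asx asx asx asx asx asx asx
    obtain ⟨w1, w2, w3⟩ := II_d a a2 B0 b1 B1 d asx asx asx asx asx asx asx asx asx asx asx
    refine H1A_x1 C a2 B1 B0 b1 d asx asx asx asx asx asx asx asx asx asx asx asx ?_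
    intro z mz g1 g2 g3 g4
    obtain ⟨n, hn, hl, hh⟩ := S.emp4 (2 * i + 1) (2 * (i + 2)) a2 B1 B0 b1 z P2 Q1' P0' Q1 (by
        omega)
      asx (S.Br mz) g1 g2 g3 g4
    have : n ≠ 2 * (i + 2) := by
      rintro rfl
      have := hn.isc
      rw [e2] at this
      exact o13 g1 this.symm
    rcases S.mid e1 T0 T1 hn hl (by omega) with rfl | rfl | rfl | rfl | rfl
    · exact II_b0 z B0 B1 asx asx
    · exact o23 g2 rfl
    · have := C.hA _ m1
      have := C.hB _ mz
      linarith
    · exact o23 g3 rfl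
    · exact o23 g1 rfl
  · have key : 0 < o s a1 a2 b0 → False := by
      intro hG
      obtain ⟨v1, v2, v3, v4⟩ := t2_q a1 b0 B0 b1 asx asx asx asx
      refine H1 C b1 B0 b0 a1 a2 asx asx asx asx asx asor asor asx asx asx asx asx asx asx ?_
      intro z mz g1 g2 g3 g4
      have az := t2_x a a1 b0 B0 b1 z asx asx asx asx asx asx asx asx asx
      obtain ⟨n, hn, hl, hh⟩ := S.emp4 (2 * i + 1) (2 * i + 3) b1 B0 b0 a1 z Q1 P0' P0 P1 (by
          omega)
        mz az g1 g2 g3 g4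
      rcases S.mid e1 T0 T1 hn hl (by omega) with rfl | rfl | rfl | rfl | rfl
      · exact o23 g2 rfl
      · exact o23 g1 rfl
      · exact o23 g3 rfl
      · exact o13 g1 rfl
      · exact absurd g1 (oneg asx)
    have hit : i = 0 ∧ t = 3 := by
      by_contra hc
      have := S.G h2t (by omega) T0.lm
      rw [e1, e2] at this
      exact key this
    obtain ⟨rfl, rfl⟩ := hit
    refine ⟨rfl, rfl, by rw [show c 2 = a2 from e2]; exact g, ?_, ?_⟩
    · rw [show c 2 = a2 from e2, show c 1 = a1 from e1]
      rcases C.tot a1 asx b0 asx a2 asx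
        (by rintro rfl; have := C.hB _ M0; have := C.hA _ m1; linarith) (o23 d1).symm
        (by rintro rfl; have := C.hB _ M0; have := C.hA _ m2; linarith) with g | g
      · exact g
      · exact (key asx).elim
    · intro d md hd
      exact hD d md 5 (S.posb (k := 2) (by omega) md hd) (by omega)

end Part3

section Part4

theorem bad_d {s : ℝ} (a a2 B0 b1 B1 d : Pt)
    (h1 : 0 < o s a a2 B1) (h2 : 0 < o s a2 B1 b1) (h3 : 0 < o s a a2 B0) (h4 : 0 < o s b1 B1 B0)
    (h5 : 0 < o s B0 a2 b1) (h6 : 0 < o s a d a2) (h7 : 0 < o s B0 d B1) (h8 : 0 < o s a2 d b1) :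
    0 < o s b1 d B1 := by
  have k1 : 0 < o s a2 B1 B0 := A4 h4 (oc h5) h2
  have k2 : 0 < o s a2 b1 a := N0b h2 k1 (oc h1) (oc h5) (oc h3)
  have k3 : 0 < o s a2 d B1 := N0a h2 (oc h1) h8 k2 (oc' h6)
  have k4 : 0 < o s B1 b1 d := N0b (oc h4) (oc k1) (oc' h7) (oc h2) (oc' k3)
  exact (oc k4)

theorem bad_q {s : ℝ} (a a2 b1 B1 m : Pt)
    (h1 : 0 < o s a2 B1 b1) (h2 : 0 < o s a m a2) (h3 : 0 < o s a m b1) (h4 : 0 < o s a m B1)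
    (h5 : 0 < o s a2 m b1) (h6 : 0 < o s b1 m B1) :
    0 < o s a2 m B1 ∧ 0 < o s m B1 b1 ∧ 0 < o s B1 b1 a2 ∧ 0 < o s b1 a2 m := by
  refine ⟨?_, ?_, ?_, ?_⟩
  · have k1 : 0 < o s m B1 a2 := N1b (oc h4) (oc h3) (oc h2) (oc h6) (oc h5)
    exact (oc' k1)
  · exact (oc h6)
  · exact (oc h1)
  · exact (oc' h5)

theorem bad_b0 {s : ℝ} (b0 B0 b1 B1 m : Pt)
    (h1 : 0 < o s b0 B0 B1) (h2 : 0 < o s b1 B1 B0) (h3 : 0 < o s B0 m B1) (h4 : 0 < o s b1 m B1)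
    (h5 : 0 < o s m B1 b0) (h6 : 0 < o s B1 b1 b0) :
    False := by
  have k1 : 0 < o s B1 b0 b1 := N1b (oc h5) (oc' h3) (oc' h4) (oc' h1) (oc h2)
  exact absurd k1 (oneg h6)

theorem bad_B0 {s : ℝ} (a2 B0 b1 : Pt)
    (h1 : 0 < o s B0 a2 b1) (h2 : 0 < o s b1 a2 B0) :
    False := by
  exact absurd h1 (oneg (oc' h2))

theorem bad_inner {s : ℝ} (B1 m z : Pt)
    (h1 : 0 < o s m B1 z) :
    0 < o s m B1 z := by
  exact h1

theorem bad_e {s : ℝ} (b1 B1 e : Pt)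
    (h1 : 0 < o s b1 e B1) :
    0 < o s e B1 b1 := by
  exact (oc h1)

theorem bad_d1 {s : ℝ} (a2 b1 d1 : Pt)
    (h1 : 0 < o s a2 d1 b1) :
    0 < o s b1 a2 d1 := by
  exact (oc' h1)

theorem bad_fin {s : ℝ} (a a0 a1 a2 b0 B0 b1 B1 a3 m d1 : Pt)
    (h1 : 0 < o s a0 b0 B0) (h2 : 0 < o s a0 a1 b0) (h3 : 0 < o s a2 B1 b1)
    (h4 : 0 < o s a1 b1 b0) (h5 : a2.1 < d1.1) (h6 : 0 < o s b0 b1 B0) (h7 : 0 < o s b0 B0 B1)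
    (h8 : 0 < o s b1 B1 B0) (h9 : 0 < o s B0 a2 b1) (h10 : 0 < o s a1 b0 a2) (h11 : a3.1 < a.1)
    (h12 : 0 < o s a a0 a3) (h13 : 0 < o s a d1 a2) (h14 : 0 < o s a d1 b1)
    (h15 : 0 < o s a d1 B1) (h16 : 0 < o s a2 d1 b1) (h17 : 0 < o s b1 d1 B1)
    (h18 : 0 < o s a2 d1 m) (h19 : 0 < o s a3 m d1) (h20 : d1.1 < m.1) (h21 : 0 < o s B1 m d1)
    (h22 : 0 < o s a3 a0 d1) :
    False := by
  have k1 : 0 < o s d1 B1 a2 := N1b (oc h15) (oc h14) (oc h13) (oc h17) (oc h16)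
  have k2 : d1.1 < B1.1 := P13 h5 k1 (oc h18) (oc' h21) h20
  have k3 : a2.1 < B1.1 := lt_trans h5 k2
  have k4 : 0 < o s b0 b1 B1 := A4 (oc' h8) h7 h6
  have k5 : 0 < o s b1 b0 a2 := N1a (oc k4) (oc h6) (oc' h3) h8 (oc' h9)
  have k6 : 0 < o s a2 B1 b0 := A4 (oc k4) (oc' k5) h3
  have k7 : 0 < o s b0 a1 B1 := N0b (oc h10) (oc k5) (oc' k6) (oc' h4) k4
  have k8 : 0 < o s a2 B1 B0 := A4 h8 (oc h9) h3
  have k9 : 0 < o s B0 b0 a2 := N0a h9 (oc' k8) (oc' h6) (oc' h8) (oc h7)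
  have k10 : 0 < o s b0 a1 B0 := N0b (oc h10) (oc k5) (oc k9) (oc' h4) h6
  have k11 : 0 < o s b0 B1 a0 := N1a k7 h7 (oc' h2) k10 (oc h1)
  have k12 : 0 < o s b0 a0 a2 := N0a (oc h10) (oc k9) (oc' h2) k10 (oc h1)
  have k13 : 0 < o s a0 a2 B1 := A4 (oc' k6) (oc' k11) (oc k12)
  have k14 : a.1 < d1.1 := P05 k2 k1 (oc h15) h5 (oc h13)
  have k15 : 0 < o s d1 m a := N0b (oc' h21) k1 (oc h15) (oc h18) (oc h13)
  have k16 : a3.1 < d1.1 := lt_trans h11 k14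
  have k17 : 0 < o s d1 a a3 := P11 k14 k15 k16 (oc' h19) h20
  have k18 : 0 < o s a a0 d1 := A4 h22 (oc k17) h12
  have k19 : 0 < o s d1 a3 B1 := P01 k2 (oc' h21) k16 (oc' h19) h20
  have k20 : 0 < o s d1 a0 B1 := N1a (oc' k18) (oc' h22) (oc h15) k17 k19
  have k21 : B1.1 < a0.1 := S0a k3 k2 (oc' k13) (oc k1) (oc' k20)
  have k22 : a0.1 < a3.1 := S1a k16 h11 h22 (oc' k17) (oc' h12)
  have k23 : a.1 < B1.1 := lt_trans k14 k2
  have k24 : a3.1 < B1.1 := lt_trans h11 k23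
  have k25 : a0.1 < B1.1 := lt_trans k22 k24
  exact absurd k21 (lt_asymm k25)
variable {s x0 : ℝ} {A B : Finset Pt} {a : Pt} {c : ℕ → Pt} {t : ℕ}

theorem WStar.neAB (S : WStar s x0 A B a c t) {p q : Pt} (hp : p ∈ A) (hq : q ∈ B) : p ≠ q := by
  rintro rfl
  have := S.hA _ hp
  have := S.hB _ hq
  linarith

theorem WStar.bad (S : WStar s x0 A B a c 3) {b0 B0 b1 B1 : Pt}
    (T0 : Two s B a c 0 b0 B0) (T1 : Two s B a c 1 b1 B1)
    (r1 : 0 < o s b0 b1 B0) (r2 : 0 < o s b1 B1 b0) (r3 : 0 < o s b0 B0 B1)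
    (r4 : 0 < o s b1 B1 B0) (r5 : 0 < o s B0 (c 2) b1) (r6 : 0 < o s (c 1) b0 (c 2))
    (r7 : ∀ d ∈ B, Inw s a c 2 d → 0 < o s B0 d B1) : False := by
  classical
  have C := S.toCfg
  have ha := S.ha
  obtain ⟨a0, e0⟩ : ∃ x, c 0 = x := ⟨_, rfl⟩
  obtain ⟨a1, e1⟩ : ∃ x, c 1 = x := ⟨_, rfl⟩
  obtain ⟨a2, e2⟩ : ∃ x, c 2 = x := ⟨_, rfl⟩
  obtain ⟨a3, e3⟩ : ∃ x, c 3 = x := ⟨_, rfl⟩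
  have m0 := S.hc 0 (by omega)
  have m1 := S.hc 1 (by omega)
  have m2 := S.hc 2 (by omega)
  have m3 := S.hc 3 (by omega)
  have hr0 := S.c0
  have hr3 := S.ct
  have hr1 := S.cr 1 (by omega) (by omega)
  have hr2 := S.cr 2 (by omega) (by omega)
  have P1 := S.posc (k := 1) (by omega) (by omega)
  have P2 := S.posc (k := 2) (by omega) (by omega)
  have d0 := S.cons 0 (by omega)
  have d1 := S.cons 1 (by omega)
  have d2 := S.cons 2 (by omega)
  have d3 := S.t3 rfl
  simp only [Nat.zero_add, Nat.reduceAdd, e0, e1, e2, e3] at r5 r6 m0 m1 m2 m3 hr0 hr3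
  simp only [Nat.zero_add, Nat.reduceAdd, e0, e1, e2, e3] at hr1 hr2 P1 P2 d0 d1 d2 d3
  obtain ⟨M0, M0', _, _, _, _, _, _, _, _, _, _, _, P0, P0'⟩ := S.two (by omega) e0 e1 T0
  obtain ⟨M1, M1', _, _, _, _, _, _, _, _, _, _, _, Q1, Q1'⟩ := S.two (by omega) e1 e2 T1
  have := S.ord P0 Q1 (by omega)
  have := S.ord P0 Q1' (by omega)
  have := S.ord P0' Q1 (by omega)
  have := S.ord P0' Q1' (by omega)
  have := S.ord P0 P2 (by omega)
  have := S.ord P0' P2 (by omega)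
  have k1 : 0 < o s a1 b1 b0 := S.F2y (by omega) e1 e2 T1.lm asx asx asx
  have k2 := al_0 a1 b0 B0 b1 B1 asx asx asx asx asx
  have hne : a0 ≠ a2 := by rintro rfl; linarith
  have k3 : 0 < o s a a0 a2 := by
    rcases C.tot a asx a0 asx a2 asx (o13 d0) (o12 d1) hne with g | g
    · exact g
    · have := S.F2x (k := 0) (by omega) e0 e1 T0.lm (z := a2) asx g asx
      exact absurd this (oneg asx)
  have hD : ∀ d ∈ B, Inw s a c 2 d → 0 < o s a d a2 ∧ 0 < o s a a3 d ∧ 0 < o s a d b0 ∧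
      0 < o s a d B0 ∧ 0 < o s a d b1 ∧ 0 < o s a d B1 ∧ 0 < o s B0 d B1 ∧ 0 < o s a2 d b1 ∧
      0 < o s a2 a3 d ∧ 0 < o s b1 d B1 ∧ 0 < o s a2 d B1 := by
    intro d md hd
    have R := S.posb (k := 2) (by omega) md hd
    have h1 := S.ord P0 R (by omega)
    have h2 := S.ord P0' R (by omega)
    have h3 := S.ord Q1 R (by omega)
    have h4 := S.ord Q1' R (by omega)
    have h5 := r7 d md hd
    have h7 := S.beyond (k := 2) (by omega) md hd
    have h8 := S.F2x (k := 1) (by omega) e1 e2 T1.lm (z := d) asx (S.ord P1 R (by omega)) (S.ord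
        P2 R (by omega))
    obtain ⟨h9, h10⟩ := hd
    simp only [Nat.reduceAdd, e2, e3] at h7 h9 h10
    have h11 := bad_d a a2 B0 b1 B1 d asx asx asx asx asx asx asx asx
    obtain ⟨w1, w2, w3, w4⟩ := bad_q a a2 b1 B1 d asx asx asx asx asx asx
    exact ⟨h9, h10, h1, h2, h3, h4, h5, h8, h7, h11, asx⟩
  have hcls : ∀ z ∈ B, z = b0 ∨ z = B0 ∨ z = b1 ∨ z = B1 ∨ Inw s a c 2 z := by
    intro z mz
    obtain ⟨k, hk, hz⟩ := S.cov z mz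
    have : k = 0 ∨ k = 1 ∨ k = 2 := by omega
    rcases this with rfl | rfl | rfl
    · have := T0.2.2.2.2.2 z mz hz
      tauto
    · have := T1.2.2.2.2.2 z mz hz
      tauto
    · tauto
  have hcardD : 2 ≤ (B.filter (fun z => Inw s a c 2 z)).card := by
    have hsub : B ⊆ {b0, B0, b1, B1} ∪ B.filter (fun z => Inw s a c 2 z) := by
      intro z hz
      simp only [Finset.mem_union, Finset.mem_insert, Finset.mem_singleton, Finset.mem_filter]
      have := hcls z hz
      tauto
    have h1 := Finset.card_le_card hsub
    have h2 := S.hcard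
    have h3 := Finset.card_le_four (a := b0) (b := B0) (c := b1) (d := B1)
    have h4 := Finset.card_union_le {b0, B0, b1, B1} (B.filter (fun z => Inw s a c 2 z))
    omega
  have hDne : (B.filter (fun z => Inw s a c 2 z)).Nonempty := by
    rw [← Finset.card_pos]; omega
  obtain ⟨m, hm, hmin⟩ := Finset.exists_min_image _ (fun z => o s a2 z B1) hDne
  obtain ⟨l, hl, hleft⟩ := Finset.exists_min_image _ (fun z => z.1) hDne
  simp only [Finset.mem_filter] at hm hl hmin hleft
  obtain ⟨mm, hm⟩ := hm
  obtain ⟨ml, hl⟩ := hl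
  have hlm : Lm s B a c 2 l := by
    refine ⟨ml, hl, fun z mz hz hne => ?_⟩
    have h := hleft z ⟨mz, hz⟩
    rcases C.xinj z asx l asx hne with g | g
    · linarith
    · exact g
  obtain ⟨_, _, _, _, _, _, _, _, _, _, _⟩ := hD m mm hm
  obtain ⟨w1, w2, w3, w4⟩ := bad_q a a2 b1 B1 m asx asx asx asx asx asx
  have small : ∀ z ∈ B, Inw s a c 2 z → 0 < o s a2 m z → 0 < o s m B1 z → False := by
    intro z mz hz g1 g2
    have h := hmin z ⟨mz, hz⟩
    have e := o_split (s := s) a2 m B1 z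
    have e' := o_rot (s := s) B1 a2 z
    linarith
  have emq : ∀ z ∈ B, 0 < o s a2 m z → 0 < o s m B1 z → 0 < o s B1 b1 z → 0 < o s b1 a2 z →
      False := by
    intro z mz g1 g2 g3 g4
    rcases hcls z mz with rfl | rfl | rfl | rfl | hz
    · exact bad_b0 z B0 b1 B1 m asx asx asx asx asx asx
    · exact bad_B0 a2 z b1 asx asx
    · exact o23 g3 rfl
    · exact o23 g2 rfl
    · exact small z mz hz g1 g2
  by_cases hml : m = l
  · subst hml
    obtain ⟨e, he, hne⟩ := Finset.exists_mem_ne (by omega : 1 < (B.filter (fun z => Inw s a c 2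
        z)).card) m
    simp only [Finset.mem_filter] at he
    obtain ⟨me, he⟩ := he
    have hF := S.F1 (k := 2) (by omega) hlm me he hne
    simp only [Nat.reduceAdd, e2, e3] at hF
    obtain ⟨f1, f2⟩ := hF
    have hlt := hlm.2.2 e me he hne
    obtain ⟨_, _, _, _, _, _, _, _, _, _, _⟩ := hD e me he
    have neB : 0 < o s b1 e B1 := asx
    rcases C.tot m asx e asx B1 asx hne.symm (o23 w1) (o23 neB) with g | g
    · have := bad_e b1 B1 e asx
      exact H1A_12 C a2 m B1 b1 e asx asx asx asx asx asx asx asx asx asx asx asx emq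
    · exact small e me he f1 g
  · have hF := S.F1 (k := 2) (by omega) hlm mm hm hml
    simp only [Nat.reduceAdd, e2, e3] at hF
    obtain ⟨f1, f2⟩ := hF
    have hlt := hlm.2.2 m mm hm hml
    obtain ⟨_, _, _, _, _, _, _, _, _, _, _⟩ := hD l ml hl
    have neB : 0 < o s b1 l B1 := asx
    rcases C.tot l asx m asx B1 asx (Ne.symm hml) (o23 neB) (o23 w1) with g | g
    · have := bad_d1 a2 b1 l asx
      exact H1A_x1 C a2 m B1 b1 l asx asx asx asx asx asx asx asx asx asx asx asx emq
    · have := S.F2x (k := 2) (by omega) e2 e3 hlm (z := a0) asx asx asx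
      exact bad_fin a a0 a1 a2 b0 B0 b1 B1 a3 m l asx asx asx asx asx asx asx asx asx asx asx asx
          asx asx asx asx asx asx asx asx asx asx

theorem WStar.alpha' (S : WStar s x0 A B a c t) {i : ℕ} {b0 B0 b1 B1 : Pt} (hi : i + 1 < t)
    (hx : 1 ≤ i ∨ i + 2 < t)
    (T0 : Two s B a c i b0 B0) (T1 : Two s B a c (i + 1) b1 B1)
    (r1 : 0 < o s b0 b1 B0) (r2 : 0 < o s b1 B1 b0) (r3 : 0 < o s b0 B0 B1)
    (r4 : 0 < o s b1 B1 B0) : False := by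
  obtain ⟨rfl, rfl, h1, h2, h3⟩ := S.alpha hi hx T0 T1 r1 r2 r3 r4
  exact S.bad T0 T1 r1 r2 r3 r4 h1 h2 h3

theorem Two.mirror {k : ℕ} {b e : Pt} (hk : k < t) (T : Two s B a c k b e) :
    Two (-s) B a (fun k => c (t - k)) (t - 1 - k) b e := by
  have key : ∀ z, Inw (-s) a (fun k => c (t - k)) (t - 1 - k) z ↔ Inw s a c k z := by
    intro z
    rw [mirror_In (by omega)]
    have : t - 1 - (t - 1 - k) = k := by omega
    rw [this]
  unfold Two at *
  simpa only [key] using T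

/-- two adjacent wedges with two points each are impossible, when there is a point below -/
theorem WStar.n2a (S : WStar s x0 A B a c t) {i : ℕ} {b0 B0 b1 B1 : Pt} (hi : i + 2 < t)
    (T0 : Two s B a c i b0 B0) (T1 : Two s B a c (i + 1) b1 B1) : False := by
  have C := S.toCfg
  have ha := S.ha
  obtain ⟨a0, e0⟩ : ∃ x, c i = x := ⟨_, rfl⟩
  obtain ⟨a1, e1⟩ : ∃ x, c (i + 1) = x := ⟨_, rfl⟩
  obtain ⟨a2, e2⟩ : ∃ x, c (i + 2) = x := ⟨_, rfl⟩
  have m0 := S.hc i (by omega)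
  have m1 := S.hc (i + 1) (by omega)
  have m2 := S.hc (i + 2) (by omega)
  have hr1 := S.cr (i + 1) (by omega) (by omega)
  have P1 := S.posc (k := i + 1) (by omega) (by omega)
  have P2 := S.posc (k := i + 2) (by omega) hi
  have hr2 := S.cr (i + 2) (by omega) hi
  have d0 := S.cons i (by omega)
  have d1 := S.cons (i + 1) (by omega)
  rw [e0] at m0 d0
  rw [e1] at m1 hr1 P1 d0 d1
  rw [e2] at m2 d1 P2 hr2
  obtain ⟨M0, M0', _, _, _, _, _, _, _, _, _, _, _, P0, P0'⟩ := S.two (by omega) e0 e1 T0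
  obtain ⟨M1, M1', _, _, _, _, _, _, _, _, _, _, _, Q1, Q1'⟩ := S.two (by omega) e1 e2 T1
  have := S.ord P0 Q1 (by omega)
  have := S.ord P0 Q1' (by omega)
  have := S.ord P0' Q1 (by omega)
  have := S.ord P0' Q1' (by omega)
  have := S.ord P0 P2 (by omega)
  have := S.ord P0' P2 (by omega)
  have k1 : 0 < o s a1 b1 b0 := S.F2y (by omega) e1 e2 T1.lm asx asx asx
  have k2 : 0 < o s a1 b1 B0 := S.F2y (by omega) e1 e2 T1.lm asx asx asx
  have n00 : b0 ≠ B0 := by rintro rfl; linarith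
  have n11 : b1 ≠ B1 := by rintro rfl; linarith
  have nb0b1 : b0 ≠ b1 := (o23 (asx : 0 < o s a b1 b0)).symm
  have nb0B1 : b0 ≠ B1 := (o23 (asx : 0 < o s a B1 b0)).symm
  have nB0b1 : B0 ≠ b1 := (o23 (asx : 0 < o s a b1 B0)).symm
  have nB0B1 : B0 ≠ B1 := (o23 (asx : 0 < o s a B1 B0)).symm
  rcases C.tot b0 asx B0 asx b1 asx n00 nb0b1 nB0b1 with r1 | r1
  · rcases C.tot b0 asx B0 asx B1 asx n00 nb0B1 nB0B1 with r2 | r2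
    · obtain ⟨v1, v2, v3, v4, w1, w2, w3⟩ := s12_q a a0 a1 a2 b0 B0 b1 B1 asx asx asx asx asx asx
        asx asx asx asx asx asx asx asx asx asx
      refine H1A_31 C a0 b0 B0 b1 B1 asx asx asx asx asx asx asx asx asx asx asx asx ?_
      intro z mz g1 g2 g3 g4
      obtain ⟨n, hn, hl⟩ := S.empU e0 (by omega) P0 P0' Q1 (by omega) mz g1 g2 g3 g4
      rcases Nat.lt_or_ge (2 * i + 3) n with h | h
      · have := S.ord P1 hn (by omega)
        have := S.ord P0 hn (by omega)
        have := S.ord Q1 hn (by omega)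
        exact s12_dn a a0 a1 b0 B0 b1 z asx asx asx asx asx asx asx asx asx asx asx asx
      · rcases S.mid e1 T0 T1 hn hl h with rfl | rfl | rfl | rfl | rfl
        · exact o23 g1 rfl
        · exact o23 g2 rfl
        · exact S.neAB m1 mz rfl
        · exact o23 g3 rfl
        · exact absurd g4 (oneg asx)
    · exact s12_c a a1 a2 b0 B0 b1 B1 asx asx asx asx asx asx asx asx asx asx asx asx asx asx asx
        asx
  rcases C.tot b1 asx B1 asx b0 asx n11 nb0b1.symm nb0B1.symm with r2 | r2
  swap
  · rcases C.tot b1 asx B1 asx B0 asx n11 nB0b1.symm nB0B1.symm with r3 | r3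
    · exact s34_c a a1 a2 b0 B0 b1 B1 asx asx asx asx asx asx asx asx asx asx asx asx asx
    · obtain ⟨v1, v2, v3, v4, w1, w2, w3⟩ := s34_q a a1 a2 b0 B0 b1 B1 asx asx asx asx asx asx
        asx asx asx asx asx asx asx asx asx
      refine H1A_x1 C a2 b0 B1 b1 B0 asx asx asx asx asx asx asx asx asx asx asx asx ?_
      intro z mz g1 g2 g3 g4
      obtain ⟨n, hn, hl, hh⟩ := S.emp4 (2 * i + 1) (2 * (i + 2)) a2 b0 B1 b1 z P2 P0 Q1' Q1 (by
          omega)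
        asx (S.Br mz) g1 g2 g3 g4
      have : n ≠ 2 * (i + 2) := by
        rintro rfl
        have := hn.isc
        rw [e2] at this
        exact o13 g1 this.symm
      rcases S.mid e1 T0 T1 hn hl (by omega) with rfl | rfl | rfl | rfl | rfl
      · exact o23 g1 rfl
      · exact absurd g1 (oneg asx)
      · exact S.neAB m1 mz rfl
      · exact o23 g3 rfl
      · exact o23 g2 rfl
  obtain ⟨v1, v2, v3, v4⟩ := t2_q a1 b0 B0 b1 asx asx asx asx
  have emq : ∀ z ∈ B, 0 < o s a1 b1 z → 0 < o s b1 B0 z → 0 < o s B0 b0 z → 0 < o s b0 a1 z →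
      z = B1 := by
    intro z mz g1 g2 g3 g4
    obtain ⟨n, hn, hl, hh⟩ := S.emp4 (2 * i + 1) (2 * i + 3) a1 b1 B0 b0 z P1 Q1 P0' P0 (by omega)
      asx (S.Br mz) g1 g2 g3 g4
    rcases S.mid e1 T0 T1 hn hl (by omega) with rfl | rfl | rfl | rfl | rfl
    · exact (o23 g3 rfl).elim
    · exact (o23 g2 rfl).elim
    · exact (S.neAB m1 mz rfl).elim
    · exact (o23 g1 rfl).elim
    · rfl
  rcases C.tot b0 asx B0 asx B1 asx n00 nb0B1 nB0B1 with r3 | r3 <;>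
  rcases C.tot b1 asx B1 asx B0 asx n11 nB0b1.symm nB0B1.symm with r4 | r4
  · exact S.alpha' (by omega) (by omega) T0 T1 r1 r2 r3 r4
  · have := s2p a a1 b0 B0 b1 B1 asx asx asx asx asx asx asx asx
    refine H1A_23 C a1 b1 B0 b0 B1 asx asx asx asx asx asx asx asx asx asx asx asx ?_
    intro z mz g1 g2 g3 g4
    have := emq z mz g1 g2 g3 g4
    subst this
    exact absurd g3 (oneg asx)
  · obtain ⟨w1, w2⟩ := s2m a1 b0 B0 b1 B1 asx asx
    refine H1A_12 C a1 b1 B0 b0 B1 asx asx asx asx asx asx asx asx asx asx asx asx ?_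
    intro z mz g1 g2 g3 g4
    have := emq z mz g1 g2 g3 g4
    subst this
    exact absurd g2 (oneg asx)
  · have t0 := T0.mirror (t := t) (by omega)
    have t1 := T1.mirror (t := t) (by omega)
    have e : t - 1 - i = t - 1 - (i + 1) + 1 := by omega
    rw [e] at t0
    refine S.mirror.alpha' (by omega) (by omega) t1 t0 ?_ ?_ ?_ ?_ <;> rw [om] <;> exact asx

theorem WStar.n2 (S : WStar s x0 A B a c t) {i : ℕ} {b0 B0 b1 B1 : Pt} (hi : i + 1 < t)
    (T0 : Two s B a c i b0 B0) (T1 : Two s B a c (i + 1) b1 B1) : False := by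
  classical
  by_cases h : i + 2 < t
  · exact S.n2a h T0 T1
  rcases Nat.eq_zero_or_pos i with h0 | h0
  · subst h0
    have ht : t = 2 := by omega
    subst ht
    have hsub : B ⊆ {b0, B0, b1, B1} := by
      intro z mz
      obtain ⟨k, hk, hz⟩ := S.cov z mz
      simp only [Finset.mem_insert, Finset.mem_singleton]
      have : k = 0 ∨ k = 1 := by omega
      rcases this with rfl | rfl
      · have := T0.2.2.2.2.2 z mz hz
        tauto
      · have := T1.2.2.2.2.2 z mz hz
        tauto
    have h1 := Finset.card_le_card hsub
    have h2 := S.hcard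
    have h3 := Finset.card_le_four (a := b0) (b := B0) (c := b1) (d := B1)
    omega
  · have t0 := T0.mirror (t := t) (by omega)
    have t1 := T1.mirror (t := t) (by omega)
    have e : t - 1 - i = t - 1 - (i + 1) + 1 := by omega
    rw [e] at t0
    exact S.mirror.n2a (by omega) t1 t0

end Part4

section Part5

theorem t1a {s : ℝ} (a0 a1 b0 B0 b1 : Pt)
    (h1 : 0 < o s a0 b0 B0) (h2 : 0 < o s a1 B0 b0) (h3 : 0 < o s a0 a1 b0)
    (h4 : 0 < o s a1 b1 B0) (h5 : 0 < o s b0 B0 b1) :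
    0 < o s a0 B0 b1 ∧ 0 < o s B0 a1 b1 ∧ 0 < o s a0 b0 b1 := by
  refine ⟨?_, ?_, ?_⟩
  · have k1 : 0 < o s a0 a1 B0 := A4 (oc' h2) h1 h3
    have k2 : 0 < o s B0 b1 a0 := N0a (oc' h1) (oc' k1) (oc h5) (oc h2) (oc' h4)
    exact (oc' k2)
  · exact (oc' h4)
  · have k3 : 0 < o s a1 b1 b0 := A4 (oc h5) h2 h4
    have k4 : 0 < o s b0 b1 a0 := N1a (oc' k3) h5 (oc' h3) (oc' h2) (oc h1)
    exact (oc' k4)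

theorem t1b {s : ℝ} (a a0 a1 b0 B0 b1 d : Pt)
    (h1 : 0 < o s a a1 B0) (h2 : 0 < o s a0 a1 b0) (h3 : 0 < o s a0 a1 B0) (h4 : 0 < o s a b1 B0)
    (h5 : 0 < o s a0 B0 b1) (h6 : 0 < o s B0 a1 b1) (h7 : 0 < o s a0 b0 b1) (h8 : 0 < o s B0 b1 d)
    (h9 : 0 < o s a d b1) :
    0 < o s b1 d a0 ∧ 0 < o s d a0 b0 := by
  refine ⟨?_, ?_⟩
  · have k1 : 0 < o s B0 a0 a := N0a (oc' h1) (oc' h4) (oc' h3) h6 (oc h5)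
    have k2 : 0 < o s a b1 a0 := A4 (oc h5) (oc' k1) h4
    have k3 : 0 < o s b1 d a0 := N0a (oc' h5) (oc k2) (oc h8) (oc h4) (oc' h9)
    exact k3
  · have k4 : 0 < o s a0 a1 b1 := A4 h6 h5 h3
    have k5 : 0 < o s a d B0 := A4 (oc h8) h4 h9
    have k6 : 0 < o s B0 a1 d := N0b (oc' h1) (oc' h4) (oc' k5) h6 h8
    have k7 : 0 < o s B0 a0 a := N0a (oc' h1) (oc' h4) (oc' h3) h6 (oc h5)
    have k8 : 0 < o s B0 d a0 := N1a (oc' k5) h8 k7 (oc' h4) (oc h5)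
    have k9 : 0 < o s a0 a1 d := A4 k6 (oc' k8) h3
    have k10 : 0 < o s a b1 a0 := A4 (oc h5) (oc' k7) h4
    have k11 : 0 < o s b1 d a0 := N0a (oc' h5) (oc k10) (oc h8) (oc h4) (oc' h9)
    have k12 : 0 < o s a0 b0 d := N0b h2 k4 k9 h7 (oc' k11)
    exact (oc' k12)

theorem t1_dn {s : ℝ} (a a0 a1 b0 B0 b1 z : Pt)
    (h1 : 0 < o s a0 a1 b0) (h2 : 0 < o s a0 b0 z) (h3 : 0 < o s b0 B0 z) (h4 : 0 < o s B0 b1 z)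
    (h5 : 0 < o s b1 a0 z) (h6 : 0 < o s a z a1) (h7 : 0 < o s a z b0) (h8 : 0 < o s a z B0)
    (h9 : 0 < o s a z b1) (h10 : a.1 < z.1) (h11 : a0.1 < z.1) (h12 : a1.1 < z.1) :
    False := by
  have k1 : 0 < o s z b0 b1 := N1b (oc h7) (oc h8) (oc h9) (oc' h3) (oc' h4)
  have k2 : 0 < o s z a a0 := N1a (oc h7) (oc h9) (oc' h2) k1 (oc' h5)
  have k3 : 0 < o s z a1 a0 := S0b h12 h10 h11 (oc h6) k2
  have k4 : 0 < o s z b0 a1 := N0a (oc h6) k3 (oc h7) k2 (oc' h2)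
  have k5 : 0 < o s a1 b0 z := A4 h2 (oc k3) (oc h1)
  exact absurd k4 (oneg (oc' k5))

theorem t1c {s : ℝ} (a a1 a2 b0 B0 b1 b2 : Pt)
    (h1 : 0 < o s a a2 b1) (h2 : 0 < o s a1 B0 b0) (h3 : 0 < o s a1 a2 b1) (h4 : 0 < o s a b1 B0)
    (h5 : 0 < o s b0 B0 b1) (h6 : 0 < o s B0 a1 b1) (h7 : 0 < o s a1 a2 b0) (h8 : 0 < o s a b2 a2)
    (h9 : 0 < o s a2 b2 b1) (h10 : 0 < o s B0 b2 b1) :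
    0 < o s a1 a2 B0 ∧ 0 < o s a2 b1 B0 := by
  refine ⟨?_, ?_⟩
  · have k1 : 0 < o s a1 b1 b0 := A4 (oc h5) h2 (oc h6)
    have k2 : 0 < o s a1 a2 B0 := N1b h7 k1 h2 h3 (oc h6)
    exact k2
  · have k3 : 0 < o s a b2 b1 := A4 h9 h1 h8
    have k4 : 0 < o s b1 B0 a2 := N1b (oc' h10) (oc' k3) (oc' h9) (oc h4) (oc' h1)
    exact (oc' k4)

theorem t1c_x {s : ℝ} (a a1 a2 B0 b1 z : Pt)
    (h1 : a.1 < a2.1) (h2 : a2.1 < B0.1) (h3 : 0 < o s a a1 B0) (h4 : 0 < o s a b1 a1)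
    (h5 : 0 < o s a a2 b1) (h6 : 0 < o s B0 a1 b1) (h7 : 0 < o s a2 b1 z) (h8 : 0 < o s b1 B0 z)
    (h9 : 0 < o s B0 a1 z) (h10 : 0 < o s a1 a2 z) (h11 : 0 < o s a1 a2 B0)
    (h12 : 0 < o s a2 b1 B0) :
    a.1 < z.1 := by
  have k1 : 0 < o s a b1 B0 := A4 (oc h6) h3 h4
  have k2 : 0 < o s b1 a1 a2 := N0b (oc' h6) (oc k1) (oc h12) (oc h4) (oc' h5)
  have k3 : 0 < o s B0 a a2 := N1b (oc' k1) h6 (oc' h12) (oc' h3) (oc' h11)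
  have k4 : 0 < o s a a2 a1 := N1b (oc k3) k1 h3 h5 h4
  have k5 : 0 < o s a2 z a := N0b h7 (oc' k2) (oc h5) (oc h10) (oc k4)
  have k6 : 0 < o s B0 a z := N1b (oc' k1) h6 (oc h8) (oc' h3) h9
  have k7 : a.1 < B0.1 := lt_trans h1 h2
  have k8 : a.1 < z.1 := P03 h1 (oc' k5) (oc k3) (oc k6) k7
  exact k8

theorem t1c_b0 {s : ℝ} (b0 B0 b1 : Pt)
    (h1 : 0 < o s b0 B0 b1) (h2 : 0 < o s b1 B0 b0) :
    False := by
  exact absurd h1 (oneg (oc' h2))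

theorem autoL {s : ℝ} (a p B0 u q : Pt)
    (h1 : 0 < o s B0 u p) (h2 : 0 < o s a u B0) (h3 : 0 < o s a q p) (h4 : p.1 < B0.1)
    (h5 : p.1 < q.1) (h6 : a.1 < p.1) (h7 : 0 < o s a p B0) :
    0 < o s B0 u q := by
  have k1 : a.1 < q.1 := lt_trans h6 h5
  have k2 : a.1 < B0.1 := lt_trans h6 h4
  have k3 : 0 < o s a q B0 := S1b k1 h6 k2 h3 h7
  have k4 : 0 < o s p q B0 := P02 h4 (oc h7) h6 (oc' h3) h5
  have k5 : 0 < o s B0 u q := N0b (oc' h2) (oc' h7) (oc' k3) h1 (oc' k4)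
  exact k5

theorem t3_q {s : ℝ} (p B0 u v : Pt)
    (h1 : 0 < o s B0 u v) (h2 : 0 < o s p v u) :
    0 < o s v B0 u ∧ 0 < o s u p v := by
  refine ⟨?_, ?_⟩
  · exact (oc' h1)
  · exact (oc' h2)

theorem t3_x {s : ℝ} (a p u v z : Pt)
    (h1 : a.1 < p.1) (h2 : 0 < o s p v u) (h3 : p.1 < u.1) (h4 : p.1 < v.1) (h5 : 0 < o s p v z)
    (h6 : 0 < o s u p z) :
    a.1 < z.1 := by
  have k1 : p.1 < z.1 := P03 h4 h5 h2 (oc h6) h3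
  have k2 : a.1 < z.1 := lt_trans h1 k1
  exact k2

theorem t3_A {s : ℝ} (a p B0 u v z : Pt)
    (h1 : 0 < o s a p B0) (h2 : a.1 < p.1) (h3 : 0 < o s p v z) (h4 : 0 < o s v B0 z)
    (h5 : 0 < o s B0 u z) (h6 : 0 < o s u p z) (h7 : 0 < o s a u z) (h8 : z.1 < B0.1)
    (h9 : z.1 < u.1) (h10 : z.1 < v.1) :
    False := by
  have k1 : 0 < o s z v u := S1b h10 h8 h9 (oc' h4) (oc' h5)
  have k2 : p.1 < z.1 := S1a h10 h9 (oc' h3) k1 (oc' h6)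
  have k3 : a.1 < z.1 := lt_trans h2 k2
  have k4 : a.1 < B0.1 := lt_trans k3 h8
  have k5 : 0 < o s z p a := P11 k2 (oc' h6) k3 (oc' h7) h9
  have k6 : 0 < o s a z B0 := S1b k3 h2 k4 (oc' k5) h1
  have k7 : 0 < o s z a B0 := P01 h8 (oc' h5) k3 (oc' h7) h9
  exact absurd k6 (oneg (oc k7))

theorem t3_b0 {s : ℝ} (a a1 b0 B0 b1 u p : Pt)
    (h1 : 0 < o s B0 u b0) (h2 : b0.1 < B0.1) (h3 : 0 < o s B0 u p) (h4 : 0 < o s a p a1)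
    (h5 : 0 < o s a u a1) (h6 : a1.1 < B0.1) (h7 : a1.1 < b1.1) (h8 : a1.1 < u.1)
    (h9 : p.1 < B0.1) (h10 : 0 < o s a1 B0 b0) (h11 : 0 < o s a a1 B0) (h12 : 0 < o s a b1 a1)
    (h13 : 0 < o s a1 b1 B0) :
    False := by
  have k1 : a.1 < a1.1 := S1a h7 h6 (oc' h12) h13 (oc h11)
  have k2 : a.1 < u.1 := lt_trans k1 h8
  have k3 : a.1 < B0.1 := lt_trans k1 h6
  have k4 : 0 < o s a u B0 := S1b k2 k1 k3 h5 h11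
  have k5 : 0 < o s a1 u B0 := P02 h6 (oc h11) k1 (oc' h5) h8
  have k6 : B0.1 < u.1 := S0a h2 h6 h1 (oc h10) (oc' k5)
  have k7 : 0 < o s B0 p a := P11 h9 h3 k3 (oc' k4) k6
  have k8 : 0 < o s a p u := N0a h5 k4 h4 h11 (oc' k7)
  have k9 : p.1 < u.1 := lt_trans h9 k6
  have k10 : 0 < o s u p a := S0b k9 k6 k2 (oc h3) (oc k4)
  exact absurd k8 (oneg (oc' k10))

theorem t4x {s : ℝ} (a a0 a1 an b0 B0 c C : Pt)
    (h1 : 0 < o s a a1 B0) (h2 : 0 < o s a1 B0 b0) (h3 : 0 < o s a0 b0 B0) (h4 : 0 < o s a B0 a0)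
    (h5 : 0 < o s a an a1) (h6 : 0 < o s a C an) (h7 : 0 < o s an c C) (h8 : c.1 < C.1)
    (h9 : a.1 < a1.1) (h10 : a.1 < an.1) (h11 : 0 < o s b0 B0 C) (h12 : 0 < o s c B0 C)
    (h13 : a0.1 < C.1) (h14 : a1.1 < C.1) (h15 : an.1 < B0.1) (h16 : an.1 < C.1) :
    False := by
  have k1 : a.1 < B0.1 := lt_trans h10 h15
  have k2 : 0 < o s a an B0 := S1b h10 h9 k1 h5 h1
  have k3 : 0 < o s an C B0 := P02 h15 (oc k2) h10 (oc' h6) h16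
  have k4 : C.1 < B0.1 := S0a h16 h8 (oc k3) (oc' h7) (oc' h12)
  have k5 : a0.1 < B0.1 := lt_trans h13 k4
  have k6 : a.1 < C.1 := lt_trans h9 h14
  have k7 : 0 < o s a C a1 := S1b k6 h10 h9 h6 h5
  have k8 : 0 < o s a C B0 := S1b k6 h9 k1 k7 h1
  have k9 : 0 < o s B0 a0 C := S0b k5 k1 k4 (oc h4) (oc' k8)
  have k10 : 0 < o s B0 a b0 := N0b (oc h4) k9 (oc' h3) (oc' k8) (oc h11)
  have k11 : 0 < o s C B0 a1 := P14 k6 (oc k7) (oc k8) h14 k4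
  have k12 : 0 < o s B0 b0 a := N0a (oc' h1) (oc' k8) (oc h2) (oc k11) (oc h11)
  exact absurd k10 (oneg k12)
variable {s x0 : ℝ} {A B : Finset Pt} {a : Pt} {c : ℕ → Pt} {t : ℕ}

/-- wedge `k` contains exactly one point -/
def WOne (s : ℝ) (B : Finset Pt) (a : Pt) (c : ℕ → Pt) (k : ℕ) (b : Pt) : Prop :=
  b ∈ B ∧ Inw s a c k b ∧ ∀ z ∈ B, Inw s a c k z → z = b

theorem WOne.lm {k : ℕ} {b : Pt} (T : WOne s B a c k b) : Lm s B a c k b :=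
  ⟨T.1, T.2.1, fun z hz h hne => absurd (T.2.2 z hz h) hne⟩

theorem WStar.one (S : WStar s x0 A B a c t) {k : ℕ} (hk : k < t) {p q b : Pt}
    (ep : c k = p) (eq : c (k + 1) = q) (T : WOne s B a c k b) :
    b ∈ B ∧ 0 < o s a b p ∧ 0 < o s a q b ∧ 0 < o s p q b ∧ a.1 < b.1 ∧
    Pos s B a c t b (2 * k + 1) := by
  subst ep eq
  obtain ⟨h1, h3, h6⟩ := T
  exact ⟨h1, h3.1, h3.2, S.beyond hk h1 h3, S.Br h1, S.posb hk h1 h3⟩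

theorem WOne.mirror {k : ℕ} {b : Pt} (hk : k < t) (T : WOne s B a c k b) :
    WOne (-s) B a (fun k => c (t - k)) (t - 1 - k) b := by
  have key : ∀ z, Inw (-s) a (fun k => c (t - k)) (t - 1 - k) z ↔ Inw s a c k z := by
    intro z
    rw [mirror_In (by omega)]
    have : t - 1 - (t - 1 - k) = k := by omega
    rw [this]
  unfold WOne at *
  simpa only [key] using T

theorem Lm.mirror {k : ℕ} {b : Pt} (hk : k < t) (T : Lm s B a c k b) :
    Lm (-s) B a (fun k => c (t - k)) (t - 1 - k) b := by
  have key : ∀ z, Inw (-s) a (fun k => c (t - k)) (t - 1 - k) z ↔ Inw s a c k z := by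
    intro z
    rw [mirror_In (by omega)]
    have : t - 1 - (t - 1 - k) = k := by omega
    rw [this]
  unfold Lm at *
  simpa only [key] using T

/-- mirrored version of `WStar.G` -/
theorem WStar.G' (S : WStar s x0 A B a c t) {i : ℕ} (hi : i + 2 < t) (ht : 4 ≤ t) {b : Pt}
    (hb : Lm s B a c (i + 2) b) : 0 < o s (c (i + 1)) (c (i + 2)) b := by
  have h := S.mirror.G (i := t - 1 - (i + 2)) (by omega) (Or.inr ht) (hb.mirror hi)
  rw [om] at h
  have e1 : t - (t - 1 - (i + 2) + 1) = i + 2 := by omega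
  have e2 : t - (t - 1 - (i + 2) + 2) = i + 1 := by omega
  rw [e1, e2] at h
  exact asx

theorem WStar.exLm (S : WStar s x0 A B a c t) {k : ℕ} (h : ∃ z ∈ B, Inw s a c k z) :
    ∃ b, Lm s B a c k b := by
  classical
  have hne : (B.filter (fun z => Inw s a c k z)).Nonempty := by
    obtain ⟨z, h1, h2⟩ := h
    exact ⟨z, Finset.mem_filter.2 ⟨h1, h2⟩⟩
  obtain ⟨l, hl, hleft⟩ := Finset.exists_min_image _ (fun z => z.1) hne
  simp only [Finset.mem_filter] at hl hleft
  refine ⟨l, hl.1, hl.2, fun z mz hz hne => ?_⟩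
  have h := hleft z ⟨mz, hz⟩
  rcases S.xinj z (Finset.mem_union_right _ mz) l (Finset.mem_union_right _ hl.1) hne with g | g
  · linarith
  · exact g

/-- the pattern `2, 1, ..., 1, 2` -/
structure Chain (s x0 : ℝ) (A B : Finset Pt) (a : Pt) (c : ℕ → Pt) (t i j : ℕ) (b : ℕ → Pt)
    (b0 B0 b1 B1 : Pt) : Prop extends WStar s x0 A B a c t where
  hij : i + 2 ≤ j
  hjt : j < t
  T0 : Two s B a c i b0 B0
  T1 : Two s B a c j b1 B1
  hone : ∀ k, i < k → k < j → WOne s B a c k (b k)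

variable {i j : ℕ} {b : ℕ → Pt} {b0 B0 b1 B1 : Pt}

theorem Chain.mirror (S : Chain s x0 A B a c t i j b b0 B0 b1 B1) :
    Chain (-s) x0 A B a (fun k => c (t - k)) t (t - 1 - j) (t - 1 - i) (fun k => b (t - 1 - k))
      b1 B1 b0 B0 where
  toWStar := S.toWStar.mirror
  hij := by have := S.hij; have := S.hjt; omega
  hjt := by have := S.hij; have := S.hjt; omega
  T0 := S.T1.mirror S.hjt
  T1 := S.T0.mirror (by have := S.hij; have := S.hjt; omega)
  hone := by
    intro k h1 h2
    have := S.hij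
    have := S.hjt
    have h := (S.hone (t - 1 - k) (by omega) (by omega)).mirror (t := t) (by omega)
    have e : t - 1 - (t - 1 - k) = k := by omega
    rw [e] at h
    exact h

theorem Chain.t4 (S : Chain s x0 A B a c t i j b b0 B0 b1 B1) : 4 ≤ t := by
  classical
  by_contra hc
  have := S.hij
  have := S.hjt
  have h0 : i = 0 := by omega
  have h1 : j = 2 := by omega
  have h2 : t = 3 := by omega
  subst h0 h1 h2
  have hsub : B ⊆ {b0, B0, b 1, b1, B1} := by
    intro z mz
    obtain ⟨k, hk, hz⟩ := S.cov z mz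
    simp only [Finset.mem_insert, Finset.mem_singleton]
    have : k = 0 ∨ k = 1 ∨ k = 2 := by omega
    rcases this with rfl | rfl | rfl
    · have := S.T0.2.2.2.2.2 z mz hz
      tauto
    · have := (S.hone 1 (by omega) (by omega)).2.2 z mz hz
      tauto
    · have := S.T1.2.2.2.2.2 z mz hz
      tauto
  have h1 := Finset.card_le_card hsub
  have h2 := S.hcard
  have h3 := Finset.card_le_five (a := b0) (b := B0) (c := b 1) (d := b1) (e := B1)
  omega

/-- points in the two middle wedges -/
theorem WStar.mid1 (S : WStar s x0 A B a c t) {i n : ℕ} {a1 b0 B0 b1 z : Pt}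
    (e1 : c (i + 1) = a1) (T0 : Two s B a c i b0 B0) (T1 : WOne s B a c (i + 1) b1)
    (hn : Pos s B a c t z n) (h1 : 2 * i + 1 ≤ n) (h2 : n ≤ 2 * i + 3) :
    z = b0 ∨ z = B0 ∨ z = a1 ∨ z = b1 := by
  have : n = 2 * i + 1 ∨ n = 2 * (i + 1) ∨ n = 2 * (i + 1) + 1 := by omega
  rcases this with rfl | rfl | rfl
  · have := T0.2.2.2.2.2 z hn.isb.1 hn.isb.2
    tauto
  · have := hn.isc
    rw [e1] at this; tauto
  · have := T1.2.2 z hn.isb.1 hn.isb.2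
    tauto

theorem Chain.T12 (S : Chain s x0 A B a c t i j b b0 B0 b1 B1) :
    0 < o s b0 (b (i + 1)) B0 ∧ 0 < o s B0 (b (i + 1)) (c (i + 2)) := by
  have ht := S.t4
  have hij := S.hij
  have hjt := S.hjt
  have C := S.toCfg
  have ha := S.ha
  have T0 := S.T0
  have T1 := S.hone (i + 1) (by omega) (by omega)
  have hG := S.G (i := i) (by omega) (by omega) T0.lm
  have ⟨b2, hb2⟩ : ∃ b2, Lm s B a c (i + 2) b2 := by
    apply S.exLm
    rcases Nat.lt_or_ge (i + 2) j with h | h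
    · have := S.hone (i + 2) (by omega) h
      exact ⟨_, this.1, this.2.1⟩
    · have e : i + 2 = j := by omega
      rw [e]
      exact ⟨_, S.T1.1, S.T1.2.2.1⟩
  have hG2 := S.G' (i := i) (by omega) (by omega) hb2
  have mb2 := hb2.1
  have ib2 := hb2.2.1.1
  have R2 := S.posb (k := i + 2) (by omega) mb2 hb2.2.1
  obtain ⟨a0, e0⟩ : ∃ x, c i = x := ⟨_, rfl⟩
  obtain ⟨a1, e1⟩ : ∃ x, c (i + 1) = x := ⟨_, rfl⟩
  obtain ⟨a2, e2⟩ : ∃ x, c (i + 2) = x := ⟨_, rfl⟩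
  obtain ⟨v, ev⟩ : ∃ x, b (i + 1) = x := ⟨_, rfl⟩
  have m0 := S.hc i (by omega)
  have m1 := S.hc (i + 1) (by omega)
  have m2 := S.hc (i + 2) (by omega)
  have hr1 := S.cr (i + 1) (by omega) (by omega)
  have hr2 := S.cr (i + 2) (by omega) (by omega)
  have P1 := S.posc (k := i + 1) (by omega) (by omega)
  have P2 := S.posc (k := i + 2) (by omega) (by omega)
  have d0 := S.cons i (by omega)
  have d1 := S.cons (i + 1) (by omega)
  rw [ev] at T1 ⊢
  rw [e0] at m0 d0
  rw [e1] at m1 hr1 P1 d0 d1 hG hG2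
  rw [e2] at m2 d1 P2 hr2 hG hG2 ib2
  rw [e2]
  obtain ⟨M0, M0', _, _, _, _, _, _, _, _, _, _, _, P0, P0'⟩ := S.two (by omega) e0 e1 T0
  obtain ⟨M1, _, _, _, _, Q1⟩ := S.one (by omega) e1 e2 T1
  have := S.ord P0 Q1 (by omega)
  have := S.ord P0' Q1 (by omega)
  have := S.ord P0 P2 (by omega)
  have := S.ord P0' P2 (by omega)
  have k1 : 0 < o s a1 v b0 := S.F2y (by omega) e1 e2 T1.lm asx asx asx
  have k2 : 0 < o s a1 v B0 := S.F2y (by omega) e1 e2 T1.lm asx asx asx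
  have k3 : 0 < o s a2 b2 v := S.F2x (by omega) e1 e2 T1.lm asx (S.ord P1 R2 (by omega)) asx
  have n1 : b0 ≠ B0 := by rintro rfl; linarith
  have n2 : b0 ≠ v := (o23 (asx : 0 < o s a v b0)).symm
  have n3 : B0 ≠ v := (o23 (asx : 0 < o s a v B0)).symm
  have r1 : 0 < o s b0 v B0 := by
    rcases C.tot b0 asx v asx B0 asx n2 n1 n3.symm with g | g
    · exact g
    exfalso
    obtain ⟨q1, q2, q3⟩ := t1a a0 a1 b0 B0 v asx asx asx asx asx
    have hno : ∀ d ∈ B, ∀ n, Pos s B a c t d n → 2 * i + 5 ≤ n → ¬ 0 < o s B0 v d := by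
      intro d md n hn hge hd
      have := S.ord Q1 hn (by omega)
      obtain ⟨w1, w2⟩ := t1b a a0 a1 b0 B0 v d asx asx asx asx asx asx asx asx asx
      refine H1A_31 C a0 b0 B0 v d asx asx asx asx asx asx asx asx asx asx asx asx ?_
      intro z mz g1 g2 g3 g4
      obtain ⟨n, hn, hl⟩ := S.empU e0 (by omega) P0 P0' Q1 (by omega) mz g1 g2 g3 g4
      rcases Nat.lt_or_ge (2 * i + 3) n with h | h
      · have := S.ord P1 hn (by omega)
        have := S.ord P0 hn (by omega)
        have := S.ord P0' hn (by omega)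
        have := S.ord Q1 hn (by omega)
        have := S.Br mz
        exact t1_dn a a0 a1 b0 B0 v z asx asx asx asx asx asx asx asx asx asx asx asx
      · rcases S.mid1 e1 T0 T1 hn hl h with rfl | rfl | rfl | rfl
        · exact o23 g1 rfl
        · exact o23 g2 rfl
        · exact S.neAB m1 mz rfl
        · exact o23 g3 rfl
    have r : 0 < o s B0 b2 v := by
      rcases C.tot B0 asx b2 asx v asx (o23 (S.ord P0' R2 (by omega))).symm n3 (o23 k3) with g | g
      · exact g
      · exact (hno b2 mb2 _ R2 (by omega) g).elim
    obtain ⟨w1, w2⟩ := t1c a a1 a2 b0 B0 v b2 asx asx asx asx asx asx asx asx asx asx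
    refine H1 C v B0 a1 a2 b2 asx asx asx asx asx asor asor asx asx asx asx asx asx asx ?_
    intro z mz g1 g2 g3 g4
    have az := t1c_x a a1 a2 B0 v z asx asx asx asx asx asx asx asx asx asx asx asx
    obtain ⟨n, hn, hl, hh⟩ := S.emp4 (2 * i + 1) (2 * (i + 2)) v B0 a1 a2 z Q1 P0' P1 P2 (by
        omega)
      mz az g1 g2 g3 g4
    have : n ≠ 2 * (i + 2) := by
      rintro rfl
      have := hn.isc
      rw [e2] at this
      exact o23 g3 this.symm
    rcases S.mid1 e1 T0 T1 hn hl (by omega) with rfl | rfl | rfl | rfl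
    · exact t1c_b0 z B0 v asx asx
    · exact o23 g1 rfl
    · exact o23 g2 rfl
    · exact o13 g1 rfl
  refine ⟨r1, ?_⟩
  rcases C.tot B0 asx v asx a2 asx n3 (S.neAB m2 M0').symm (S.neAB m2 M1).symm with g | g
  · exact g
  · exfalso
    obtain ⟨v1, v2, v3, v4⟩ := t2_q a1 b0 B0 v asx asx asx asx
    refine H1 C v B0 b0 a1 a2 asx asx asx asx asx asor asor asx asx asx asx asx asx asx ?_
    intro z mz g1 g2 g3 g4
    have az := t2_x a a1 b0 B0 v z asx asx asx asx asx asx asx asx asx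
    obtain ⟨n, hn, hl, hh⟩ := S.emp4 (2 * i + 1) (2 * i + 3) v B0 b0 a1 z Q1 P0' P0 P1 (by omega)
      mz az g1 g2 g3 g4
    rcases S.mid1 e1 T0 T1 hn hl (by omega) with rfl | rfl | rfl | rfl
    · exact o23 g2 rfl
    · exact o23 g1 rfl
    · exact o23 g3 rfl
    · exact o13 g1 rfl

/-- consequence of the property of `T3` -/
theorem Chain.AUTO (S : Chain s x0 A B a c t i j b b0 B0 b1 B1) {k : ℕ} (h1 : i < k) (h2 : k < j)
    (h : 0 < o s B0 (b k) (c (k + 1))) {q : Pt} {n : ℕ} (hq : q ∈ B) (hn : Pos s B a c t q n)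
    (hk : 2 * (k + 1) < n) : 0 < o s B0 (b k) q := by
  have hjt := S.hjt
  have C := S.toCfg
  have ha := S.ha
  obtain ⟨p, ep⟩ : ∃ x, c (k + 1) = x := ⟨_, rfl⟩
  have T := S.hone k h1 h2
  have m1 := S.hc (k + 1) (by omega)
  have hr1 := S.cr (k + 1) (by omega) (by omega)
  have P1 := S.posc (k := k + 1) (by omega) (by omega)
  have P0 := S.posb (k := i) (by omega) S.T0.2.1 S.T0.2.2.2.1
  have Pu := S.posb (k := k) (by omega) T.1 T.2.1
  have M0 := S.T0.2.1
  rw [ep] at m1 hr1 P1 h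
  have := S.ord P0 P1 (by omega)
  have := S.ord P0 Pu (by omega)
  have := S.ord P1 hn (by omega)
  exact autoL a p B0 (b k) q asx asx asx asx asx asx asx

theorem Chain.T3 (S : Chain s x0 A B a c t i j b b0 B0 b1 B1) :
    ∀ k, i < k → k < j → 0 < o s B0 (b k) (c (k + 1)) := by
  intro k
  induction k using Nat.strong_induction_on with
  | _ k ih =>
  intro h1 h2
  rcases Nat.eq_or_lt_of_le h1 with he | hlt
  · rw [← he]; exact S.T12.2
  obtain ⟨k, rfl⟩ : ∃ l, k = l + 1 := ⟨k - 1, by omega⟩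
  have hik : i < k := by omega
  have II := ih k (by omega) hik (by omega)
  have T12 := S.T12
  have hij := S.hij
  have hjt := S.hjt
  have C := S.toCfg
  have ha := S.ha
  have T0 := S.T0
  have Tu := S.hone k hik (by omega)
  have Tv := S.hone (k + 1) (by omega) h2
  have Tb := S.hone (i + 1) (by omega) (by omega)
  have AU := fun q n => S.AUTO hik (by omega) II (q := q) (n := n)
  obtain ⟨x, ex⟩ : ∃ x, b (i + 1) = x := ⟨_, rfl⟩
  obtain ⟨u, eu⟩ : ∃ x, b k = x := ⟨_, rfl⟩
  obtain ⟨v, ev⟩ : ∃ x, b (k + 1) = x := ⟨_, rfl⟩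
  rw [ex] at Tb T12
  rw [eu] at Tu II
  simp only [eu] at AU
  rw [ev] at Tv ⊢
  obtain ⟨a1, e1⟩ : ∃ x, c (i + 1) = x := ⟨_, rfl⟩
  obtain ⟨p, ep⟩ : ∃ x, c (k + 1) = x := ⟨_, rfl⟩
  obtain ⟨q, eq⟩ : ∃ x, c (k + 2) = x := ⟨_, rfl⟩
  obtain ⟨M0, M0', _, _, _, _, _, _, _, _, _, _, _, P0, P0'⟩ := S.two (by omega) rfl e1 T0
  obtain ⟨Mb, _, _, _, _, Rb⟩ := S.one (by omega) e1 rfl Tb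
  obtain ⟨Mu, _, _, _, _, Pu⟩ := S.one (by omega) rfl ep Tu
  obtain ⟨Mv, _, _, _, _, Pv⟩ := S.one (by omega) ep eq Tv
  have ma1 := S.hc (i + 1) (by omega)
  have mp := S.hc (k + 1) (by omega)
  have mq := S.hc (k + 2) (by omega)
  have hr1 := S.cr (i + 1) (by omega) (by omega)
  have hrp := S.cr (k + 1) (by omega) (by omega)
  have hrq := S.cr (k + 2) (by omega) (by omega)
  have Pa1 := S.posc (k := i + 1) (by omega) (by omega)
  have Pp := S.posc (k := k + 1) (by omega) (by omega)
  have Pq := S.posc (k := k + 2) (by omega) (by omega)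
  have Pck := S.posc (k := k) (by omega) (by omega)
  have AU := AU _ _ Mv Pv (by omega)
  have AU' : ∀ l, i < l → l < k → 0 < o s B0 (b l) u := fun l g1 g2 =>
    S.AUTO g1 (by omega) (ih l (by omega) g1 (by omega)) Mu Pu (by omega)
  have hT0 := T0.2.2.2.2.2
  have hun : ∀ l, i < l → l < j → ∀ z ∈ B, Inw s a c l z → z = b l := fun l g1 g2 =>
    (S.hone l g1 g2).2.2
  rw [e1] at ma1 hr1 Pa1
  rw [ep] at mp hrp Pp II
  rw [eq] at mq hrq Pq
  show 0 < o s B0 v (c (k + 2))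
  rw [eq]
  have := S.ord P0' Pu (by omega)
  have := S.ord P0' Pv (by omega)
  have := S.ord P0' Pp (by omega)
  have := S.ord P0' Pq (by omega)
  have := S.ord Pp Pq (by omega)
  have hqu := S.ord Pu Pq (by omega)
  have := S.ord Pu Pv (by omega)
  have := S.ord Pa1 Pp (by omega)
  have := S.ord Pa1 Pu (by omega)
  have hpqu : 0 < o s p q u := S.F2x (by omega) rfl ep Tu.lm asx (S.ord Pck Pq (by omega)) asx
  have hpvu : 0 < o s p v u := S.F2y (by omega) ep eq Tv.lm asx asx asx
  have hpvB : 0 < o s p v B0 := S.F2y (by omega) ep eq Tv.lm asx asx asx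
  have hxB : 0 < o s a1 x B0 :=
    S.F2y (by omega) e1 rfl Tb.lm asx asx
      (S.ord P0' (S.posc (k := i + 2) (by omega) (by omega)) (by omega))
  rcases C.tot B0 asx v asx q asx (o12 AU |> fun _ => o13 AU) (S.neAB mq M0').symm
      (S.neAB mq Mv).symm with g | g
  · exact g
  exfalso
  obtain ⟨w1, w2⟩ := t3_q p B0 u v asx asx
  refine H1 C v B0 u p q asx asx asx asx asx asor asor asx asx asx asx asx asx asx ?_
  intro z mz g1 g2 g3 g4
  have az := t3_x a p u v z asx asx asx asx asx asx
  obtain ⟨n, hn, hl, hh⟩ := S.emp4 (2 * i + 1) (2 * (k + 1) + 1) v B0 u p z Pv P0' Pu Pp (by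
      omega)
    mz az g1 g2 g3 g4
  rcases Nat.even_or_odd' n with ⟨l, rfl | rfl⟩
  · have hz := hn.isc
    rcases Nat.lt_or_ge k l with h | h
    · have : l = k + 1 := by omega
      subst this
      rw [ep] at hz
      exact o23 g3 hz.symm
    · have zA : z ∈ A := hz ▸ S.hc l (by omega)
      have := S.ord hn Pu (by omega)
      exact t3_A a p B0 u v z asx asx asx asx asx asx asx asx asx asx
  · obtain ⟨zB, zi⟩ := hn.isb
    rcases Nat.lt_or_ge i l with h | h
    · have hz := hun l h (by omega) z zB zi
      rcases Nat.lt_or_ge l k with h' | h'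
      · have := AU' l h h'
        rw [← hz] at this
        exact absurd g2 (oneg this)
      · have : l = k ∨ l = k + 1 := by omega
        rcases this with rfl | rfl
        · exact o23 g2 (by rw [hz, eu])
        · exact o13 g1 (by rw [hz, ev])
    · have : l = i := by omega
      subst this
      rcases hT0 z zB zi with rfl | rfl
      · exact t3_b0 a a1 z B0 x u p asx asx asx asx asx asx asx asx asx asx asx asx asx
      · exact o23 g1 rfl

theorem Chain.T3' (S : Chain s x0 A B a c t i j b b0 B0 b1 B1) {k : ℕ} (h1 : i < k)
    (h2 : k < j) : 0 < o s (c k) (b k) B1 := by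
  have := S.hjt
  have h := S.mirror.T3 (t - 1 - k) (by omega) (by omega)
  rw [om] at h
  have e1 : t - (t - 1 - k + 1) = k := by omega
  have e2 : t - 1 - (t - 1 - k) = k := by omega
  rw [e1, e2] at h
  exact asx

theorem Chain.T4a (S : Chain s x0 A B a c t i j b b0 B0 b1 B1) (h : 0 < o s b0 B1 B0) :
    False := by
  have hij := S.hij
  have hjt := S.hjt
  have C := S.toCfg
  have ha := S.ha
  have T0 := S.T0
  have T1 := S.hone (i + 1) (by omega) (by omega)
  have h12 := S.T12.1
  have hT3' := S.T3' (k := i + 1) (by omega) (by omega)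
  have MC := S.T1.2.1
  have RC := S.posb (k := j) hjt MC S.T1.2.2.2.1
  have hA := S.AUTO (k := i + 1) (by omega) (by omega) S.T12.2 MC RC (by omega)
  obtain ⟨a1, e1⟩ : ∃ x, c (i + 1) = x := ⟨_, rfl⟩
  obtain ⟨a2, e2⟩ : ∃ x, c (i + 2) = x := ⟨_, rfl⟩
  obtain ⟨v, ev⟩ : ∃ x, b (i + 1) = x := ⟨_, rfl⟩
  have m1 := S.hc (i + 1) (by omega)
  have P1 := S.posc (k := i + 1) (by omega) (by omega)
  have P2 := S.posc (k := i + 2) (by omega) (by omega)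
  rw [ev] at T1 hT3' hA h12
  rw [e1] at m1 P1 hT3'
  rw [e2] at P2
  obtain ⟨M0, M0', _, _, _, _, _, _, _, _, _, _, _, P0, P0'⟩ := S.two (by omega) rfl e1 T0
  obtain ⟨M1, _, _, _, _, Q1⟩ := S.one (by omega) e1 e2 T1
  have := S.ord P0 P2 (by omega)
  have := S.ord P0' P2 (by omega)
  have k1 : 0 < o s a1 v b0 := S.F2y (by omega) e1 e2 T1.lm asx asx asx
  have k2 : 0 < o s a1 v B0 := S.F2y (by omega) e1 e2 T1.lm asx asx asx
  obtain ⟨v1, v2, v3, v4⟩ := t2_q a1 b0 B0 v asx asx asx asx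
  refine H1A_12 C a1 v B0 b0 B1 asx asx asx asx asx asx asx asx asx asx asx asx ?_
  intro z mz g1 g2 g3 g4
  obtain ⟨n, hn, hl, hh⟩ := S.emp4 (2 * i + 1) (2 * i + 3) a1 v B0 b0 z P1 Q1 P0' P0 (by omega)
      asx (S.Br mz) g1 g2 g3 g4
  rcases S.mid1 e1 T0 T1 hn hl (by omega) with rfl | rfl | rfl | rfl
  · exact o23 g3 rfl
  · exact o23 g2 rfl
  · exact o13 g1 rfl
  · exact o23 g1 rfl

theorem Chain.false (S : Chain s x0 A B a c t i j b b0 B0 b1 B1) : False := by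
  have hij := S.hij
  have hjt := S.hjt
  have C := S.toCfg
  have ha := S.ha
  obtain ⟨a0, e0⟩ : ∃ x, c i = x := ⟨_, rfl⟩
  obtain ⟨a1, e1⟩ : ∃ x, c (i + 1) = x := ⟨_, rfl⟩
  obtain ⟨an, en⟩ : ∃ x, c j = x := ⟨_, rfl⟩
  have m0 := S.hc i (by omega)
  have m1 := S.hc (i + 1) (by omega)
  have mn := S.hc j (by omega)
  have hr1 := S.cr (i + 1) (by omega) (by omega)
  have hrn := S.cr j (by omega) (by omega)
  have hcc := S.cc (i := i + 1) (j := j) (by omega) (by omega) (by omega)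
  rw [e0] at m0
  rw [e1] at m1 hr1 hcc
  rw [en] at mn hrn hcc
  obtain ⟨M0, M0', _, _, _, _, _, _, _, _, _, _, _, P0, P0'⟩ := S.two (by omega) e0 e1 S.T0
  obtain ⟨M1, M1', _, _, _, _, _, _, _, _, _, _, _, P1, P1'⟩ := S.two (by omega) en rfl S.T1
  have n1 : b0 ≠ B0 := by rintro rfl; linarith
  have n2 : b1 ≠ B1 := by rintro rfl; linarith
  have n3 := (o23 (S.ord P0 P1' (by omega))).symm
  have n4 := (o23 (S.ord P0' P1' (by omega))).symm
  have n5 := (o23 (S.ord P0' P1 (by omega))).symm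
  rcases C.tot b0 asx B0 asx B1 asx n1 n3 n4 with g | g
  swap
  · exact S.T4a g
  rcases C.tot b1 asx B0 asx B1 asx n5.symm n2 n4 with g' | g'
  · exact t4x a a0 a1 an b0 B0 b1 B1 asx asx asx asx asx asx asx asx asx asx asx asx asx asx asx
      asx
  · refine S.mirror.T4a ?_
    rw [om]; exact asx

end Part5

section Part6

theorem comb_bound (f : ℕ → ℕ) (i : ℕ) (j : ℕ) (hij : i ≤ j)
    (hf : ∀ k, i ≤ k → k ≤ j → f k ≤ 2)
    (hp : ∀ l m, i ≤ l → l < m → m ≤ j → f l = 2 → f m = 2 →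
      (∀ k, l < k → k < m → f k = 1) → False) :
    ∑ k ∈ Finset.Icc i j, f k ≤ j - i + 2 ∧
    (∑ k ∈ Finset.Icc i j, f k = j - i + 2 →
      ∃ l, i ≤ l ∧ l ≤ j ∧ f l = 2 ∧ ∀ k, l < k → k ≤ j → f k = 1) := by
  induction j, hij using Nat.le_induction with
  | base =>
    have := hf i le_rfl le_rfl
    simp only [Finset.Icc_self, Finset.sum_singleton]
    refine ⟨by omega, fun h => ⟨i, le_rfl, le_rfl, by omega, fun k h1 h2 => by omega⟩⟩
  | succ j hij ih =>
    obtain ⟨ih1, ih2⟩ := ih (fun k h1 h2 => hf k h1 (by omega))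
      (fun l m h1 h2 h3 => hp l m h1 h2 (by omega))
    have hs : ∑ k ∈ Finset.Icc i (j + 1), f k = ∑ k ∈ Finset.Icc i j, f k + f (j + 1) := by
      rw [Finset.sum_Icc_succ_top (by omega)]
    have h2 := hf (j + 1) (by omega) le_rfl
    rw [hs]
    by_cases hc : ∑ k ∈ Finset.Icc i j, f k = j - i + 2
    · obtain ⟨l, l1, l2, l3, l4⟩ := ih2 hc
      have hne : f (j + 1) ≠ 2 := fun h => hp l (j + 1) l1 (by omega) le_rfl l3 h
        (fun k g1 g2 => l4 k g1 (by omega))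
      refine ⟨by omega, fun h => ⟨l, l1, by omega, l3, fun k g1 g2 => ?_⟩⟩
      rcases Nat.lt_or_ge j k with g | g
      · have e : k = j + 1 := by omega
        subst e
        omega
      · exact l4 k g1 g
    · exact ⟨by omega, fun h => ⟨j + 1, by omega, le_rfl, by omega, fun k h1 h2 => by omega⟩⟩

section
variable {s x0 : ℝ} {A B : Finset Pt} {a : Pt} {c : ℕ → Pt} {t : ℕ}

open Classical in
theorem WStar.exTwo (S : WStar s x0 A B a c t) {k : ℕ}
    (h : (B.filter (fun z => Inw s a c k z)).card = 2) : ∃ b e, Two s B a c k b e := by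
  obtain ⟨p, q, hne, he⟩ := Finset.card_eq_two.1 h
  have hp : p ∈ B.filter (fun z => Inw s a c k z) := by rw [he]; simp
  have hq : q ∈ B.filter (fun z => Inw s a c k z) := by rw [he]; simp
  have hall : ∀ z ∈ B, Inw s a c k z → z = p ∨ z = q := by
    intro z hz hi
    have : z ∈ B.filter (fun z => Inw s a c k z) := Finset.mem_filter.2 ⟨hz, hi⟩
    rw [he] at this
    simpa using this
  rw [Finset.mem_filter] at hp hq
  rcases S.xinj p (Finset.mem_union_right _ hp.1) q (Finset.mem_union_right _ hq.1) hne with g | g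
  · exact ⟨p, q, hp.1, hq.1, hp.2, hq.2, g, hall⟩
  · exact ⟨q, p, hq.1, hp.1, hq.2, hp.2, g, fun z h1 h2 => (hall z h1 h2).symm⟩

open Classical in
theorem exOne {k : ℕ}
    (h : (B.filter (fun z => Inw s a c k z)).card = 1) : ∃ b, WOne s B a c k b := by
  obtain ⟨p, he⟩ := Finset.card_eq_one.1 h
  have hp : p ∈ B.filter (fun z => Inw s a c k z) := by rw [he]; simp
  rw [Finset.mem_filter] at hp
  refine ⟨p, hp.1, hp.2, fun z hz hi => ?_⟩
  have : z ∈ B.filter (fun z => Inw s a c k z) := Finset.mem_filter.2 ⟨hz, hi⟩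
  rw [he] at this
  simpa using this

open Classical in
theorem WStar.nopat (S : WStar s x0 A B a c t) {i j : ℕ} (hij : i < j) (hj : j < t)
    (h0 : (B.filter (fun z => Inw s a c i z)).card = 2)
    (h1 : (B.filter (fun z => Inw s a c j z)).card = 2)
    (hm : ∀ k, i < k → k < j → (B.filter (fun z => Inw s a c k z)).card = 1) : False := by
  obtain ⟨b0, B0, T0⟩ := S.exTwo h0
  obtain ⟨b1, B1, T1⟩ := S.exTwo h1
  rcases Nat.eq_or_lt_of_le hij with he | hlt
  · subst he
    exact S.n2 hj T0 T1
  · have : ∀ k, ∃ b, i < k → k < j → WOne s B a c k b := by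
      intro k
      by_cases h : i < k ∧ k < j
      · obtain ⟨b, hb⟩ := exOne (hm k h.1 h.2)
        exact ⟨b, fun _ _ => hb⟩
      · exact ⟨a, fun g1 g2 => absurd ⟨g1, g2⟩ h⟩
    choose b hb using this
    exact Chain.false (i := i) (j := j) (b := b) (b0 := b0) (B0 := B0) (b1 := b1) (B1 := B1)
      { toWStar := S, hij := hlt, hjt := hj, T0 := T0, T1 := T1, hone := hb }

end


/-- the affine function `o 1 p q` as a real function -/
theorem o_one (p q r : Pt) :
    o 1 p q r = (q.1 - p.1) * (r.2 - p.2) - (q.2 - p.2) * (r.1 - p.1) := by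
  simp [o]

theorem o_cross (a p q : Pt) : cross2 (p - a) (q - a) = o 1 a p q := by
  simp [o, cross2]

theorem o_anti (p q r : Pt) : o 1 p r q = - o 1 p q r := by
  simp only [o_one]; ring

theorem convex_o (p q : Pt) : Convex ℝ {x : Pt | o 1 p q x ≤ 0} := by
  intro x hx y hy u v hu hv huv
  simp only [Set.mem_setOf_eq, o_one, Prod.fst_add, Prod.snd_add, Prod.smul_fst, Prod.smul_snd,
    smul_eq_mul] at *
  have hv' : v = 1 - u := by linarith
  subst hv'
  nlinarith [mul_nonpos_of_nonneg_of_nonpos hu hx, mul_nonpos_of_nonneg_of_nonpos hv hy]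

theorem hull_o {p q : Pt} {H : Set Pt} (h : ∀ x ∈ H, o 1 p q x ≤ 0) {z : Pt}
    (hz : z ∈ convexHull ℝ H) : o 1 p q z ≤ 0 :=
  convexHull_min (s := H) (t := {x : Pt | o 1 p q x ≤ 0}) h (convex_o p q) hz

/-- some point of `A` lies strictly on the positive side of a line through an interior point -/
theorem int_side {A : Finset Pt} {a : Pt} (h : a ∈ interior (convexHull ℝ (↑A : Set Pt)))
    (u v : ℝ) (huv : 0 < u * u + v * v) :
    ∃ p ∈ A, 0 < u * (p.1 - a.1) + v * (p.2 - a.2) := by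
  by_contra hc
  push Not at hc
  have hcv : Convex ℝ {x : Pt | u * (x.1 - a.1) + v * (x.2 - a.2) ≤ 0} := by
    intro x hx y hy c d hc hd hcd
    simp only [Set.mem_setOf_eq, Prod.fst_add, Prod.snd_add, Prod.smul_fst, Prod.smul_snd,
      smul_eq_mul] at *
    have hd' : d = 1 - c := by linarith
    subst hd'
    nlinarith [mul_nonpos_of_nonneg_of_nonpos hc hx, mul_nonpos_of_nonneg_of_nonpos hd hy]
  have hsub : convexHull ℝ (↑A : Set Pt) ⊆ {x : Pt | u * (x.1 - a.1) + v * (x.2 - a.2) ≤ 0} :=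
    convexHull_min (fun x hx => hc x hx) hcv
  have hcont : Continuous (fun e : ℝ => ((a.1 + e * u, a.2 + e * v) : Pt)) := by fun_prop
  have hmem : (fun e : ℝ => ((a.1 + e * u, a.2 + e * v) : Pt)) ⁻¹'
      interior (convexHull ℝ (↑A : Set Pt)) ∈ nhds (0 : ℝ) := by
    apply (isOpen_interior.preimage hcont).mem_nhds
    simpa using h
  obtain ⟨e, he, hb⟩ := Metric.mem_nhds_iff.1 hmem
  have h1 : (e / 2) ∈ Metric.ball (0 : ℝ) e := by
    simp [abs_of_pos he]; linarith
  have h2 := hsub (interior_subset (hb h1))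
  simp only [Set.mem_setOf_eq] at h2
  have := mul_pos he huv
  nlinarith

theorem tri_interior {A : Finset Pt} {p q r x : Pt} (hp : p ∈ A) (hq : q ∈ A) (hr : r ∈ A)
    (h1 : 0 < o 1 p q x) (h2 : 0 < o 1 q r x) (h3 : 0 < o 1 r p x) :
    x ∈ interior (convexHull ℝ (↑A : Set Pt)) := by
  have hopen : IsOpen {x : Pt | 0 < o 1 p q x ∧ 0 < o 1 q r x ∧ 0 < o 1 r p x} := by
    have hco : ∀ p q : Pt, Continuous (fun x : Pt => o 1 p q x) := by
      intro p q
      simp only [o_one]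
      fun_prop
    exact (isOpen_lt continuous_const (hco p q)).inter
      ((isOpen_lt continuous_const (hco q r)).inter (isOpen_lt continuous_const (hco r p)))
  refine interior_maximal (s := convexHull ℝ (↑A : Set Pt)) ?_ hopen ⟨h1, h2, h3⟩
  rintro y ⟨g1, g2, g3⟩
  have hs : o 1 p q y + o 1 q r y + o 1 r p y = o 1 p q r := by simp only [o_one]; ring
  have hD : 0 < o 1 p q r := by linarith
  have hpH := subset_convexHull ℝ (↑A : Set Pt) hp
  have hqH := subset_convexHull ℝ (↑A : Set Pt) hq
  have hrH := subset_convexHull ℝ (↑A : Set Pt) hr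
  have hC := convex_convexHull ℝ (↑A : Set Pt)
  have hy : y = (o 1 q r y / o 1 p q r) • p + (o 1 r p y / o 1 p q r) • q +
      (o 1 p q y / o 1 p q r) • r := by
    have e1 : y.1 * o 1 p q r = o 1 q r y * p.1 + o 1 r p y * q.1 + o 1 p q y * r.1 := by
      simp only [o_one]; ring
    have e2 : y.2 * o 1 p q r = o 1 q r y * p.2 + o 1 r p y * q.2 + o 1 p q y * r.2 := by
      simp only [o_one]; ring
    ext
    · simp only [Prod.fst_add, Prod.smul_fst, smul_eq_mul]
      field_simp
      linarith
    · simp only [Prod.snd_add, Prod.smul_snd, smul_eq_mul]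
      field_simp
      linarith
  rw [hy]
  have key := hC.sum_mem (t := Finset.univ)
    (w := ![o 1 q r y / o 1 p q r, o 1 r p y / o 1 p q r, o 1 p q y / o 1 p q r])
    (z := ![p, q, r]) ?_ ?_ ?_
  · simpa [Fin.sum_univ_three] using key
  · intro i _
    fin_cases i <;> simp <;> positivity
  · simp [Fin.sum_univ_three]
    field_simp
    linarith
  · intro i _
    fin_cases i <;> simp <;> assumption

theorem genpos_o {A B : Finset Pt} (hgen : GenPos (↑(A ∪ B) : Set Pt))
    (hx : Set.InjOn Prod.fst (↑(A ∪ B) : Set Pt)) {p q r : Pt} (hp : p ∈ A ∪ B) (hq : q ∈ A ∪ B)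
    (hr : r ∈ A ∪ B) (h1 : p ≠ q) (h2 : p ≠ r) (h3 : q ≠ r) : o 1 p q r ≠ 0 := by
  intro h0
  apply hgen p hp q hq r hr h1 h2 h3
  have hne : q.1 - p.1 ≠ 0 := by
    intro h
    exact h1 (hx hp hq (by linarith))
  rw [collinear_iff_of_mem (p₀ := p) (by simp)]
  refine ⟨q - p, ?_⟩
  rw [o_one] at h0
  intro z hz
  simp only [Set.mem_insert_iff, Set.mem_singleton_iff] at hz
  rcases hz with rfl | rfl | rfl
  · exact ⟨0, by simp⟩
  · exact ⟨1, by simp⟩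
  · refine ⟨(z.1 - p.1) / (q.1 - p.1), ?_⟩
    ext
    · simp only [vadd_eq_add, Prod.fst_add, Prod.smul_fst, Prod.fst_sub, smul_eq_mul]
      field_simp
      ring
    · simp only [vadd_eq_add, Prod.snd_add, Prod.smul_snd, Prod.snd_sub, smul_eq_mul]
      field_simp
      linarith

theorem penta_rot (v1 v2 v3 v4 v5 : Pt) :
    ({v1, v2, v3, v4, v5} : Set Pt) = {v2, v3, v4, v5, v1} := by
  ext z
  simp only [Set.mem_insert_iff, Set.mem_singleton_iff]
  constructor
  · rintro (h | h | h | h | h) <;> simp [h]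
  · rintro (h | h | h | h | h) <;> simp [h]

theorem penta_vertex {v1 v2 v3 v4 v5 : Pt} (h125 : 0 < o 1 v1 v2 v5) (h235 : 0 < o 1 v2 v3 v5)
    (h245 : 0 < o 1 v2 v4 v5) : v1 ∉ convexHull ℝ ({v1, v2, v3, v4, v5} \ {v1} : Set Pt) := by
  intro h'
  have h : v1 ∈ convexHull ℝ ({v2, v3, v4, v5} : Set Pt) :=
    convexHull_mono (fun z hz => hz.1.resolve_left hz.2) h'
  have := hull_o (p := v2) (q := v5) (H := {v2, v3, v4, v5}) ?_ h
  · have := oc h125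
    linarith
  · intro x hx
    simp only [Set.mem_insert_iff, Set.mem_singleton_iff] at hx
    rcases hx with rfl | rfl | rfl | rfl
    · simp [o_one]
    · rw [o_anti]; linarith
    · rw [o_anti]; linarith
    · simp only [o_one]; linarith

theorem penta_side {v1 v2 v3 v4 v5 z : Pt} (h3 : 0 < o 1 v1 v2 v3) (h4 : 0 < o 1 v1 v2 v4)
    (h5 : 0 < o 1 v1 v2 v5) (h : z ∈ convexHull ℝ ({v1, v2, v3, v4, v5} : Set Pt)) :
    0 ≤ o 1 v1 v2 z := by
  have e : ∀ x, o 1 v2 v1 x = - o 1 v1 v2 x := by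
    intro x; simp only [o_one]; ring
  have := hull_o (p := v2) (q := v1) (H := {v1, v2, v3, v4, v5}) ?_ h
  · rw [e] at this; linarith
  · intro x hx
    rw [e]
    simp only [Set.mem_insert_iff, Set.mem_singleton_iff] at hx
    rcases hx with rfl | rfl | rfl | rfl | rfl
    · simp [o_one]
    · simp only [o_one]; linarith
    · linarith
    · linarith
    · linarith

theorem mkCfg {x0 : ℝ} {A B : Finset Pt}
    (hA : ∀ p ∈ A, p.1 < x0) (hB : ∀ p ∈ B, x0 < p.1)
    (hgen : GenPos (↑(A ∪ B) : Set Pt))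
    (hx : Set.InjOn Prod.fst (↑(A ∪ B) : Set Pt))
    (hnh : ¬ ∃ H : Finset Pt, DividedFiveHole A B H) : Cfg 1 x0 A B where
  hA := hA
  hB := hB
  tot := by
    intro p hp q hq r hr h1 h2 h3
    have h := genpos_o hgen hx hp hq hr h1 h2 h3
    rw [o_anti p q r]
    rcases lt_or_gt_of_ne h with g | g
    · right; linarith
    · left; exact g
  xinj := by
    intro p hp q hq hne
    exact lt_or_gt_of_ne (fun h => hne (hx hp hq h))
  hole := by
    classical
    intro v1 m1 v2 m2 v3 m3 v4 m4 v5 m5 hAm hBm h123 h124 h125 h134 h135 h145 h234 h235 h245 h345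
    by_contra hc
    apply hnh
    have n12 := o12 h123
    have n13 := o13 h123
    have n23 := o23 h123
    have n14 := o13 h124
    have n15 := o13 h125
    have n24 := o23 h124
    have n25 := o23 h125
    have n34 := o23 h134
    have n35 := o23 h135
    have n45 := o23 h145
    have hco : (↑({v1, v2, v3, v4, v5} : Finset Pt) : Set Pt) = {v1, v2, v3, v4, v5} := by simp
    have r1 := penta_rot v1 v2 v3 v4 v5
    have r2 := penta_rot v2 v3 v4 v5 v1
    have r3 := penta_rot v3 v4 v5 v1 v2
    have r4 := penta_rot v4 v5 v1 v2 v3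
    refine ⟨{v1, v2, v3, v4, v5}, ⟨?_, ?_, ?_, ?_⟩, ?_, ?_⟩
    · intro z hz
      simp only [Finset.mem_insert, Finset.mem_singleton] at hz
      rcases hz with rfl | rfl | rfl | rfl | rfl <;> assumption
    · rw [Finset.card_insert_of_notMem, Finset.card_insert_of_notMem,
        Finset.card_insert_of_notMem, Finset.card_insert_of_notMem, Finset.card_singleton] <;>
      simp [n12, n13, n14, n15, n23, n24, n25, n34, n35, n45]
    · rw [hco]
      intro p hp hh
      simp only [Set.mem_insert_iff, Set.mem_singleton_iff] at hp
      rcases hp with rfl | rfl | rfl | rfl | rfl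
      · exact penta_vertex h125 h235 h245 hh
      · rw [r1] at hh
        exact penta_vertex (v2 := v3) (v3 := v4) (v4 := v5) (v5 := v1) (oc h123) (oc h134)
          (oc h135) hh
      · rw [r1, r2] at hh
        exact penta_vertex (v2 := v4) (v3 := v5) (v4 := v1) (v5 := v2) (oc h234) (oc h245)
          (oc' h124) hh
      · rw [r1, r2, r3] at hh
        exact penta_vertex (v2 := v5) (v3 := v1) (v4 := v2) (v5 := v3) (oc h345) (oc' h135)
          (oc' h235) hh
      · rw [r1, r2, r3, r4] at hh
        exact penta_vertex (v2 := v1) (v3 := v2) (v4 := v3) (v5 := v4) (oc' h145) h124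
          h134 hh
    · intro p hp hn hh
      rw [hco] at hh
      simp only [Finset.mem_insert, Finset.mem_singleton, not_or] at hn
      obtain ⟨k1, k2, k3, k4, k5⟩ := hn
      apply hc
      have st : ∀ {x y : Pt}, x ∈ A ∪ B → y ∈ A ∪ B → x ≠ y → p ≠ x → p ≠ y → 0 ≤ o 1 x y p →
          0 < o 1 x y p := fun mx my hxy hpx hpy h =>
        lt_of_le_of_ne h (genpos_o hgen hx mx my hp hxy hpx.symm hpy.symm).symm
      refine ⟨p, hp, st m1 m2 n12 k1 k2 ?_, st m2 m3 n23 k2 k3 ?_, st m3 m4 n34 k3 k4 ?_,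
        st m4 m5 n45 k4 k5 ?_, st m5 m1 n15.symm k5 k1 ?_⟩
      · exact penta_side h123 h124 h125 hh
      · rw [r1] at hh
        exact penta_side (v3 := v4) (v4 := v5) (v5 := v1) h234 h235 (oc h123) hh
      · rw [r1, r2] at hh
        exact penta_side (v3 := v5) (v4 := v1) (v5 := v2) h345 (oc h134) (oc h234) hh
      · rw [r1, r2, r3] at hh
        exact penta_side (v3 := v1) (v4 := v2) (v5 := v3) (oc h145) (oc h245) (oc h345) hh
      · rw [r1, r2, r3, r4] at hh
        exact penta_side (v3 := v2) (v4 := v3) (v5 := v4) (oc' h125) (oc' h135) (oc' h145) hh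
    · rcases hAm with h | h | h | h | h
      · exact ⟨v1, by simp, h⟩
      · exact ⟨v2, by simp, h⟩
      · exact ⟨v3, by simp, h⟩
      · exact ⟨v4, by simp, h⟩
      · exact ⟨v5, by simp, h⟩
    · rcases hBm with h | h | h | h | h
      · exact ⟨v1, by simp, h⟩
      · exact ⟨v2, by simp, h⟩
      · exact ⟨v3, by simp, h⟩
      · exact ⟨v4, by simp, h⟩
      · exact ⟨v5, by simp, h⟩

end Part6

section Extract
variable {x0 : ℝ} {A B : Finset Pt}

theorem wedge_neg {a p q : Pt} (h : o 1 a p q < 0) :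
    Wedge a p q = {x | o 1 a p x ≤ 0 ∧ 0 ≤ o 1 a q x} := by
  unfold Wedge
  simp only [o_cross]
  rw [if_pos h.le]

theorem wedge_pos {a p q : Pt} (h : 0 < o 1 a p q) :
    Wedge a p q = {x | o 1 a p x ≤ 0 ∨ 0 ≤ o 1 a q x} := by
  unfold Wedge
  simp only [o_cross]
  rw [if_neg (not_le.2 h)]

/-- the auxiliary hypotheses collected -/
structure Ex (x0 : ℝ) (A B : Finset Pt) (S : StarSetup x0 A) : Prop extends
    Cfg 1 x0 A B where
  gp : ∀ p ∈ A ∪ B, ∀ q ∈ A ∪ B, p ≠ q → p ≠ S.aStar → q ≠ S.aStar → o 1 S.aStar p q ≠ 0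
  hn : 5 ≤ A.card
  hb : 6 ≤ B.card

variable {S : StarSetup x0 A}

theorem Ex.lA (_E : Ex x0 A B S) (k : ℕ) : S.lbl k ∈ A := Finset.mem_of_mem_erase (S.lbl_mem k)

theorem Ex.lne (_E : Ex x0 A B S) (k : ℕ) : S.lbl k ≠ S.aStar :=
  Finset.ne_of_mem_erase (S.lbl_mem k)

theorem Ex.gpA (E : Ex x0 A B S) {p q : Pt} (hp : p ∈ A) (hq : q ∈ A) (h : p ≠ q)
    (h1 : p ≠ S.aStar) (h2 : q ≠ S.aStar) : o 1 S.aStar p q ≠ 0 :=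
  E.gp p (Finset.mem_union_left _ hp) q (Finset.mem_union_left _ hq) h h1 h2

theorem Ex.gpB (E : Ex x0 A B S) (k : ℕ) {q : Pt} (hq : q ∈ B) :
    o 1 S.aStar (S.lbl k) q ≠ 0 := by
  have h1 := E.hB q hq
  have h2 := E.hA _ (E.lA k)
  have h3 := E.hA _ S.aStar_mem
  refine E.gp _ (Finset.mem_union_left _ (E.lA k)) q (Finset.mem_union_right _ hq) ?_ (E.lne k) ?_
  · rintro h; rw [h] at h2; linarith
  · rintro h; rw [h] at h1; linarith

theorem Ex.l0 (_E : Ex x0 A B S) : S.lbl (A.card - 1) = S.lbl 0 := by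
  have := S.lbl_periodic 0
  rwa [Nat.zero_add] at this

theorem Ex.inj (_E : Ex x0 A B S) {k l : ℕ} (h1 : 1 ≤ k) (h2 : k ≤ A.card - 1) (h3 : 1 ≤ l)
    (h4 : l ≤ A.card - 1) (h : S.lbl k = S.lbl l) : k = l := by
  obtain ⟨m, _, hu⟩ := S.lbl_bij _ (S.lbl_mem k)
  have e1 := hu k ⟨Finset.mem_Icc.2 ⟨h1, h2⟩, rfl⟩
  have e2 := hu l ⟨Finset.mem_Icc.2 ⟨h3, h4⟩, h.symm⟩
  omega

theorem Ex.lne' (E : Ex x0 A B S) {k : ℕ} (h2 : k < A.card - 1) :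
    S.lbl k ≠ S.lbl (k + 1) := by
  intro h
  have hn := E.hn
  rcases Nat.eq_zero_or_pos k with rfl | hk
  · rw [← E.l0] at h
    have := E.inj (by omega) le_rfl (by omega) (by omega) h
    omega
  · have := E.inj hk (by omega) (by omega) (by omega) h
    omega

theorem Ex.lr (E : Ex x0 A B S) {p : Pt} (hp : p ∈ A) (h : p ≠ S.aStar) :
    p.1 < S.aStar.1 ∨ S.aStar.1 < p.1 :=
  E.xinj _ (Finset.mem_union_left _ hp) _ (Finset.mem_union_left _ S.aStar_mem) h

theorem Ex.cons (E : Ex x0 A B S) {k : ℕ} (h2 : k < A.card - 1) :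
    o 1 S.aStar (S.lbl k) (S.lbl (k + 1)) < 0 := by
  rcases lt_or_gt_of_ne (E.gpA (E.lA k) (E.lA (k + 1)) (E.lne' h2) (E.lne k) (E.lne (k + 1)))
    with g | g
  · exact g
  exfalso
  set a := S.aStar
  set p := S.lbl k with hp
  set q := S.lbl (k + 1)
  have hpa : p ≠ a := E.lne k
  have hd : 0 < (p.2 - a.2) * (p.2 - a.2) + (-(p.1 - a.1)) * (-(p.1 - a.1)) := by
    rcases E.lr (E.lA k) (E.lne k) with h | h
    · nlinarith [mul_pos (sub_pos.2 h) (sub_pos.2 h), mul_self_nonneg (p.2 - a.2)]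
    · nlinarith [mul_pos (sub_pos.2 h) (sub_pos.2 h), mul_self_nonneg (p.2 - a.2)]
  obtain ⟨x, hx, hpos⟩ := int_side S.aStar_interior (p.2 - a.2) (-(p.1 - a.1)) hd
  have hx' : o 1 a p x < 0 := by
    rw [o_one]; linarith
  have hw : x ∈ (↑A : Set Pt) ∩ Wedge a p q := by
    refine ⟨hx, ?_⟩
    rw [wedge_pos g]
    exact Or.inl hx'.le
  have hc := S.consec (k + 1) (Finset.mem_Icc.2 ⟨by omega, by omega⟩)
    (by simpa only [Nat.add_sub_cancel] using hw)
  simp only [Nat.add_sub_cancel, Set.mem_insert_iff, Set.mem_singleton_iff] at hc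
  rcases hc with h | h | h
  · rw [h] at hx'
    have : o 1 a p S.aStar = 0 := by rw [o_one]; ring
    linarith
  · rw [h] at hx'
    have : o 1 a p (S.lbl k) = 0 := by rw [o_one, ← hp]; ring
    linarith
  · rw [h] at hx'
    exact lt_asymm hx' g

theorem Ex.mw (E : Ex x0 A B S) {k : ℕ} (h2 : k < A.card - 1) :
    Wedge S.aStar (S.lbl k) (S.lbl (k + 1)) =
      {x | o 1 S.aStar (S.lbl k) x ≤ 0 ∧ 0 ≤ o 1 S.aStar (S.lbl (k + 1)) x} :=
  wedge_neg (E.cons h2)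

theorem Ex.ii (_E : Ex x0 A B S) {k : ℕ} (h2 : k < A.card - 1) :
    ((Wedge S.aStar (S.lbl k) (S.lbl (k + 1))) ∩ {p : Pt | p.1 = x0}).Nonempty ↔ k + 1 ≤ S.t := by
  have := S.inter_iff (k + 1) (Finset.mem_Icc.2 ⟨by omega, by omega⟩)
  simpa only [Nat.add_sub_cancel] using this

theorem Ex.od (_E : Ex x0 A B S) {k l : ℕ} (h1 : k < l) (h2 : l < S.t) {p p' : Pt}
    (hp : p ∈ Wedge S.aStar (S.lbl k) (S.lbl (k + 1))) (ep : p.1 = x0)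
    (hp' : p' ∈ Wedge S.aStar (S.lbl l) (S.lbl (l + 1))) (ep' : p'.1 = x0) : p'.2 ≤ p.2 := by
  have := S.ordered (k + 1) (Finset.mem_Icc.2 ⟨by omega, by omega⟩) (l + 1)
    (Finset.mem_Icc.2 ⟨by omega, by omega⟩) (by omega)
  simp only [Nat.add_sub_cancel] at this
  exact this p ⟨hp, ep⟩ p' ⟨hp', ep'⟩

def ray (x0 : ℝ) (a p : Pt) : Pt :=
  (x0, a.2 + (x0 - a.1) / (p.1 - a.1) * (p.2 - a.2))

theorem ray_o {a p : Pt} (h : a.1 < p.1) (q : Pt) :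
    o 1 a q (ray x0 a p) = (x0 - a.1) / (p.1 - a.1) * o 1 a q p := by
  have : p.1 - a.1 ≠ 0 := by linarith
  simp only [o_one, ray]
  field_simp
  ring

theorem Ex.lam (E : Ex x0 A B S) {p : Pt} (h : S.aStar.1 < p.1) :
    0 < (x0 - S.aStar.1) / (p.1 - S.aStar.1) :=
  div_pos (sub_pos.2 (E.hA _ S.aStar_mem)) (sub_pos.2 h)

theorem o_self (a p : Pt) : o 1 a p p = 0 := by rw [o_one]; ring

theorem Ex.rayL (E : Ex x0 A B S) {k : ℕ} (h2 : k < A.card - 1) (h : S.aStar.1 < (S.lbl k).1) :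
    ray x0 S.aStar (S.lbl k) ∈ Wedge S.aStar (S.lbl k) (S.lbl (k + 1)) := by
  rw [E.mw h2]
  have h3 := E.cons h2
  have h4 := E.lam h
  refine ⟨?_, ?_⟩
  · rw [ray_o h, o_self]; simp
  · rw [ray_o h, o_anti]
    apply mul_nonneg h4.le; linarith

theorem Ex.rayR (E : Ex x0 A B S) {k : ℕ} (h2 : k < A.card - 1)
    (h : S.aStar.1 < (S.lbl (k + 1)).1) :
    ray x0 S.aStar (S.lbl (k + 1)) ∈ Wedge S.aStar (S.lbl k) (S.lbl (k + 1)) := by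
  rw [E.mw h2]
  have h3 := E.cons h2
  have h4 := E.lam h
  refine ⟨?_, ?_⟩
  · rw [ray_o h]
    exact mul_nonpos_of_nonneg_of_nonpos h4.le h3.le
  · rw [ray_o h, o_self]; simp

theorem Ex.tL (E : Ex x0 A B S) {k : ℕ} (h2 : k < A.card - 1) (h : S.aStar.1 < (S.lbl k).1) :
    k < S.t := (E.ii h2).1 ⟨_, E.rayL h2 h, rfl⟩

theorem Ex.tR (E : Ex x0 A B S) {k : ℕ} (h2 : k < A.card - 1)
    (h : S.aStar.1 < (S.lbl (k + 1)).1) : k < S.t := (E.ii h2).1 ⟨_, E.rayR h2 h, rfl⟩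

theorem Ex.tLR (E : Ex x0 A B S) {k : ℕ} (h2 : k < S.t) :
    S.aStar.1 < (S.lbl k).1 ∨ S.aStar.1 < (S.lbl (k + 1)).1 := by
  by_contra hc
  push Not at hc
  have hk : k < A.card - 1 := lt_of_lt_of_le h2 S.t_le
  obtain ⟨x, hx, ex⟩ := (E.ii hk).2 h2
  rw [E.mw hk] at hx
  have h3 := E.cons hk
  have e : x.1 = x0 := ex
  have h4 : S.aStar.1 < x.1 := by rw [e]; exact E.hA _ S.aStar_mem
  obtain ⟨g1, g2⟩ := hx
  have g3 := mul_nonneg_of_nonpos_of_nonpos g1 (sub_nonpos.2 hc.2)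
  have g4 := mul_nonpos_of_nonneg_of_nonpos g2 (sub_nonpos.2 hc.1)
  have g5 := mul_neg_of_neg_of_pos h3 (sub_pos.2 h4)
  simp only [o_one] at g3 g4 g5
  nlinarith

theorem Ex.left0 (E : Ex x0 A B S) : (S.lbl 0).1 < S.aStar.1 := by
  have hn := E.hn
  rcases E.lr (E.lA 0) (E.lne 0) with h | h
  · exact h
  exfalso
  obtain ⟨n, en⟩ : ∃ n, A.card - 1 = n + 1 := ⟨A.card - 2, by omega⟩
  have hl := E.l0
  rw [en] at hl
  have hn' : n < A.card - 1 := by omega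
  have h' : S.aStar.1 < (S.lbl (n + 1)).1 := by rw [hl]; exact h
  have ht := E.tR hn' h'
  have hc := E.cons hn'
  have h0 := E.rayL (by omega) h
  rw [hl] at hc
  obtain ⟨a, ea⟩ : ∃ a, S.aStar = a := ⟨_, rfl⟩
  obtain ⟨p, ep⟩ : ∃ a, S.lbl n = a := ⟨_, rfl⟩
  obtain ⟨q, eq⟩ : ∃ a, S.lbl 0 = a := ⟨_, rfl⟩
  have hlam := E.lam h
  rw [ea, eq] at hlam h h0
  rw [ea, ep, eq] at hc
  obtain ⟨e, he, hle⟩ : ∃ e : ℝ, 0 < e ∧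
      (x0 - a.1) / (q.1 - a.1) * o 1 a p q + (p.1 - a.1) * e ≤ 0 := by
    have hneg := mul_neg_of_pos_of_neg hlam hc
    have hd : 0 < |p.1 - a.1| + 1 := by positivity
    refine ⟨-((x0 - a.1) / (q.1 - a.1) * o 1 a p q) / (|p.1 - a.1| + 1),
      div_pos (by linarith) hd, ?_⟩
    set m := (x0 - a.1) / (q.1 - a.1) * o 1 a p q
    have h1 : (p.1 - a.1) * (-m / (|p.1 - a.1| + 1)) ≤ |p.1 - a.1| * (-m / (|p.1 - a.1| + 1)) :=
      mul_le_mul_of_nonneg_right (le_abs_self _) (div_pos (by linarith) hd).le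
    have h2 : (|p.1 - a.1| + 1) * (-m / (|p.1 - a.1| + 1)) = -m := by field_simp
    have h3 : 0 < -m / (|p.1 - a.1| + 1) := div_pos (by linarith) hd
    linarith
  have hw : ((ray x0 a q).1, (ray x0 a q).2 + e) ∈ Wedge S.aStar (S.lbl n) (S.lbl (n + 1)) := by
    rw [E.mw hn', hl, ea, ep, eq]
    have f : ∀ r : Pt, o 1 a r ((ray x0 a q).1, (ray x0 a q).2 + e) =
        o 1 a r (ray x0 a q) + (r.1 - a.1) * e := by
      intro r; simp only [o_one]; ring
    refine ⟨?_, ?_⟩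
    · rw [f, ray_o h]; exact hle
    · rw [f, ray_o h, o_self]
      have := mul_pos (sub_pos.2 h) he
      linarith
  have := E.od (k := 0) (l := n) (by omega) ht (by rw [eq, ea]; exact h0) rfl hw rfl
  simp only at this
  linarith

theorem Ex.leftT (E : Ex x0 A B S) {k : ℕ} (h1 : S.t ≤ k) (h2 : k ≤ A.card - 1) :
    (S.lbl k).1 < S.aStar.1 := by
  rcases Nat.eq_or_lt_of_le h2 with h | h
  · rw [h, E.l0]; exact E.left0
  · rcases E.lr (E.lA k) (E.lne k) with g | g
    · exact g
    · have := E.tL h g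
      omega

theorem Ex.right (E : Ex x0 A B S) {k : ℕ} (h1 : 1 ≤ k) (h2 : k < S.t) :
    S.aStar.1 < (S.lbl k).1 := by
  rcases E.lr (E.lA k) (E.lne k) with h | h
  swap
  · exact h
  exfalso
  have htle := S.t_le
  obtain ⟨k, rfl⟩ : ∃ l, k = l + 1 := ⟨k - 1, by omega⟩
  have hr := (E.tLR h2).resolve_left (by linarith)
  obtain ⟨x, hx, ex⟩ := (E.ii (k := k) (by omega)).2 (by omega)
  obtain ⟨a, ea⟩ : ∃ a, S.aStar = a := ⟨_, rfl⟩
  obtain ⟨p, ep⟩ : ∃ a, S.lbl (k + 1) = a := ⟨_, rfl⟩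
  obtain ⟨q, eq⟩ : ∃ a, S.lbl (k + 1 + 1) = a := ⟨_, rfl⟩
  have hod := fun y (hy : y ∈ _) e => E.od (k := k) (l := k + 1) (p' := y) (by omega) h2 hx ex hy e
  rw [E.mw (by omega), ea, ep, eq] at hod
  rw [ea, ep] at h
  rw [ea, eq] at hr
  have dp : 0 < a.1 - p.1 := by linarith
  have dq : 0 < q.1 - a.1 := by linarith
  set Y := max (x.2 + 1) (max (a.2 - (p.2 - a.2) * (x0 - a.1) / (a.1 - p.1))
    (a.2 + (q.2 - a.2) * (x0 - a.1) / (q.1 - a.1))) with hY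
  have y1 : x.2 + 1 ≤ Y := le_max_left _ _
  have y2 : a.2 - (p.2 - a.2) * (x0 - a.1) / (a.1 - p.1) ≤ Y :=
    le_trans (le_max_left _ _) (le_max_right _ _)
  have y3 : a.2 + (q.2 - a.2) * (x0 - a.1) / (q.1 - a.1) ≤ Y :=
    le_trans (le_max_right _ _) (le_max_right _ _)
  clear_value Y
  have := hod (x0, Y) ⟨?_, ?_⟩ rfl
  · simp only at this; linarith
  · simp only [o_one]
    have h5 : -((p.2 - a.2) * (x0 - a.1)) / (a.1 - p.1) ≤ Y - a.2 := by
      rw [neg_div]; linarith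
    rw [div_le_iff₀ dp] at h5
    nlinarith
  · simp only [o_one]
    have h5 : ((q.2 - a.2) * (x0 - a.1)) / (q.1 - a.1) ≤ Y - a.2 := by
      linarith
    rw [div_le_iff₀ dq] at h5
    nlinarith

theorem Ex.Ar (E : Ex x0 A B S) {q : Pt} (hq : q ∈ A) (h : S.aStar.1 < q.1) :
    ∃ k, 1 ≤ k ∧ k < S.t ∧ q = S.lbl k := by
  have hne : q ≠ S.aStar := by rintro rfl; exact lt_irrefl _ h
  obtain ⟨k, ⟨hk, hl⟩, _⟩ := S.lbl_bij q (Finset.mem_erase.2 ⟨hne, hq⟩)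
  rw [Finset.mem_Icc] at hk
  refine ⟨k, hk.1, ?_, hl.symm⟩
  by_contra hc
  have := E.leftT (not_lt.1 hc) hk.2
  rw [hl] at this
  linarith

theorem Ex.t2 (E : Ex x0 A B S) : 2 ≤ S.t := by
  obtain ⟨p, hp, h⟩ := int_side S.aStar_interior 1 0 (by norm_num)
  obtain ⟨k, h1, h2, _⟩ := E.Ar hp (by linarith)
  omega

theorem left_side {a u v w : Pt} (hu : u.1 < a.1) (hv : a.1 < v.1) (hw : a.1 < w.1)
    (h1 : o 1 a u v < 0) (h2 : 0 < o 1 a v w) : o 1 a u w < 0 := by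
  by_contra hc
  have g1 := mul_neg_of_neg_of_pos h1 (sub_pos.2 hw)
  have g2 := mul_pos h2 (sub_pos.2 hu)
  have g3 := mul_nonneg (not_lt.1 hc) (sub_pos.2 hv).le
  simp only [o_one] at g1 g2 g3
  nlinarith

theorem right_side {a u v w : Pt} (hu : u.1 < a.1) (hv : a.1 < v.1) (hw : a.1 < w.1)
    (h1 : o 1 a v u < 0) (h2 : o 1 a v w < 0) : 0 < o 1 a u w := by
  by_contra hc
  have g1 := mul_neg_of_neg_of_pos h1 (sub_pos.2 hw)
  have g2 := mul_neg_of_neg_of_pos h2 (sub_pos.2 hu)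
  have g3 := mul_nonneg_of_nonpos_of_nonpos (not_lt.1 hc) (sub_neg.2 hv).le
  simp only [o_one] at g1 g2 g3
  nlinarith

theorem left_trans {a u v w : Pt} (hu : u.1 < a.1) (hv : v.1 < a.1) (hw : w.1 < a.1)
    (h1 : o 1 a u v < 0) (h2 : o 1 a v w < 0) : o 1 a u w < 0 := by
  by_contra hc
  have g1 := mul_neg_of_neg_of_pos h1 (sub_pos.2 hw)
  have g2 := mul_neg_of_neg_of_pos h2 (sub_pos.2 hu)
  have g3 := mul_nonneg (not_lt.1 hc) (sub_pos.2 hv).le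
  simp only [o_one] at g1 g2 g3
  nlinarith

theorem Ex.Inw_iff (E : Ex x0 A B S) {k : ℕ} (hk : k < A.card - 1) {q : Pt} (hq : q ∈ B) :
    q ∈ Wedge S.aStar (S.lbl k) (S.lbl (k + 1)) ↔ Inw 1 S.aStar S.lbl k q := by
  rw [E.mw hk]
  unfold Inw
  rw [o_anti]
  have h1 := E.gpB k hq
  have h2 := E.gpB (k + 1) hq
  constructor
  · rintro ⟨g1, g2⟩
    refine ⟨?_, lt_of_le_of_ne g2 h2.symm⟩
    have := lt_of_le_of_ne g1 h1
    linarith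
  · rintro ⟨g1, g2⟩
    exact ⟨by linarith, g2.le⟩

theorem Ex.cov (E : Ex x0 A B S) {q : Pt} (hq : q ∈ B) :
    ∃ k < S.t, Inw 1 S.aStar S.lbl k q := by
  have ht := S.t_le
  have h2t := E.t2
  have hqr : S.aStar.1 < q.1 := lt_trans (E.hA _ S.aStar_mem) (E.hB q hq)
  have main : ∀ m, 1 ≤ m → m < S.t →
      (∃ k < m, Inw 1 S.aStar S.lbl k q) ∨ o 1 S.aStar (S.lbl m) q < 0 := by
    intro m h1
    induction m, h1 using Nat.le_induction with
    | base =>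
      intro h
      rcases lt_or_gt_of_ne (E.gpB 1 hq) with g | g
      · exact Or.inr g
      · refine Or.inl ⟨0, by omega, ?_, g⟩
        rw [o_anti]
        have := left_side E.left0 (E.right le_rfl h) hqr (E.cons (k := 0) (by omega)) g
        linarith
    | succ m h1 ih =>
      intro h
      rcases ih (by omega) with ⟨k, hk, hi⟩ | g0
      · exact Or.inl ⟨k, by omega, hi⟩
      rcases lt_or_gt_of_ne (E.gpB (m + 1) hq) with g | g
      · exact Or.inr g
      · refine Or.inl ⟨m, by omega, ?_, g⟩
        rw [o_anti]
        linarith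
  obtain ⟨n, en⟩ : ∃ n, S.t = n + 1 := ⟨S.t - 1, by omega⟩
  rcases main n (by omega) (by omega) with ⟨k, hk, hi⟩ | g
  · exact ⟨k, by omega, hi⟩
  · refine ⟨n, by omega, ?_, ?_⟩
    · rw [o_anti]; linarith
    · have hl : (S.lbl (n + 1)).1 < S.aStar.1 := by rw [← en]; exact E.leftT le_rfl ht
      exact right_side hl (E.right (k := n) (by omega) (by omega)) hqr
        (E.cons (k := n) (by omega)) g

theorem Ex.star (E : Ex x0 A B S) : WStar 1 x0 A B S.aStar S.lbl S.t where
  toCfg := E.toCfg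
  ha := S.aStar_mem
  hc := fun k _ => E.lA k
  c0 := E.left0
  ct := E.leftT le_rfl S.t_le
  cr := fun k h1 h2 => E.right h1 h2
  cons := by
    intro k hk
    rw [o_anti]
    have := E.cons (lt_of_lt_of_le hk S.t_le)
    linarith
  cov := fun q hq => E.cov hq
  Ar := fun q hq h => E.Ar hq h
  emp := by
    intro k hk q hq h
    have hk' := lt_of_lt_of_le hk S.t_le
    obtain ⟨h1, h2⟩ := h
    rw [o_anti] at h1
    have hw : q ∈ (↑A : Set Pt) ∩ Wedge S.aStar (S.lbl k) (S.lbl (k + 1)) := by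
      refine ⟨hq, ?_⟩
      rw [E.mw hk']
      exact ⟨by linarith, h2.le⟩
    have hc := S.consec (k + 1) (Finset.mem_Icc.2 ⟨by omega, by omega⟩)
      (by simpa only [Nat.add_sub_cancel] using hw)
    simp only [Nat.add_sub_cancel, Set.mem_insert_iff, Set.mem_singleton_iff] at hc
    rcases hc with h | h | h
    · rw [h] at h1
      have : o 1 S.aStar (S.lbl k) S.aStar = 0 := by rw [o_one]; ring
      linarith
    · rw [h, o_self] at h1
      linarith
    · rw [h, o_self] at h2
      linarith
  ext := by
    intro k h1 h2 p hp q hq r hr g1 g2 g3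
    have := S.aStar_rightmost _ (E.lA k) (tri_interior hp hq hr g1 g2 g3)
    have := E.right h1 h2
    linarith
  t2 := E.t2
  t3 := by
    intro ht
    have hn := E.hn
    have main : ∀ m, 4 ≤ m → m ≤ A.card - 1 → o 1 S.aStar (S.lbl 3) (S.lbl m) < 0 := by
      intro m h1
      induction m, h1 using Nat.le_induction with
      | base => intro h; exact E.cons (by omega)
      | succ m h1 ih =>
        intro h
        exact left_trans (E.leftT (by omega) (by omega)) (E.leftT (k := m) (by omega) (by omega))
          (E.leftT (by omega) h) (ih (by omega)) (E.cons (by omega))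
    have := main (A.card - 1) (by omega) le_rfl
    rw [E.l0] at this
    rw [o_anti]
    linarith
  hcard := E.hb

open Classical in
theorem Ex.w_eq (E : Ex x0 A B S) {k : ℕ} (hk : k < S.t) :
    S.w B (k + 1) = (B.filter (fun z => Inw 1 S.aStar S.lbl k z)).card := by
  unfold StarSetup.w StarSetup.W
  rw [← Set.ncard_coe_finset]
  congr 1
  ext z
  simp only [Nat.add_sub_cancel, Set.mem_inter_iff, Finset.coe_filter, Set.mem_setOf_eq,
    Finset.mem_coe]
  constructor
  · rintro ⟨h1, h2⟩
    exact ⟨h1, (E.Inw_iff (lt_of_lt_of_le hk S.t_le) h1).1 h2⟩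
  · rintro ⟨h1, h2⟩
    exact ⟨h1, (E.Inw_iff (lt_of_lt_of_le hk S.t_le) h1).2 h2⟩

end Extract

/-- **Corollary 8.** Let `P = A ∪ B` be an `ℓ`-divided set with no `ℓ`-divided 5-hole,
`A` not in convex position, `|A| ≥ 5` and `|B| ≥ 6`. For `1 ≤ i ≤ j ≤ t`, if
`w_k ≤ 2` for every `i ≤ k ≤ j`, then `w_i + w_{i+1} + ⋯ + w_j ≤ j - i + 2`. -/
theorem sum_wedges_bound
    (x0 : ℝ) (A B : Finset Pt)
    (hA : ∀ p ∈ A, p.1 < x0) (hB : ∀ p ∈ B, x0 < p.1)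
    (hBne : B.Nonempty)
    (hgen : GenPos (↑(A ∪ B) : Set Pt))
    (hx : Set.InjOn Prod.fst (↑(A ∪ B) : Set Pt))
    (hAnc : ¬ ConvexPos (↑A : Set Pt))
    (S : StarSetup x0 A)
    (hnh : ¬ ∃ H : Finset Pt, DividedFiveHole A B H)
    (hAcard : 5 ≤ A.card) (hBcard : 6 ≤ B.card)
    (i j : ℕ) (hi : 1 ≤ i) (hij : i ≤ j) (hjt : j ≤ S.t)
    (hw : ∀ k ∈ Finset.Icc i j, S.w B k ≤ 2) :
    ∑ k ∈ Finset.Icc i j, S.w B k ≤ j - i + 2 := by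
  classical
  have E : Ex x0 A B S :=
    { toCfg := mkCfg hA hB hgen hx hnh
      gp := fun p hp q hq h1 h2 h3 =>
        genpos_o hgen hx (Finset.mem_union_left _ S.aStar_mem) hp hq h2.symm h3.symm h1
      hn := hAcard
      hb := hBcard }
  refine (comb_bound (fun k => S.w B k) i j hij
    (fun k h1 h2 => hw k (Finset.mem_Icc.2 ⟨h1, h2⟩)) ?_).1
  intro l m h1 h2 h3 h4 h5 h6
  obtain ⟨l, rfl⟩ : ∃ n, l = n + 1 := ⟨l - 1, by omega⟩
  obtain ⟨m, rfl⟩ : ∃ n, m = n + 1 := ⟨m - 1, by omega⟩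
  rw [E.w_eq (by omega)] at h4 h5
  refine E.star.nopat (i := l) (j := m) (by omega) (by omega) h4 h5 ?_
  intro k g1 g2
  rw [← E.w_eq (by omega)]
  exact h6 (k + 1) (by omega) (by omega)

end
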